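/- Let x → ∞. Then max_{n ≤ x} log r₂(r₂(n)) = (√(log x)/log₂ x)·( c/√2 + O(log₃ x / log₂ x) ), where c = (8·∑_{l=1}^∞ (log(1 + 1/l))²)^{1/2} and log_k denotes the k-fold iterated natural logarithm. -/

import Mathlib

open Filter

/-- `r2 n` counts the representations of `n` as a sum of two squares
(signs and order counted). -/
noncomputable def r2 (n : ℕ) : ℕ :=
  Nat.card {p : ℤ × ℤ // p.1 ^ 2 + p.2 ^ 2 = (n : ℤ)}

/-- The constant `c = (8·∑_{l=1}^∞ (log(1 + 1/l))²)^{1/2}`. -/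
noncomputable def cBEFS : ℝ :=
  Real.sqrt (8 * ∑' l : ℕ, (Real.log (1 + 1 / ((l : ℝ) + 1))) ^ 2)


namespace PNT4
open Complex HurwitzZeta Topology

/-- the regularised Hurwitz term -/
noncomputable def U (x : ℝ) (s : ℂ) : ℂ :=
  (s - 1) * (x : ℂ) ^ (-s) - ((x : ℂ) ^ (1 - s) - ((x + 1 : ℝ) : ℂ) ^ (1 - s))

lemma U_bound_aux {x : ℝ} (hx : 0 < x) {s : ℂ} (hs : 0 < s.re) {v : ℝ} (hv : v ∈ Set.Icc (0:ℝ) 1) :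
    ‖((x + v : ℝ) : ℂ) ^ (-s) - (x : ℂ) ^ (-s)‖ ≤ ‖s‖ * x ^ (-s.re - 1) * v := by
  have hs0 : s ≠ 0 := by rintro rfl; simp at hs
  have := norm_image_sub_le_of_norm_deriv_le_segment' (f := fun v : ℝ => ((x + v : ℝ) : ℂ) ^ (-s))
    (f' := fun v : ℝ => -s * ((x + v : ℝ) : ℂ) ^ (-s - 1)) (a := 0) (b := 1)
    (C := ‖s‖ * x ^ (-s.re - 1)) ?_ ?_ v hv
  · simpa using this
  · intro w hw
    have hxw : x + w ≠ 0 := by have := hw.1; positivity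
    have h := (hasDerivAt_ofReal_cpow_const hxw (r := -s) (by simpa using hs0))
    have h2 : HasDerivAt (fun v : ℝ => x + v) 1 w := by simpa using (hasDerivAt_id w).const_add x
    have h3 := HasDerivAt.scomp w h h2
    simpa [Function.comp_def] using h3.hasDerivWithinAt
  · intro w hw
    have h0 : 0 < x + w := by have := hw.1; positivity
    rw [norm_mul, norm_neg, Complex.norm_cpow_eq_rpow_re_of_pos h0]
    gcongr
    have : (-s - 1).re = -s.re - 1 := by simp
    rw [this]
    exact Real.rpow_le_rpow_of_nonpos hx (by linarith [hw.1]) (by linarith)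

lemma U_bound {x : ℝ} (hx : 0 < x) {s : ℂ} (hs : 0 < s.re) :
    ‖U x s‖ ≤ ‖s - 1‖ * (‖s‖ * x ^ (-s.re - 1)) := by
  by_cases h1 : s = 1
  · subst h1; simp [U]
  have h1' : 1 - s ≠ 0 := by intro h; apply h1; linear_combination -h
  have := norm_image_sub_le_of_norm_deriv_le_segment_01'
    (f := fun v : ℝ => (s - 1) * (x : ℂ) ^ (-s) * v + ((x + v : ℝ) : ℂ) ^ (1 - s))
    (f' := fun v : ℝ => (s - 1) * (x : ℂ) ^ (-s) + (1 - s) * ((x + v : ℝ) : ℂ) ^ (1 - s - 1))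
    (C := ‖s - 1‖ * (‖s‖ * x ^ (-s.re - 1))) ?_ ?_
  · refine le_trans (le_of_eq ?_) this
    congr 1
    simp [U]; ring
  · intro w hw
    have hxw : x + w ≠ 0 := by have := hw.1; positivity
    have h := (hasDerivAt_ofReal_cpow_const hxw (r := 1 - s) h1')
    have h2 : HasDerivAt (fun v : ℝ => x + v) 1 w := by simpa using (hasDerivAt_id w).const_add x
    have h3 := HasDerivAt.scomp w h h2
    have h4 : HasDerivAt (fun v : ℝ => (v : ℂ)) 1 w := (hasDerivAt_id w).ofReal_comp
    have h5 := (h4.const_mul ((s - 1) * (x : ℂ) ^ (-s))).fun_add h3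
    refine HasDerivAt.hasDerivWithinAt ?_
    simpa [Function.comp_def] using h5
  · intro w hw
    have e : (1 - s - 1) = -s := by ring
    have e2 : (s - 1) * (x : ℂ) ^ (-s) + (1 - s) * ((x + w : ℝ) : ℂ) ^ (-s)
       = -((s - 1) * (((x + w : ℝ) : ℂ) ^ (-s) - (x : ℂ) ^ (-s))) := by ring
    rw [e, e2, norm_neg, norm_mul]
    gcongr
    refine (U_bound_aux hx hs ⟨hw.1, hw.2.le⟩).trans ?_
    have := hw.2.le
    have : 0 ≤ ‖s‖ * x ^ (-s.re - 1) := by positivity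
    nlinarith

lemma U_diff {x : ℝ} (hx : 0 < x) : Differentiable ℂ (U x) := by
  have h1 : (x : ℂ) ≠ 0 := by exact_mod_cast hx.ne'
  have h2 : ((x + 1 : ℝ) : ℂ) ≠ 0 := by exact_mod_cast (by positivity : x + 1 ≠ 0)
  unfold U
  intro s
  refine DifferentiableAt.sub (.mul (by fun_prop) ?_) (.sub ?_ ?_)
  · exact (differentiableAt_id.neg).const_cpow (Or.inl h1)
  · exact (differentiableAt_id.const_sub 1).const_cpow (Or.inl h1)
  · exact (differentiableAt_id.const_sub 1).const_cpow (Or.inl h2)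

lemma hurwitz_formula_gt {a : ℝ} (ha : a ∈ Set.Icc (0:ℝ) 1) {s : ℂ} (hs : 1 < s.re) {M : ℕ} (hM : 1 ≤ M) :
    (s - 1) * hurwitzZeta a s = (s - 1) * ∑ n ∈ Finset.range M, 1 / (n + a : ℂ) ^ s
      + ((M + a : ℝ) : ℂ) ^ (1 - s) + ∑' n : ℕ, U (n + M + a) s := by
  have h0 := hasSum_hurwitzZeta_of_one_lt_re ha hs
  have h1 := (hasSum_nat_add_iff' M).2 h0
  have h2 := h1.mul_left (s - 1)
  -- telescoping
  set x : ℕ → ℝ := fun n => (n + M + a : ℝ) with hx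
  have hxpos : ∀ n, 1 ≤ x n := fun n => by
    have : (1:ℝ) ≤ M := by exact_mod_cast hM
    have := ha.1
    simp only [hx]
    have : (0:ℝ) ≤ n := by positivity
    linarith
  have hlim : Tendsto (fun n => ((x n : ℝ) : ℂ) ^ (1 - s)) atTop (𝓝 0) := by
    rw [tendsto_zero_iff_norm_tendsto_zero]
    have : ∀ n, ‖((x n : ℝ) : ℂ) ^ (1 - s)‖ = (x n) ^ (-(s.re - 1)) := fun n => by
      rw [Complex.norm_cpow_eq_rpow_re_of_pos (by linarith [hxpos n])]; simp
    simp_rw [this]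
    refine (tendsto_rpow_neg_atTop (by linarith)).comp ?_
    refine tendsto_atTop_mono (f := fun n : ℕ => (n : ℝ)) (fun n => ?_) tendsto_natCast_atTop_atTop
    simp only [hx]
    have := ha.1
    have : (0:ℝ) ≤ M := by positivity
    linarith
  have hUs : Summable fun n => ‖U (x n) s‖ := by
    have hb : Summable fun n : ℕ => ‖s - 1‖ * (‖s‖ * ((n:ℝ) + 1) ^ (-s.re - 1)) := by
      refine Summable.mul_left _ (Summable.mul_left _ ?_)
      have : Summable fun n : ℕ => ((n : ℝ)) ^ (-s.re - 1) :=
        Real.summable_nat_rpow.2 (by linarith)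
      exact_mod_cast (summable_nat_add_iff 1).2 this
    refine Summable.of_nonneg_of_le (fun _ => norm_nonneg _) (fun n => ?_) hb
    refine (U_bound (by linarith [hxpos n]) (by linarith)).trans ?_
    gcongr ?_ * (?_ * ?_)
    refine Real.rpow_le_rpow_of_nonpos (by positivity) ?_ (by linarith)
    simp only [hx]
    have : (1:ℝ) ≤ M := by exact_mod_cast hM
    linarith [ha.1]
  have htel : HasSum (fun n => U (x n) s)
      ((s - 1) * (hurwitzZeta a s - ∑ n ∈ Finset.range M, 1 / (n + a : ℂ) ^ s)
        - ((M + a : ℝ) : ℂ) ^ (1 - s)) := by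
    rw [hasSum_iff_tendsto_nat_of_summable_norm hUs]
    have e : ∀ N, ∑ n ∈ Finset.range N, U (x n) s =
       (∑ n ∈ Finset.range N, (s - 1) * (1 / (((n + M : ℕ) : ℂ) + a) ^ s))
         - (((x 0 : ℝ) : ℂ) ^ (1 - s) - ((x N : ℝ) : ℂ) ^ (1 - s)) := by
      intro N
      rw [← Finset.sum_range_sub' (fun n => ((x n : ℝ) : ℂ) ^ (1 - s)), ← Finset.sum_sub_distrib]
      refine Finset.sum_congr rfl fun n _ => ?_
      have ex : x (n + 1) = x n + 1 := by simp only [hx]; push_cast; ring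
      rw [ex, U, Complex.cpow_neg]
      simp only [hx]; push_cast; simp
    simp_rw [e]
    have h3 := h2.tendsto_sum_nat
    have := h3.sub ((tendsto_const_nhds (x := ((x 0 : ℝ) : ℂ) ^ (1 - s))).sub hlim)
    convert this using 2
    simp [hx]
  rw [htel.tsum_eq]
  ring

lemma hurwitz_formula {a : ℝ} (ha : a ∈ Set.Icc (0:ℝ) 1) {s : ℂ} (hs : 1/2 < s.re) (hs1 : s ≠ 1)
    {M : ℕ} (hM : 1 ≤ M) :
    (s - 1) * hurwitzZeta a s = (s - 1) * ∑ n ∈ Finset.range M, 1 / (n + a : ℂ) ^ s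
      + ((M + a : ℝ) : ℂ) ^ (1 - s) + ∑' n : ℕ, U (n + M + a) s := by
  have hM1 : (1:ℝ) ≤ M := by exact_mod_cast hM
  set R := ‖s‖ + 3 with hR
  set V : Set ℂ := {z | 1/2 < z.re} ∩ Metric.ball 0 R with hV
  have hVo : IsOpen V := (isOpen_lt continuous_const continuous_re).inter Metric.isOpen_ball
  have hVc : Convex ℝ V := (convex_halfSpace_re_gt _).inter (convex_ball _ _)
  have hsV : s ∈ V := ⟨hs, by simp [hR]⟩
  have h2V : (2:ℂ) ∈ V := ⟨by norm_num, by simp [hR]; linarith [norm_nonneg s]⟩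
  have h1V : (1:ℂ) ∈ V := ⟨by norm_num, by simp [hR]; linarith [norm_nonneg s]⟩
  set f : ℂ → ℂ := Function.update (fun z => (z - 1) * hurwitzZeta a z) 1 1 with hf
  set g : ℂ → ℂ := fun z => (z - 1) * ∑ n ∈ Finset.range M, 1 / (n + a : ℂ) ^ z
      + ((M + a : ℝ) : ℂ) ^ (1 - z) + ∑' n : ℕ, U (n + M + a) z with hg
  have hfd : DifferentiableOn ℂ f V := by
    rw [← differentiableOn_compl_singleton_and_continuousAt_iff (hVo.mem_nhds h1V)]
    constructor
    · refine DifferentiableOn.congr (f := fun z => (z - 1) * hurwitzZeta a z) ?_ ?_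
      · intro z hz
        exact (DifferentiableAt.mul (by fun_prop)
          (differentiableAt_hurwitzZeta _ (by simpa using hz.2))).differentiableWithinAt
      · intro z hz
        exact Function.update_of_ne (by simpa using hz.2) _ _
    · rw [continuousAt_update_same]
      exact hurwitzZeta_residue_one a
  have hgd : DifferentiableOn ℂ g V := by
    refine DifferentiableOn.add (DifferentiableOn.add (.mul (by fun_prop) ?_) ?_) ?_
    · refine DifferentiableOn.fun_sum fun n _ => ?_
      by_cases h0 : (n + a : ℂ) = 0
      · rw [h0]
        refine (differentiableOn_const (c := (0:ℂ))).congr fun z hz => ?_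
        have : z ≠ 0 := by rintro rfl; have := hz.1; norm_num at this
        simp [this]
      · intro z hz
        refine DifferentiableAt.differentiableWithinAt ?_
        refine DifferentiableAt.div (by fun_prop) (differentiableAt_id.const_cpow (Or.inl h0)) ?_
        simp [h0]
    · intro z hz
      refine DifferentiableAt.differentiableWithinAt ?_
      refine (differentiableAt_id.const_sub 1).const_cpow (Or.inl ?_)
      have : (M + a : ℝ) ≠ 0 := by linarith [ha.1]
      exact_mod_cast this
    · refine differentiableOn_tsum_of_summable_norm
        (u := fun n : ℕ => (R + 1) * (R * ((n:ℝ) + 1) ^ (-(3/2) : ℝ))) ?_ ?_ hVo ?_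
      · refine Summable.mul_left _ (Summable.mul_left _ ?_)
        have : Summable fun n : ℕ => ((n : ℝ)) ^ (-(3/2) : ℝ) :=
          Real.summable_nat_rpow.2 (by norm_num)
        exact_mod_cast (summable_nat_add_iff 1).2 this
      · intro n
        exact (U_diff (by have := ha.1; positivity)).differentiableOn
      · intro n z hz
        have hz2 : ‖z‖ < R := by simpa using hz.2
        have hz1 : 1/2 < z.re := hz.1
        have hp : (0:ℝ) < n + M + a := by have := ha.1; positivity
        refine (U_bound hp (by linarith)).trans ?_
        gcongr ?_ * (?_ * ?_)
        · refine (norm_sub_le _ _).trans ?_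
          simp; exact hz2.le
        · calc ((n:ℝ) + M + a) ^ (-z.re - 1) ≤ ((n:ℝ) + 1) ^ (-z.re - 1) :=
                Real.rpow_le_rpow_of_nonpos (by positivity) (by linarith [ha.1]) (by linarith)
            _ ≤ _ := Real.rpow_le_rpow_of_exponent_le (by linarith [(Nat.cast_nonneg n : (0:ℝ) ≤ n)])
                  (by linarith)
  have heq : f =ᶠ[𝓝 2] g := by
    have : {z : ℂ | 1 < z.re} ∈ 𝓝 (2:ℂ) :=
      (isOpen_lt continuous_const continuous_re).mem_nhds (by simp)
    filter_upwards [this] with z hz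
    have hz1 : z ≠ 1 := by rintro rfl; simp at hz
    simp only [hf, hg]
    rw [Function.update_of_ne hz1]
    exact hurwitz_formula_gt ha hz hM
  have := (hfd.analyticOnNhd hVo).eqOn_of_preconnected_of_eventuallyEq (hgd.analyticOnNhd hVo)
    hVc.isPreconnected h2V heq hsV
  simpa only [hf, hg, Function.update_of_ne hs1] using this

end PNT4

namespace PNT4
open Complex HurwitzZeta Topology

lemma hurwitz_growth {a : ℝ} (ha : a ∈ Set.Icc (0:ℝ) 1) : ∃ C : ℝ, 0 ≤ C ∧ ∀ s : ℂ,
    99/100 ≤ s.re → s.re ≤ 3 → 1 ≤ |s.im| → ‖hurwitzZeta a s‖ ≤ C * |s.im| ^ (1/25 : ℝ) := by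
  set Z : ℝ := ∑' n : ℕ, ((n:ℝ) + 1) ^ (-(3/2) : ℝ) with hZ
  have hZs : Summable fun n : ℕ => ((n:ℝ) + 1) ^ (-(3/2) : ℝ) := by
    have : Summable fun n : ℕ => ((n : ℝ)) ^ (-(3/2) : ℝ) :=
      Real.summable_nat_rpow.2 (by norm_num)
    exact_mod_cast (summable_nat_add_iff 1).2 this
  have hZ0 : 0 ≤ Z := tsum_nonneg fun n => by positivity
  set K : ℝ := a ^ (-3 : ℝ) with hK
  have hK0 : 0 ≤ K := Real.rpow_nonneg ha.1 _
  refine ⟨K + 202 + 3 + 4 * Z, by positivity, fun s h1 h3 ht => ?_⟩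
  set τ := |s.im| with hτ
  have hτ0 : 0 < τ := by linarith
  set M := ⌈τ ^ 2⌉₊ with hMdef
  have hM1 : τ ^ 2 ≤ M := Nat.le_ceil _
  have hM2 : (M : ℝ) ≤ 2 * τ ^ 2 := by
    have := (Nat.ceil_lt_add_one (by positivity : 0 ≤ τ ^ 2)).le
    nlinarith
  have hM : 1 ≤ M := Nat.one_le_iff_ne_zero.2 (by
    intro h; rw [h] at hM1; simp at hM1; nlinarith)
  have hMr : (1:ℝ) ≤ M := by exact_mod_cast hM
  have hs1 : s ≠ 1 := by rintro rfl; simp [hτ] at ht; linarith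
  have hform := hurwitz_formula ha (by linarith : 1/2 < s.re) hs1 hM
  have hsm : τ ≤ ‖s - 1‖ := by
    have := abs_im_le_norm (s - 1); simpa [hτ] using this
  have hsm1 : 1 ≤ ‖s - 1‖ := ht.trans hsm
  have hsn : ‖s‖ ≤ 4 * τ := by
    have := norm_le_abs_re_add_abs_im s
    have h4 : |s.re| ≤ 3 := abs_le.2 ⟨by linarith, h3⟩
    rw [← hτ] at this
    linarith
  have hτp : 1 ≤ τ ^ (1/25 : ℝ) := Real.one_le_rpow ht (by norm_num)
  -- M powers
  have hMp : (M : ℝ) ^ (1/50 : ℝ) ≤ 2 * τ ^ (1/25 : ℝ) := by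
    calc (M : ℝ) ^ (1/50 : ℝ) ≤ (2 * τ ^ 2) ^ (1/50 : ℝ) := by gcongr
      _ = 2 ^ (1/50 : ℝ) * (τ ^ 2) ^ (1/50 : ℝ) := Real.mul_rpow (by norm_num) (by positivity)
      _ ≤ 2 * τ ^ (1/25 : ℝ) := by
        gcongr
        · calc (2:ℝ) ^ (1/50 : ℝ) ≤ 2 ^ (1:ℝ) := Real.rpow_le_rpow_of_exponent_le (by norm_num) (by norm_num)
            _ = 2 := by simp
        · rw [← Real.rpow_natCast, ← Real.rpow_mul hτ0.le]; norm_num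
  have hMpp : (M : ℝ) ^ (1/100 : ℝ) ≤ (M : ℝ) ^ (1/50 : ℝ) :=
    Real.rpow_le_rpow_of_exponent_le hMr (by norm_num)
  -- first sum
  have hsum : ‖∑ n ∈ Finset.range M, 1 / (n + a : ℂ) ^ s‖ ≤ (K + 202) * τ ^ (1/25 : ℝ) := by
    obtain ⟨M', hM'⟩ : ∃ M', M = M' + 1 := ⟨M - 1, by omega⟩
    have hnorm0 : ‖1 / (((0:ℕ):ℂ) + a : ℂ) ^ s‖ ≤ K := by
      rcases ha.1.eq_or_lt with h | h
      · rw [← h]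
        have : s ≠ 0 := by rintro rfl; norm_num at h1
        simp [this, hK0]
      · have : ‖1 / (((0:ℕ):ℂ) + a : ℂ) ^ s‖ = a ^ (-s.re) := by
          rw [norm_div, Nat.cast_zero, zero_add, Complex.norm_cpow_eq_rpow_re_of_pos h,
            Real.rpow_neg h.le]; simp
        rw [this]
        exact Real.rpow_le_rpow_of_exponent_ge h ha.2 (by linarith)
    have hnorm : ∀ n ∈ Finset.range M', ‖1 / (((n+1:ℕ):ℂ) + a : ℂ) ^ s‖ ≤
        (M:ℝ) ^ (1/100 : ℝ) * ((n:ℝ) + 1)⁻¹ := by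
      intro n hn
      have hn' : ((n:ℝ) + 1) ≤ M := by
        have := Finset.mem_range.1 hn
        rw [hM']; push_cast
        have : (n:ℝ) ≤ M' := by exact_mod_cast this.le
        linarith
      have hp : (0:ℝ) < (n + 1 : ℝ) + a := by have := ha.1; positivity
      have e : (((n+1:ℕ):ℂ) + a : ℂ) = (((n + 1 : ℝ) + a : ℝ) : ℂ) := by push_cast; ring
      rw [norm_div, e, Complex.norm_cpow_eq_rpow_re_of_pos hp, norm_one, one_div,
        ← Real.rpow_neg hp.le]
      calc ((n + 1 : ℝ) + a) ^ (-s.re) ≤ ((n:ℝ) + 1) ^ (-s.re) :=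
            Real.rpow_le_rpow_of_nonpos (by positivity) (by linarith [ha.1]) (by linarith)
        _ ≤ ((n:ℝ) + 1) ^ (1/100 + (-1) : ℝ) :=
            Real.rpow_le_rpow_of_exponent_le (by linarith [(Nat.cast_nonneg n : (0:ℝ) ≤ n)]) (by linarith)
        _ = ((n:ℝ) + 1) ^ (1/100 : ℝ) * ((n:ℝ) + 1)⁻¹ := by
            rw [Real.rpow_add (by positivity), Real.rpow_neg_one]
        _ ≤ _ := by gcongr
    have hharm : ∑ n ∈ Finset.range M', ((n:ℝ) + 1)⁻¹ ≤ 1 + Real.log M := by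
      have h := harmonic_le_one_add_log M'
      have e : ((harmonic M' : ℚ) : ℝ) = ∑ n ∈ Finset.range M', ((n:ℝ) + 1)⁻¹ := by
        simp [harmonic]
      rw [e] at h
      refine h.trans ?_
      gcongr 1 + ?_
      rcases Nat.eq_zero_or_pos M' with h0 | h0
      · rw [h0]; simp [Real.log_nonneg hMr]
      · apply Real.log_le_log (by exact_mod_cast h0)
        rw [hM']; push_cast; linarith
    have hlog : Real.log M ≤ 100 * (M:ℝ) ^ (1/100 : ℝ) := by
      have := Real.log_le_rpow_div (x := (M:ℝ)) (by positivity) (ε := 1/100) (by norm_num)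
      linarith
    have hM1p : 1 ≤ (M:ℝ) ^ (1/100 : ℝ) := Real.one_le_rpow hMr (by norm_num)
    have hsq : (M:ℝ) ^ (1/100 : ℝ) * (M:ℝ) ^ (1/100 : ℝ) = (M:ℝ) ^ (1/50 : ℝ) := by
      rw [← Real.rpow_add (by positivity)]; norm_num
    rw [hM', Finset.sum_range_succ']
    refine (norm_add_le _ _).trans ?_
    have h5 : ‖∑ n ∈ Finset.range M', 1 / (((n+1:ℕ):ℂ) + a : ℂ) ^ s‖ ≤ 202 * τ ^ (1/25 : ℝ) := by
      refine (norm_sum_le_of_le _ hnorm).trans ?_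
      rw [← Finset.mul_sum]
      calc (M:ℝ) ^ (1/100 : ℝ) * ∑ n ∈ Finset.range M', ((n:ℝ) + 1)⁻¹
          ≤ (M:ℝ) ^ (1/100 : ℝ) * (101 * (M:ℝ) ^ (1/100 : ℝ)) := by gcongr; linarith
        _ = 101 * (M:ℝ) ^ (1/50 : ℝ) := by rw [← hsq]; ring
        _ ≤ _ := by linarith
    nlinarith
  have hmid : ‖((M + a : ℝ) : ℂ) ^ (1 - s)‖ ≤ 3 * τ ^ (1/25 : ℝ) := by
    have hp : (1:ℝ) ≤ M + a := by linarith [ha.1]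
    rw [Complex.norm_cpow_eq_rpow_re_of_pos (by linarith)]
    calc ((M:ℝ) + a) ^ (1 - s).re ≤ ((M:ℝ) + a) ^ (1/100 : ℝ) :=
          Real.rpow_le_rpow_of_exponent_le hp (by simp; linarith)
      _ ≤ ((3 * τ ^ 2)) ^ (1/100 : ℝ) := by gcongr; nlinarith [ha.2]
      _ = 3 ^ (1/100 : ℝ) * (τ ^ 2) ^ (1/100 : ℝ) := Real.mul_rpow (by norm_num) (by positivity)
      _ ≤ 3 * τ ^ (1/25 : ℝ) := by
        gcongr
        · calc (3:ℝ) ^ (1/100 : ℝ) ≤ 3 ^ (1:ℝ) := Real.rpow_le_rpow_of_exponent_le (by norm_num) (by norm_num)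
            _ = 3 := by simp
        · rw [← Real.rpow_natCast, ← Real.rpow_mul hτ0.le]
          exact Real.rpow_le_rpow_of_exponent_le ht (by norm_num)
  have htail : ‖∑' n : ℕ, U (n + M + a) s‖ ≤ ‖s - 1‖ * (4 * Z * τ ^ (1/25 : ℝ)) := by
    have hb : ∀ n : ℕ, ‖U (n + M + a) s‖ ≤
        (‖s - 1‖ * (‖s‖ * (M:ℝ) ^ (-(49/100) : ℝ))) * ((n:ℝ) + 1) ^ (-(3/2) : ℝ) := by
      intro n
      have hp : (0:ℝ) < n + M + a := by have := ha.1; positivity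
      have hn0 : (0:ℝ) ≤ n := by positivity
      refine (U_bound hp (by linarith)).trans ?_
      have : ((n:ℝ) + M + a) ^ (-s.re - 1) ≤ (M:ℝ) ^ (-(49/100) : ℝ) * ((n:ℝ) + 1) ^ (-(3/2) : ℝ) := by
        calc ((n:ℝ) + M + a) ^ (-s.re - 1) ≤ ((n:ℝ) + M + a) ^ (-(49/100) + -(3/2) : ℝ) :=
              Real.rpow_le_rpow_of_exponent_le (by linarith [ha.1]) (by linarith)
          _ = ((n:ℝ) + M + a) ^ (-(49/100) : ℝ) * ((n:ℝ) + M + a) ^ (-(3/2) : ℝ) :=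
              Real.rpow_add hp _ _
          _ ≤ _ := by
            gcongr ?_ * ?_
            · exact Real.rpow_le_rpow_of_nonpos (by positivity) (by linarith [ha.1]) (by norm_num)
            · exact Real.rpow_le_rpow_of_nonpos (by positivity) (by linarith [ha.1]) (by norm_num)
      calc ‖s - 1‖ * (‖s‖ * ((n:ℝ) + M + a) ^ (-s.re - 1)) ≤
        ‖s - 1‖ * (‖s‖ * ((M:ℝ) ^ (-(49/100) : ℝ) * ((n:ℝ) + 1) ^ (-(3/2) : ℝ))) := by gcongr
        _ = _ := by ring
    refine (tsum_of_norm_bounded (hZs.hasSum.mul_left _) hb).trans ?_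
    rw [← hZ]
    have hMn : (M:ℝ) ^ (-(49/100) : ℝ) ≤ τ ^ (-(98/100) : ℝ) := by
      calc (M:ℝ) ^ (-(49/100) : ℝ) ≤ (τ ^ 2) ^ (-(49/100) : ℝ) :=
            Real.rpow_le_rpow_of_nonpos (by positivity) hM1 (by norm_num)
        _ = _ := by rw [← Real.rpow_natCast, ← Real.rpow_mul hτ0.le]; norm_num
    have h6 : ‖s‖ * (M:ℝ) ^ (-(49/100) : ℝ) ≤ 4 * τ ^ (1/25 : ℝ) := by
      calc ‖s‖ * (M:ℝ) ^ (-(49/100) : ℝ) ≤ (4 * τ) * τ ^ (-(98/100) : ℝ) := by gcongr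
        _ = 4 * τ ^ (1 + -(98/100) : ℝ) := by rw [Real.rpow_add hτ0, Real.rpow_one]; ring
        _ ≤ 4 * τ ^ (1/25 : ℝ) := by
          gcongr 4 * ?_
          exact Real.rpow_le_rpow_of_exponent_le ht (by norm_num)
    calc ‖s - 1‖ * (‖s‖ * (M:ℝ) ^ (-(49/100) : ℝ)) * Z ≤ ‖s - 1‖ * (4 * τ ^ (1/25 : ℝ)) * Z := by gcongr
      _ = _ := by ring
  have hfin : ‖s - 1‖ * ‖hurwitzZeta a s‖ ≤ ‖s - 1‖ * ((K + 202 + 3 + 4 * Z) * τ ^ (1/25 : ℝ)) := by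
    rw [← norm_mul, hform]
    refine (norm_add₃_le).trans ?_
    rw [norm_mul]
    have : ‖s-1‖ * ‖∑ n ∈ Finset.range M, 1 / (n + a : ℂ) ^ s‖ ≤ ‖s-1‖ * ((K + 202) * τ ^ (1/25 : ℝ)) := by
      gcongr
    have h3 : 3 * τ ^ (1/25 : ℝ) ≤ ‖s-1‖ * (3 * τ ^ (1/25 : ℝ)) := by
      have : 0 ≤ 3 * τ ^ (1/25 : ℝ) := by positivity
      nlinarith
    calc _ ≤ ‖s-1‖ * ((K + 202) * τ ^ (1/25 : ℝ)) + ‖s-1‖ * (3 * τ ^ (1/25 : ℝ)) +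
        ‖s - 1‖ * (4 * Z * τ ^ (1/25 : ℝ)) := by linarith
      _ = _ := by ring
  exact le_of_mul_le_mul_left hfin (by linarith)

end PNT4

namespace PNT4
open Complex HurwitzZeta Topology DirichletCharacter

lemma L_growth (χ : DirichletCharacter ℂ 4) : ∃ C : ℝ, 0 ≤ C ∧ ∀ s : ℂ,
    99/100 ≤ s.re → s.re ≤ 3 → 1 ≤ |s.im| → ‖LFunction χ s‖ ≤ C * |s.im| ^ (1/25 : ℝ) := by
  have hm : ∀ j : ZMod 4, ((j.val : ℝ) / (4:ℕ)) ∈ Set.Icc (0:ℝ) 1 := fun j =>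
    ⟨by positivity, (div_le_one (by norm_num)).2 (by exact_mod_cast (ZMod.val_lt j).le)⟩
  choose C hC0 hC using fun j : ZMod 4 => hurwitz_growth (hm j)
  refine ⟨∑ j, C j, Finset.sum_nonneg fun j _ => hC0 j, fun s h1 h2 h3 => ?_⟩
  have hp : 0 ≤ |s.im| ^ (1/25 : ℝ) := by positivity
  rw [LFunction, ZMod.LFunction, norm_mul]
  have h4 : ‖((4:ℕ) : ℂ) ^ (-s)‖ ≤ 1 := by
    have := Complex.norm_cpow_eq_rpow_re_of_pos (x := 4) (by norm_num) (-s)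
    push_cast at this ⊢
    rw [this]
    exact Real.rpow_le_one_of_one_le_of_nonpos (by norm_num) (by simp; linarith)
  have h5 : ‖∑ j : ZMod 4, χ j * hurwitzZeta (ZMod.toAddCircle j) s‖ ≤
      ∑ j, C j * |s.im| ^ (1/25 : ℝ) := by
    refine norm_sum_le_of_le _ fun j _ => ?_
    rw [norm_mul, ZMod.toAddCircle_apply]
    calc _ ≤ 1 * ‖hurwitzZeta (((j.val : ℝ) / (4:ℕ) : ℝ) : UnitAddCircle) s‖ := by
          gcongr; exact χ.norm_le_one j
      _ ≤ _ := by rw [one_mul]; exact hC j s h1 h2 h3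
  rw [Finset.sum_mul]
  calc _ ≤ 1 * ∑ j, C j * |s.im| ^ (1/25 : ℝ) := by gcongr
    _ = _ := one_mul _

/-- Cauchy estimate. -/
lemma deriv_growth {f : ℂ → ℂ} (hf : ∀ s : ℂ, s ≠ 1 → DifferentiableAt ℂ f s) {a b c C : ℝ} (hc : 1 ≤ c)
    (hC : 0 ≤ C)
    (h : ∀ s : ℂ, a ≤ s.re → s.re ≤ b → c ≤ |s.im| → ‖f s‖ ≤ C * |s.im| ^ (1/25 : ℝ)) :
    ∀ s : ℂ, a + 1/200 ≤ s.re → s.re ≤ b - 1/200 → c + 1/200 ≤ |s.im| →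
      ‖deriv f s‖ ≤ (400 * C) * |s.im| ^ (1/25 : ℝ) := by
  intro s h1 h2 h3
  have hball : ∀ z ∈ Metric.closedBall s (1/200 : ℝ), a ≤ z.re ∧ z.re ≤ b ∧ c ≤ |z.im| ∧ |z.im| ≤ 2 * |s.im| := by
    intro z hz
    have hz' : ‖z - s‖ ≤ 1/200 := by simpa [dist_eq_norm] using hz
    have hr := (abs_re_le_norm (z - s)).trans hz'
    have hi := (abs_im_le_norm (z - s)).trans hz'
    simp only [sub_re, sub_im] at hr hi
    have hr' := abs_le.1 hr
    have h4 := abs_sub_abs_le_abs_sub s.im z.im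
    have h5 := abs_sub_abs_le_abs_sub z.im s.im
    rw [abs_sub_comm] at h4
    refine ⟨by linarith, by linarith, by linarith, by linarith⟩
  have hne : ∀ z ∈ Metric.closedBall s (1/200 : ℝ), z ≠ 1 := by
    rintro z hz rfl
    have := (hball _ hz).2.2.1
    simp at this; linarith
  have hd : DiffContOnCl ℂ f (Metric.ball s (1/200 : ℝ)) := by
    apply DifferentiableOn.diffContOnCl
    intro z hz
    exact (hf z (hne z (Metric.closure_ball_subset_closedBall hz))).differentiableWithinAt
  have := Complex.norm_deriv_le_of_forall_mem_sphere_norm_le (C := C * (2 * |s.im| ^ (1/25:ℝ)))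
    (by norm_num : (0:ℝ) < 1/200) hd ?_
  · refine this.trans (le_of_eq (by ring))
  · intro z hz
    have hb := hball z (Metric.sphere_subset_closedBall hz)
    refine (h z hb.1 hb.2.1 hb.2.2.1).trans ?_
    gcongr
    calc |z.im| ^ (1/25:ℝ) ≤ (2 * |s.im|) ^ (1/25:ℝ) := by gcongr; exact hb.2.2.2
      _ = 2 ^ (1/25:ℝ) * |s.im| ^ (1/25:ℝ) := Real.mul_rpow (by norm_num) (by positivity)
      _ ≤ _ := by
        gcongr
        calc (2:ℝ) ^ (1/25 : ℝ) ≤ 2 ^ (1:ℝ) := Real.rpow_le_rpow_of_exponent_le (by norm_num) (by norm_num)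
            _ = 2 := by simp

lemma deriv_diff {f : ℂ → ℂ} (hf : ∀ s : ℂ, s ≠ 1 → DifferentiableAt ℂ f s) :
    ∀ s : ℂ, s ≠ 1 → DifferentiableAt ℂ (deriv f) s := by
  intro s hs
  have h : DifferentiableOn ℂ f {1}ᶜ := fun z hz => (hf z hz).differentiableWithinAt
  exact (h.deriv isOpen_compl_singleton).differentiableAt (isOpen_compl_singleton.mem_nhds hs)

lemma L_bounds : ∃ B : ℝ, 1 ≤ B ∧ ∀ χ : DirichletCharacter ℂ 4, ∀ s : ℂ, 1 ≤ s.re → s.re ≤ 2 → 2 ≤ |s.im| →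
    ‖LFunction χ s‖ ≤ B * |s.im| ^ (1/25 : ℝ) ∧ ‖deriv (LFunction χ) s‖ ≤ B * |s.im| ^ (1/25 : ℝ) ∧
    ‖deriv (deriv (LFunction χ)) s‖ ≤ B * |s.im| ^ (1/25 : ℝ) := by
  choose C hC0 hC using L_growth
  set S := ∑ χ, C χ with hS
  have hCS : ∀ χ, C χ ≤ S := fun χ => Finset.single_le_sum (fun χ _ => hC0 χ) (Finset.mem_univ χ)
  have hS0 : 0 ≤ S := Finset.sum_nonneg fun χ _ => hC0 χ
  refine ⟨1 + 400 * (400 * S), by linarith, fun χ s h1 h2 h3 => ?_⟩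
  have hd0 : ∀ s : ℂ, s ≠ 1 → DifferentiableAt ℂ (LFunction χ) s := fun s hs =>
    differentiableAt_LFunction χ s (Or.inl hs)
  have e1 := deriv_growth hd0 le_rfl (hC0 χ) (hC χ)
  have e2 := deriv_growth (deriv_diff hd0) (by norm_num) (by have := hC0 χ; positivity) e1
  have hp : 0 ≤ |s.im| ^ (1/25 : ℝ) := by positivity
  have hcs := hCS χ
  have h0 := hC0 χ
  refine ⟨(hC χ s (by linarith) (by linarith) (by linarith)).trans ?_,
    (e1 s (by linarith) (by linarith) (by linarith)).trans ?_,
    (e2 s (by linarith) (by linarith) (by linarith)).trans ?_⟩ <;>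
  · gcongr; linarith

lemma triv_bound : ∃ A : ℝ, 1 ≤ A ∧ ∀ x : ℝ, 0 < x → x ≤ 1 → ‖LFunctionTrivChar 4 (1 + x)‖ ≤ A / x := by
  have hc : Continuous fun x : ℝ => LFunctionTrivChar₁ 4 (1 + x) :=
    (differentiable_LFunctionTrivChar₁ 4).continuous.comp (by fun_prop)
  obtain ⟨A, hA⟩ := (isCompact_Icc (a := (0:ℝ)) (b := 1)).exists_bound_of_continuousOn hc.continuousOn
  refine ⟨max A 1, le_max_right _ _, fun x h0 h1 => ?_⟩
  have := (hA x ⟨h0.le, h1⟩).trans (le_max_left A 1)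
  have hne : (1 + x : ℂ) ≠ 1 := by simpa using h0.ne'
  rw [LFunctionTrivChar₁, Function.update_of_ne hne] at this
  rw [le_div_iff₀ h0]
  have e : ‖(1 + x : ℂ) - 1‖ = x := by simp [abs_of_pos h0]
  rw [norm_mul, e] at this
  linarith

lemma L_lower : ∃ c : ℝ, 0 < c ∧ ∀ χ : DirichletCharacter ℂ 4, ∀ s : ℂ, 1 < s.re → s.re ≤ 2 → 2 ≤ |s.im| →
    c * |s.im| ^ (-(4/25) : ℝ) ≤ ‖LFunction χ s‖ := by
  obtain ⟨B, hB1, hB⟩ := L_bounds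
  obtain ⟨A, hA1, hA⟩ := triv_bound
  refine ⟨1 / (32 * A ^ 3 * B ^ 4), by positivity, fun χ s h1 h2 h3 => ?_⟩
  set t := s.im with ht
  set τ := |t| ^ (1/25 : ℝ) with hτ
  have ht0 : 0 < |t| := by linarith
  have hτ1 : 1 ≤ τ := Real.one_le_rpow (by linarith) (by norm_num)
  have hτ4 : |t| ^ (-(4/25) : ℝ) = 1 / τ ^ 4 := by
    rw [hτ, ← Real.rpow_natCast, ← Real.rpow_mul ht0.le, Real.rpow_neg ht0.le]; norm_num
  set D := 2 * A ^ 3 * B * τ with hD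
  have hD0 : 0 < D := by positivity
  have key : ∀ x : ℝ, 0 < x → x ≤ 1 → x ^ 3 / D ≤ ‖LFunction χ (1 + x + I * t)‖ ^ 4 := by
    intro x hx0 hx1
    have h := norm_LFunction_product_ge_one χ hx0 t
    rw [norm_mul, norm_mul, norm_pow, norm_pow] at h
    have hL2 : ‖LFunction (χ ^ 2) (1 + x + 2 * I * t)‖ ≤ 2 * B * τ := by
      have := (hB (χ ^ 2) (1 + x + 2 * I * t) (by simp; linarith) (by simp; linarith)
        (by simp [abs_mul]; linarith)).1
      refine this.trans ?_
      have e : |(1 + (x:ℂ) + 2 * I * t).im| = 2 * |t| := by simp [abs_mul]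
      rw [e, Real.mul_rpow (by norm_num) (by positivity)]
      have : (2:ℝ) ^ (1/25 : ℝ) ≤ 2 := by
        calc (2:ℝ) ^ (1/25 : ℝ) ≤ 2 ^ (1:ℝ) := Real.rpow_le_rpow_of_exponent_le (by norm_num) (by norm_num)
            _ = 2 := by simp
      calc B * (2 ^ (1/25 : ℝ) * |t| ^ (1/25:ℝ)) ≤ B * (2 * τ) := by gcongr
        _ = _ := by ring
    have hT := hA x hx0 hx1
    have : 1 ≤ (A / x) ^ 3 * ‖LFunction χ (1 + x + I * t)‖ ^ 4 * (2 * B * τ) := by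
      refine le_trans h ?_
      gcongr
    rw [div_le_iff₀ hD0]
    rw [div_pow, div_mul_eq_mul_div, div_mul_eq_mul_div, le_div_iff₀ (by positivity)] at this
    calc x ^ 3 = 1 * x ^ 3 := (one_mul _).symm
      _ ≤ _ := this
      _ = _ := by rw [hD]; ring
  set x0 := 1 / (16 * B ^ 4 * τ ^ 4 * D) with hx0
  have hx0p : 0 < x0 := by positivity
  have hx01 : x0 ≤ 1 := by
    rw [hx0, div_le_one (by positivity)]
    have : 1 ≤ D := by
      rw [hD]
      have := one_le_pow₀ hA1 (n := 3)
      have h2 : 1 ≤ A ^ 3 * B := by nlinarith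
      nlinarith
    have h4 := one_le_pow₀ hB1 (n := 4)
    have h5 := one_le_pow₀ hτ1 (n := 4)
    have : 1 ≤ B ^ 4 * τ ^ 4 := by nlinarith
    nlinarith
  set ℓ := x0 * B * τ with hℓ
  have hℓ0 : 0 < ℓ := by positivity
  have hxl : x0 ^ 3 / D = (2 * ℓ) ^ 4 := by
    rw [hℓ]
    have : x0 * (16 * B ^ 4 * τ ^ 4 * D) = 1 := by rw [hx0]; field_simp
    field_simp
    linear_combination (-1) * this
  have hℓv : 1 / (32 * A ^ 3 * B ^ 4) * (1 / τ ^ 4) = ℓ := by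
    rw [hℓ, hx0, hD]; field_simp; ring
  rw [hτ4, hℓv]
  have hs : s = 1 + ((s.re - 1 : ℝ) : ℂ) + I * t := by
    apply Complex.ext <;> simp [ht]
  by_cases hx : x0 ≤ s.re - 1
  · have h := key (s.re - 1) (by linarith) (by linarith)
    rw [← hs] at h
    have h5 : (2 * ℓ) ^ 4 ≤ ‖LFunction χ s‖ ^ 4 := by
      rw [← hxl]; refine le_trans ?_ h; gcongr
    have := le_of_pow_le_pow_left₀ (by norm_num) (norm_nonneg _) h5
    linarith
  · have h := key x0 hx0p hx01
    rw [hxl] at h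
    have h6 := le_of_pow_le_pow_left₀ (by norm_num) (norm_nonneg _) h
    set s0 : ℂ := 1 + x0 + I * t with hs0
    have hmv : ‖LFunction χ s0 - LFunction χ s‖ ≤ (B * τ) * ‖s0 - s‖ := by
      refine Convex.norm_image_sub_le_of_norm_hasDerivWithin_le (f' := deriv (LFunction χ))
        (s := segment ℝ s s0) ?_ ?_ (convex_segment _ _) (left_mem_segment _ _ _) (right_mem_segment _ _ _)
      all_goals
        intro z hz
        have hzr : 1 < z.re ∧ z.re ≤ 2 ∧ z.im = t := by
          obtain ⟨u, v, hu, hv, huv, rfl⟩ := hz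
          have e1 : s0.re = 1 + x0 := by simp [hs0]
          have e2 : s0.im = t := by simp [hs0]
          simp only [add_re, add_im, real_smul, re_ofReal_mul, im_ofReal_mul, e1, e2]
          refine ⟨by nlinarith, by nlinarith, ?_⟩
          rw [← ht, ← add_mul, huv, one_mul]
      · refine (differentiableAt_LFunction χ z (Or.inl ?_)).hasDerivAt.hasDerivWithinAt
        rintro rfl; simp at hzr
      · have := (hB χ z hzr.1.le hzr.2.1 (by rw [hzr.2.2]; exact h3)).2.1
        rwa [hzr.2.2] at this
    have hd : ‖s0 - s‖ ≤ x0 := by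
      have : s0 - s = ((x0 - (s.re - 1) : ℝ) : ℂ) := by
        rw [hs0]; nth_rw 1 [hs]; push_cast; ring
      rw [this, norm_real, Real.norm_eq_abs, abs_of_nonneg (by linarith)]
      linarith
    have h7 := norm_sub_norm_le (LFunction χ s0) (LFunction χ s)
    have h8 : (B * τ) * ‖s0 - s‖ ≤ ℓ := by
      rw [hℓ]; calc (B * τ) * ‖s0 - s‖ ≤ (B * τ) * x0 := by gcongr
        _ = _ := by ring
    linarith

end PNT4

namespace PNT4
open Complex HurwitzZeta Topology DirichletCharacter

noncomputable def Gf (s : ℂ) : ℂ :=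
  -(1/2) * ∑ χ : DirichletCharacter ℂ 4, deriv (LFunction χ) s / LFunction χ s
    - LFunction (1 : DirichletCharacter ℂ 4) s

noncomputable def G2 (s : ℂ) : ℂ :=
  -(1/2) * ∑ χ ∈ Finset.univ.erase (1 : DirichletCharacter ℂ 4), deriv (LFunction χ) s / LFunction χ s
    - (1/2) * (deriv (LFunctionTrivChar₁ 4) s / LFunctionTrivChar₁ 4 s) - dslope (LFunctionTrivChar₁ 4) 1 s

lemma L1_ne {s : ℂ} (hs : 1 ≤ s.re) : LFunctionTrivChar₁ 4 s ≠ 0 := by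
  rcases eq_or_ne s 1 with rfl | hw'
  · exact LFunctionTrivChar₁_apply_one_ne_zero _
  · rw [LFunctionTrivChar₁, Function.update_of_ne hw', mul_ne_zero_iff]
    exact ⟨sub_ne_zero_of_ne hw', LFunction_ne_zero_of_one_le_re _ (Or.inr hw') hs⟩

lemma L_an {χ : DirichletCharacter ℂ 4} {s : ℂ} (h : s ≠ 1 ∨ χ ≠ 1) : AnalyticAt ℂ (LFunction χ) s := by
  rcases h with h | h
  · rw [Complex.analyticAt_iff_eventually_differentiableAt]
    filter_upwards [isOpen_ne.mem_nhds h] with z hz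
    exact differentiableAt_LFunction χ z (Or.inl hz)
  · exact (differentiable_LFunction h).analyticAt s

lemma G2_an {s : ℂ} (hs : 1 ≤ s.re) : AnalyticAt ℂ G2 s := by
  unfold G2
  have hL1 := (differentiable_LFunctionTrivChar₁ 4).analyticAt s
  refine ((analyticAt_const.mul ?_).sub (analyticAt_const.mul (hL1.deriv.div hL1 (L1_ne hs)))).sub ?_
  · refine Finset.analyticAt_fun_sum _ fun χ hχ => ?_
    have h1 : χ ≠ 1 := Finset.ne_of_mem_erase hχ
    have := L_an (s := s) (Or.inr h1)
    exact this.deriv.div this (LFunction_ne_zero_of_one_le_re _ (Or.inl h1) hs)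
  · have : Differentiable ℂ (dslope (LFunctionTrivChar₁ 4) 1) := by
      rw [← differentiableOn_univ, Complex.differentiableOn_dslope univ_mem]
      exact (differentiable_LFunctionTrivChar₁ 4).differentiableOn
    exact this.analyticAt s

lemma Gf_an {s : ℂ} (hs : 1 < s.re) : AnalyticAt ℂ Gf s := by
  have h1 : s ≠ 1 := by rintro rfl; simp at hs
  unfold Gf
  refine (analyticAt_const.mul (Finset.analyticAt_fun_sum _ fun χ hχ => ?_)).sub (L_an (Or.inl h1))
  have := L_an (χ := χ) (Or.inl h1)
  exact this.deriv.div this (LFunction_ne_zero_of_one_le_re _ (Or.inr h1) hs.le)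

lemma Gf_eq {s : ℂ} (hs : 1 < s.re) : Gf s = G2 s := by
  have h1 : s ≠ 1 := by rintro rfl; simp at hs
  have h2 : s - 1 ≠ 0 := sub_ne_zero_of_ne h1
  have h3 : LFunction (1 : DirichletCharacter ℂ 4) s ≠ 0 :=
    LFunction_ne_zero_of_one_le_re _ (Or.inr h1) hs.le
  have e1 : LFunctionTrivChar₁ 4 1 = 1/2 := by
    rw [LFunctionTrivChar₁, Function.update_self]
    have : Nat.primeFactors 4 = {2} := by
      rw [show 4 = 2 ^ 2 by norm_num, Nat.primeFactors_prime_pow (by norm_num) Nat.prime_two]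
    rw [this]; norm_num
  have e2 : LFunctionTrivChar₁ 4 s = (s - 1) * LFunction (1 : DirichletCharacter ℂ 4) s := by
    rw [LFunctionTrivChar₁, Function.update_of_ne h1]
  unfold Gf G2
  rw [dslope_of_ne _ h1, slope_def_field, e1, deriv_LFunctionTrivChar₁_apply_of_ne_one _ h1, e2,
    ← Finset.add_sum_erase _ _ (Finset.mem_univ (1 : DirichletCharacter ℂ 4)), LFunctionTrivChar]
  field_simp
  ring

lemma Gf_bound : ∃ C : ℝ, 0 < C ∧ ∀ s : ℂ, 1 < s.re → s.re ≤ 2 →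
    ‖Gf s‖ ≤ C * (1 + |s.im|) ^ (1/2 : ℝ) ∧ ‖deriv Gf s‖ ≤ C * (1 + |s.im|) ^ (1/2 : ℝ) := by
  obtain ⟨B, hB1, hB⟩ := L_bounds
  obtain ⟨c, hc0, hc⟩ := L_lower
  have hK : IsCompact (Set.Icc (1:ℝ) 2 ×ℂ Set.Icc (-2:ℝ) 2) := isCompact_Icc.reProdIm isCompact_Icc
  obtain ⟨M1, hM1⟩ := hK.exists_bound_of_continuousOn (f := G2)
    (fun s hs => (G2_an hs.1.1).continuousAt.continuousWithinAt)
  obtain ⟨M2, hM2⟩ := hK.exists_bound_of_continuousOn (f := deriv G2)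
    (fun s hs => (G2_an hs.1.1).deriv.continuousAt.continuousWithinAt)
  set N : ℝ := ((Finset.univ : Finset (DirichletCharacter ℂ 4)).card : ℝ) with hN
  have hN0 : 0 ≤ N := by positivity
  set D := N * (B / c) + N * (2 * B ^ 2 / c ^ 2) + B with hD
  have hD0 : 0 < D := by positivity
  refine ⟨D + |M1| + |M2|, by positivity, fun s h1 h2 => ?_⟩
  set P := (1 + |s.im|) ^ (1/2 : ℝ) with hP
  have hP1 : 1 ≤ P := Real.one_le_rpow (by linarith [abs_nonneg s.im]) (by norm_num)
  have hs1 : s ≠ 1 := by rintro rfl; simp at h1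
  rcases le_total |s.im| 2 with h3 | h3
  · have hsK : s ∈ (Set.Icc (1:ℝ) 2 ×ℂ Set.Icc (-2:ℝ) 2) := ⟨⟨h1.le, h2⟩, abs_le.mp h3⟩
    have hev : Gf =ᶠ[𝓝 s] G2 := by
      filter_upwards [(isOpen_lt continuous_const Complex.continuous_re).mem_nhds h1] with z hz
      exact Gf_eq hz
    rw [hev.deriv_eq, hev.eq_of_nhds]
    have a1 := (hM1 s hsK).trans (le_abs_self _)
    have a2 := (hM2 s hsK).trans (le_abs_self _)
    have b1 := abs_nonneg M1
    have b2 := abs_nonneg M2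
    constructor <;> nlinarith
  · set t := s.im with ht
    set τ := |t| ^ (1/25 : ℝ) with hτ
    have ht0 : 0 < |t| := by linarith
    have hτ1 : 1 ≤ τ := Real.one_le_rpow (by linarith) (by norm_num)
    have hτ4 : |t| ^ (-(4/25) : ℝ) = 1 / τ ^ 4 := by
      rw [hτ, ← Real.rpow_natCast, ← Real.rpow_mul ht0.le, Real.rpow_neg ht0.le]; norm_num
    have hτP : τ ^ 10 ≤ P := by
      rw [hτ, ← Real.rpow_natCast, ← Real.rpow_mul ht0.le, hP]
      calc |t| ^ ((1/25:ℝ) * (10:ℕ)) ≤ (1 + |t|) ^ ((1/25:ℝ) * (10:ℕ)) :=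
            Real.rpow_le_rpow ht0.le (by linarith) (by positivity)
        _ ≤ _ := Real.rpow_le_rpow_of_exponent_le (by linarith) (by norm_num)
    have hτP1 : τ ≤ P := (le_self_pow₀ hτ1 (by norm_num)).trans hτP
    have hτP5 : τ ^ 5 ≤ P := (pow_le_pow_right₀ hτ1 (by norm_num)).trans hτP
    have hL : ∀ χ : DirichletCharacter ℂ 4, LFunction χ s ≠ 0 := fun χ =>
      LFunction_ne_zero_of_one_le_re _ (Or.inr hs1) h1.le
    have lo : ∀ χ : DirichletCharacter ℂ 4, c / τ ^ 4 ≤ ‖LFunction χ s‖ := fun χ => by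
      have := hc χ s h1 h2 h3
      rwa [hτ4, mul_one_div] at this
    have lo0 : 0 < c / τ ^ 4 := by positivity
    have f1 : ∀ χ : DirichletCharacter ℂ 4, ‖deriv (LFunction χ) s / LFunction χ s‖ ≤ B / c * P := fun χ => by
      rw [norm_div]
      calc _ ≤ (B * τ) / (c / τ ^ 4) := div_le_div₀ (by positivity) (hB χ s h1.le h2 h3).2.1 lo0 (lo χ)
        _ = B / c * τ ^ 5 := by field_simp
        _ ≤ _ := by gcongr
    have f2 : ∀ χ : DirichletCharacter ℂ 4, ‖deriv (fun s => deriv (LFunction χ) s / LFunction χ s) s‖ ≤ 2 * B ^ 2 / c ^ 2 * P := fun χ => by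
      have han := L_an (χ := χ) (Or.inl hs1)
      rw [deriv_fun_div han.deriv.differentiableAt han.differentiableAt (hL χ), norm_div, norm_pow]
      obtain ⟨g0, g1, g2⟩ := hB χ s h1.le h2 h3
      have : ‖deriv (deriv (LFunction χ)) s * LFunction χ s - deriv (LFunction χ) s * deriv (LFunction χ) s‖
          ≤ 2 * B ^ 2 * τ ^ 2 := by
        refine (norm_sub_le _ _).trans ?_
        rw [norm_mul, norm_mul]
        calc _ ≤ (B * τ) * (B * τ) + (B * τ) * (B * τ) := by gcongr
          _ = _ := by ring
      calc _ ≤ (2 * B ^ 2 * τ ^ 2) / (c / τ ^ 4) ^ 2 := 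
            div_le_div₀ (by positivity) this (by positivity) (pow_le_pow_left₀ lo0.le (lo χ) 2)
        _ = 2 * B ^ 2 / c ^ 2 * τ ^ 10 := by field_simp
        _ ≤ _ := by gcongr
    have fin : ∀ F : DirichletCharacter ℂ 4 → ℂ, ∀ z : ℂ, ∀ b : ℝ, 0 ≤ b → (∀ χ, ‖F χ‖ ≤ b * P) → ‖z‖ ≤ B * P → 
        ‖-(1/2) * ∑ χ, F χ - z‖ ≤ (N * b + B) * P := by
      intro F z b hb h hz
      refine (norm_sub_le _ _).trans ?_
      rw [norm_mul]
      have : ‖∑ χ, F χ‖ ≤ N * (b * P) := by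
        refine (norm_sum_le _ _).trans ?_
        rw [hN, ← nsmul_eq_mul]
        exact Finset.sum_le_card_nsmul _ _ _ fun χ _ => h χ
      have e : ‖(-(1/2) : ℂ)‖ = 1/2 := by norm_num
      rw [e]
      have := norm_nonneg (∑ χ, F χ)
      nlinarith
    have q1 : ‖LFunction (1 : DirichletCharacter ℂ 4) s‖ ≤ B * P :=
      (hB 1 s h1.le h2 h3).1.trans (by gcongr)
    have q2 : ‖deriv (LFunction (1 : DirichletCharacter ℂ 4)) s‖ ≤ B * P :=
      (hB 1 s h1.le h2 h3).2.1.trans (by gcongr)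
    have hb1 : 0 ≤ N * (B / c) := by positivity
    have hb2 : 0 ≤ N * (2 * B ^ 2 / c ^ 2) := by positivity
    have b1 := abs_nonneg M1
    have b2 := abs_nonneg M2
    constructor
    · refine (fin _ _ _ (by positivity) f1 q1).trans ?_
      exact mul_le_mul_of_nonneg_right (by linarith) (by linarith)
    · have hdG : deriv Gf s = -(1/2) * ∑ χ : DirichletCharacter ℂ 4, deriv (fun s => deriv (LFunction χ) s / LFunction χ s) s
          - deriv (LFunction (1 : DirichletCharacter ℂ 4)) s := by
        have hda : ∀ χ : DirichletCharacter ℂ 4, DifferentiableAt ℂ (fun s => deriv (LFunction χ) s / LFunction χ s) s := 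
          fun χ => by
            have han := L_an (χ := χ) (Or.inl hs1)
            exact (han.deriv.div han (hL χ)).differentiableAt
        unfold Gf
        rw [deriv_fun_sub, deriv_const_mul, deriv_fun_sum]
        · intro χ _; exact hda χ
        · exact DifferentiableAt.fun_sum fun χ _ => hda χ
        · exact (DifferentiableAt.fun_sum fun χ _ => hda χ).const_mul _
        · exact (L_an (Or.inl hs1)).differentiableAt
      rw [hdG]
      refine (fin _ _ _ (by positivity) f2 q2).trans ?_
      exact mul_le_mul_of_nonneg_right (by linarith) (by linarith)

end PNT4

namespace PNT4
open Complex HurwitzZeta Topology DirichletCharacter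
open MeasureTheory

noncomputable def Kf (s : ℂ) : ℂ := 1 / s - 1 / (s + 1)

lemma Kf_norm {σ : ℝ} (hσ : 1 ≤ σ) (t : ℝ) : ‖Kf (σ + t * I)‖ ≤ 1 / (1 + t ^ 2) := by
  have hs0 : (σ + t * I : ℂ) ≠ 0 := by
    intro h; have := congrArg re h; simp at this; linarith
  have hs1 : (σ + t * I + 1 : ℂ) ≠ 0 := by
    intro h; have := congrArg re h; simp at this; linarith
  have e : Kf (σ + t * I) = 1 / ((σ + t * I) * (σ + t * I + 1)) := by
    unfold Kf; field_simp; ring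
  rw [e, norm_div, norm_one, norm_mul]
  apply one_div_le_one_div_of_le (by positivity)
  have h1 : √(1 + t ^ 2) ≤ ‖(σ + t * I : ℂ)‖ := by
    rw [Complex.norm_def]; apply Real.sqrt_le_sqrt; simp [normSq_apply]; nlinarith
  have h2 : √(1 + t ^ 2) ≤ ‖(σ + t * I + 1 : ℂ)‖ := by
    rw [Complex.norm_def]; apply Real.sqrt_le_sqrt; simp [normSq_apply]; nlinarith
  calc 1 + t ^ 2 = √(1 + t ^ 2) * √(1 + t ^ 2) := (Real.mul_self_sqrt (by positivity)).symm
    _ ≤ _ := by gcongr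

lemma Kf_deriv {σ : ℝ} (hσ : 1 ≤ σ) (t : ℝ) : ∃ d : ℂ, HasDerivAt Kf d (σ + t * I) ∧ ‖d‖ ≤ 2 / (1 + t ^ 2) := by
  have hs0 : (σ + t * I : ℂ) ≠ 0 := by
    intro h; have := congrArg re h; simp at this; linarith
  have hs1 : (σ + t * I + 1 : ℂ) ≠ 0 := by
    intro h; have := congrArg re h; simp at this; linarith
  refine ⟨-1 / (σ + t * I) ^ 2 - -1 / (σ + t * I + 1) ^ 2, ?_, ?_⟩
  · unfold Kf
    have a := (hasDerivAt_id (σ + t * I : ℂ)).fun_inv hs0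
    have b := ((hasDerivAt_id (σ + t * I : ℂ)).add_const 1).fun_inv hs1
    simpa using a.fun_sub b
  · have h1 : 1 + t ^ 2 ≤ ‖(σ + t * I : ℂ)‖ ^ 2 := by
      rw [Complex.sq_norm]; simp [normSq_apply]; nlinarith
    have h2 : 1 + t ^ 2 ≤ ‖(σ + t * I + 1 : ℂ)‖ ^ 2 := by
      rw [Complex.sq_norm]; simp [normSq_apply]; nlinarith
    refine (norm_sub_le _ _).trans ?_
    rw [norm_div, norm_div, norm_neg, norm_one, norm_pow, norm_pow]
    have : (0:ℝ) < 1 + t ^ 2 := by positivity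
    calc _ ≤ 1 / (1 + t ^ 2) + 1 / (1 + t ^ 2) := by gcongr
      _ = _ := by ring

lemma Kf_cont {σ : ℝ} (hσ : 1 ≤ σ) : Continuous fun t : ℝ => Kf (σ + t * I) := by
  rw [continuous_iff_continuousAt]
  intro t
  obtain ⟨d, hd, _⟩ := Kf_deriv hσ t
  exact ContinuousAt.comp (f := fun t : ℝ => (σ + t * I : ℂ)) hd.continuousAt (by fun_prop)

lemma Kf_int {σ : ℝ} (hσ : 1 ≤ σ) : Integrable fun t : ℝ => Kf (σ + t * I) := by
  refine Integrable.mono' (g := fun t : ℝ => (1 + t ^ 2)⁻¹) integrable_inv_one_add_sq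
    (Kf_cont hσ).aestronglyMeasurable (ae_of_all _ fun t => ?_)
  simpa using Kf_norm hσ t

noncomputable def kf (u : ℝ) : ℂ :=
  Set.indicator (Set.Ioc 0 1) (fun _ => 1 : ℝ → ℂ) u - Set.indicator (Set.Ioc 0 1) (fun t => (t:ℂ) ^ (1:ℂ) : ℝ → ℂ) u

lemma kf_eq {u : ℝ} (hu : 0 < u) : kf u = ((max 0 (1 - u) : ℝ) : ℂ) := by
  unfold kf
  by_cases h : u ≤ 1
  · have hm : u ∈ Set.Ioc (0:ℝ) 1 := ⟨hu, h⟩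
    rw [Set.indicator_of_mem hm, Set.indicator_of_mem hm, max_eq_right (by linarith)]
    push_cast; rw [cpow_one]
  · rw [Set.indicator_of_notMem (by simp [h]), Set.indicator_of_notMem (by simp [h]), max_eq_left (by linarith)]
    simp

lemma kf_mellin {s : ℂ} (hs : 0 < s.re) : HasMellin kf s (Kf s) := by
  have a := hasMellin_one_Ioc hs
  have b := hasMellin_cpow_Ioc 1 (s := s) (by simp; linarith)
  have := hasMellin_sub a.1 b.1
  rwa [a.2, b.2] at this

lemma kernel_inv {σ x : ℝ} (hσ : 1 ≤ σ) (hx : 0 < x) :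
    ∫ t : ℝ, (x:ℂ) ^ (-(σ + t * I : ℂ)) * Kf (σ + t * I) = 2 * Real.pi * ((max 0 (1 - x) : ℝ) : ℂ) := by
  have hm : ∀ t : ℝ, mellin kf (σ + t * I) = Kf (σ + t * I) := fun t => (kf_mellin (by simp; linarith)).2
  have h := mellinInv_mellin_eq σ kf hx (kf_mellin (s := σ) (by simp; linarith)).1 ?_ ?_
  · rw [kf_eq hx] at h
    rw [← h]
    unfold mellinInv
    simp only [hm, smul_eq_mul, Complex.real_smul]
    push_cast
    have : (Real.pi : ℂ) ≠ 0 := by exact_mod_cast Real.pi_ne_zero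
    field_simp
    simp only [mul_comm]
  · unfold VerticalIntegrable
    simp only [hm]
    exact Kf_int hσ
  · have : kf =ᶠ[𝓝 x] fun u => ((max 0 (1 - u) : ℝ) : ℂ) := by
      filter_upwards [lt_mem_nhds hx] with u hu using kf_eq hu
    refine ContinuousAt.congr (f := fun u => ((max 0 (1 - u) : ℝ) : ℂ)) ?_ this.symm
    fun_prop

lemma perron {a : ℕ → ℂ} (ha0 : a 0 = 0) {σ y : ℝ} (hσ : 1 ≤ σ) (hy : 0 < y) (ha : LSeriesSummable a σ) :
    HasSum (fun n : ℕ => 2 * Real.pi * (a n * ((max 0 (1 - n / y) : ℝ) : ℂ)))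
      (∫ t : ℝ, LSeries a (σ + t * I) * Kf (σ + t * I) * (y:ℂ) ^ (σ + t * I : ℂ)) := by
  have hyc : (y:ℂ) ≠ 0 := by exact_mod_cast hy.ne'
  set F : ℕ → ℝ → ℂ := fun n t => LSeries.term a (σ + t * I) n * Kf (σ + t * I) * (y:ℂ) ^ (σ + t * I : ℂ) with hF
  have hny : ∀ t : ℝ, ‖(y:ℂ) ^ (σ + t * I : ℂ)‖ = y ^ σ := fun t => by
    rw [norm_cpow_eq_rpow_re_of_pos hy]; simp
  have hnt : ∀ n, ∀ t : ℝ, ‖LSeries.term a (σ + t * I) n‖ = ‖LSeries.term a σ n‖ := fun n t => by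
    rw [LSeries.norm_term_eq, LSeries.norm_term_eq]; simp
  have hFn : ∀ n t, ‖F n t‖ = ‖LSeries.term a σ n‖ * y ^ σ * ‖Kf (σ + t * I)‖ := fun n t => by
    simp only [hF, norm_mul, hny, hnt]; ring
  have hFi : ∀ n, Integrable (F n) := fun n => by
    refine Integrable.mono' (((Kf_int hσ).norm.const_mul (‖LSeries.term a σ n‖ * y ^ σ))) ?_
      (ae_of_all _ fun t => (hFn n t).le)
    refine Continuous.aestronglyMeasurable ?_
    refine (Continuous.mul ?_ (Kf_cont hσ)).mul ?_
    · rcases eq_or_ne n 0 with rfl | hn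
      · simp only [LSeries.term_zero]; exact continuous_const
      · simp only [LSeries.term_of_ne_zero hn]
        have hnc : (n:ℂ) ≠ 0 := by exact_mod_cast hn
        refine continuous_const.div ?_ fun t => by simp [cpow_eq_zero_iff, hnc]
        exact Continuous.const_cpow (by fun_prop) (Or.inl hnc)
    · exact Continuous.const_cpow (by fun_prop) (Or.inl hyc)
  have hs := hasSum_integral_of_summable_integral_norm (F := F) hFi (by
    simp only [hFn]
    simp only [integral_const_mul]
    exact (ha.norm.mul_right _).mul_right _)
  have e2 : (∫ t, ∑' n, F n t) = ∫ t : ℝ, LSeries a (σ + t * I) * Kf (σ + t * I) * (y:ℂ) ^ (σ + t * I : ℂ) := by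
    congr 1; ext t
    simp only [hF, tsum_mul_right]; rfl
  rw [e2] at hs
  have e3 : (fun n : ℕ => 2 * Real.pi * (a n * ((max 0 (1 - n / y) : ℝ) : ℂ))) = fun n => ∫ t, F n t := by
    funext n
    rcases eq_or_ne n 0 with rfl | hn
    · simp [hF, ha0]
    · have hn0 : (0:ℝ) < n := by exact_mod_cast Nat.pos_of_ne_zero hn
      have hk := kernel_inv hσ (div_pos hn0 hy)
      calc 2 * Real.pi * (a n * ((max 0 (1 - n / y) : ℝ) : ℂ)) = a n * (2 * Real.pi * ((max 0 (1 - n / y) : ℝ) : ℂ)) := by ring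
        _ = _ := by
          rw [← hk, ← integral_const_mul]
          congr 1; ext t
          have : ((n / y : ℝ) : ℂ) ^ (-(σ + t * I : ℂ)) = (y:ℂ) ^ (σ + t * I : ℂ) / (n:ℂ) ^ (σ + t * I : ℂ) := by
            rw [Complex.ofReal_div, Complex.div_cpow_ofReal_nonneg hn0.le hy.le, cpow_neg, cpow_neg]
            have h1 : (n:ℂ) ^ (σ + t * I : ℂ) ≠ 0 := by
              simp [cpow_eq_zero_iff, hn]
            have h2 : (y:ℂ) ^ (σ + t * I : ℂ) ≠ 0 := by
              simp [cpow_eq_zero_iff, hyc]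
            push_cast
            field_simp
          rw [this]
          simp only [hF, LSeries.term_of_ne_zero hn]
          ring
  rw [e3]; exact hs

end PNT4

namespace PNT4
open Complex HurwitzZeta Topology DirichletCharacter
open MeasureTheory

noncomputable def aC (n : ℕ) : ℝ :=
  ArithmeticFunction.vonMangoldt.residueClass (1 : ZMod 4) n - (if n % 2 = 1 then 1 else 0)

lemma aC_fun : (fun n => ((aC n : ℝ) : ℂ)) = (fun n : ℕ => ((ArithmeticFunction.vonMangoldt.residueClass (1 : ZMod 4) n : ℝ) : ℂ))
    - fun n : ℕ => (1 : DirichletCharacter ℂ 4) n := by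
  funext n
  simp only [aC, Pi.sub_apply]
  push_cast
  congr 1
  have : IsUnit (n : ZMod 4) ↔ n % 2 = 1 := by
    rw [ZMod.isUnit_iff_coprime, show 4 = 2 ^ 2 by norm_num, Nat.coprime_pow_right_iff (by norm_num),
      Nat.coprime_two_right, Nat.odd_iff]
  by_cases h : n % 2 = 1
  · rw [if_pos h, MulChar.one_apply (this.2 h)]; simp
  · rw [if_neg h, MulChar.map_nonunit _ (mt this.1 h)]; simp

lemma aC_summable {s : ℂ} (hs : 1 < s.re) : LSeriesSummable (fun n => ((aC n : ℝ) : ℂ)) s := by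
  rw [aC_fun]
  refine LSeriesSummable.sub ?_ (LSeriesSummable_of_one_lt_re _ hs)
  exact LSeriesSummable_of_abscissaOfAbsConv_lt_re
    ((ArithmeticFunction.vonMangoldt.abscissaOfAbsConv_residueClass_le_one _).trans_lt (by exact_mod_cast hs))

lemma aC_LSeries {s : ℂ} (hs : 1 < s.re) : LSeries (fun n => ((aC n : ℝ) : ℂ)) s = Gf s := by
  rw [aC_fun, LSeries_sub (LSeriesSummable_of_abscissaOfAbsConv_lt_re
    ((ArithmeticFunction.vonMangoldt.abscissaOfAbsConv_residueClass_le_one _).trans_lt (by exact_mod_cast hs)))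
    (LSeriesSummable_of_one_lt_re _ hs), ← LFunction_eq_LSeries _ hs,
    ArithmeticFunction.vonMangoldt.LSeries_residueClass_eq isUnit_one hs]
  unfold Gf
  have : Nat.totient 4 = 2 := by decide
  simp [this]

lemma Gf_int : ∃ C : ℝ, 0 < C ∧ ∀ y : ℝ, Real.exp 1 ≤ y →
    ‖∫ t : ℝ, Gf ((1 + 1 / Real.log y : ℝ) + t * I) * Kf ((1 + 1 / Real.log y : ℝ) + t * I) * (y:ℂ) ^ ((1 + 1 / Real.log y : ℝ) + t * I : ℂ)‖
      ≤ C * y / Real.log y := by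
  obtain ⟨C, hC0, hC⟩ := Gf_bound
  have hI : Integrable (fun t : ℝ => (1 + |t|) ^ (-(3/2) : ℝ)) := by
    have := integrable_one_add_norm (E := ℝ) (μ := volume) (r := 3/2) (by simp; norm_num)
    simpa using this
  have hmaj : ∀ t : ℝ, (1 + |t|) ^ (1/2 : ℝ) / (1 + t ^ 2) ≤ 2 * (1 + |t|) ^ (-(3/2) : ℝ) := by
    intro t
    have h0 : 0 < 1 + |t| := by positivity
    have e : (1 + |t|) ^ (1/2 : ℝ) = (1 + |t|) ^ (-(3/2) : ℝ) * (1 + |t|) ^ 2 := by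
      rw [← Real.rpow_natCast, ← Real.rpow_add h0]; norm_num
    rw [div_le_iff₀ (by positivity), e]
    have : (1 + |t|) ^ 2 ≤ 2 * (1 + t ^ 2) := by nlinarith [sq_abs t, sq_nonneg (1 - |t|)]
    have h1 : 0 ≤ (1 + |t|) ^ (-(3/2) : ℝ) := by positivity
    nlinarith
  set J := ∫ t : ℝ, (1 + |t|) ^ (-(3/2) : ℝ) with hJ
  have hJ0 : 0 ≤ J := integral_nonneg fun t => by positivity
  refine ⟨6 * C * Real.exp 1 * (J + 1), by positivity, fun y hy => ?_⟩
  have hy0 : 0 < y := (Real.exp_pos 1).trans_le hy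
  have hl1 : 1 ≤ Real.log y := by rwa [Real.le_log_iff_exp_le hy0]
  have hl0 : 0 < Real.log y := by linarith
  set σ : ℝ := 1 + 1 / Real.log y with hσ
  have hσ1 : 1 < σ := by rw [hσ]; have : 0 < 1 / Real.log y := by positivity
                         linarith
  have hσ2 : σ ≤ 2 := by rw [hσ]; have : 1 / Real.log y ≤ 1 := by rw [div_le_one hl0]; exact hl1
                         linarith
  have hyσ : y ^ σ = Real.exp 1 * y := by
    rw [hσ, Real.rpow_add hy0, Real.rpow_one, mul_comm]; congr 1
    rw [Real.rpow_def_of_pos hy0]; congr 1; field_simp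
  have hyc : (y:ℂ) ≠ 0 := by exact_mod_cast hy0.ne'
  have hre : ∀ t : ℝ, ((σ:ℂ) + t * I).re = σ := fun t => by simp
  have him : ∀ t : ℝ, ((σ:ℂ) + t * I).im = t := fun t => by simp
  choose d hd hdn using fun t : ℝ => Kf_deriv hσ1.le t
  have hline : ∀ t : ℝ, HasDerivAt (fun t : ℝ => (σ + t * I : ℂ)) I t := fun t => by
    have : HasDerivAt (fun t : ℝ => (t : ℂ)) 1 t := Complex.ofRealCLM.hasDerivAt
    simpa using (this.mul_const I).const_add (σ : ℂ)
  have hcpl : Continuous fun t : ℝ => (σ + t * I : ℂ) := by fun_prop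
  set u : ℝ → ℂ := fun t => Gf (σ + t * I) * Kf (σ + t * I) with hu
  set u' : ℝ → ℂ := fun t => deriv Gf (σ + t * I) * I * Kf (σ + t * I) + Gf (σ + t * I) * (deriv Kf (σ + t * I) * I) with hu'
  have hdu : ∀ t, HasDerivAt u (u' t) t := fun t => by
    have a := (Gf_an (s := σ + t * I) (by rw [hre]; exact hσ1)).differentiableAt.hasDerivAt.comp t (hline t)
    have b := ((hd t).differentiableAt.hasDerivAt).comp t (hline t)
    exact a.mul b
  set w : ℝ → ℂ := fun t => (y:ℂ) ^ (σ + t * I : ℂ) with hw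
  have hwn : ∀ t, ‖w t‖ = Real.exp 1 * y := fun t => by
    rw [hw]; simp only; rw [norm_cpow_eq_rpow_re_of_pos hy0, hre, hyσ]
  have hwc : Continuous w := Continuous.const_cpow hcpl (Or.inl hyc)
  have hLc : (I * Real.log y : ℂ) ≠ 0 := by
    simp only [ne_eq, mul_eq_zero, I_ne_zero, false_or]; exact_mod_cast hl0.ne'
  set v : ℝ → ℂ := fun t => w t / (I * Real.log y) with hv
  have hdv : ∀ t, HasDerivAt v (w t) t := fun t => by
    have a := ((((hasDerivAt_id (σ + t * I : ℂ)).const_cpow (c := (y:ℂ)) (Or.inl hyc))).comp t (hline t)).div_const (I * Real.log y)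
    refine a.congr_deriv ?_
    simp only [hw, id, Complex.ofReal_log hy0.le]
    rw [Complex.ofReal_log hy0.le] at hLc
    rw [div_eq_iff hLc]; ring
  have hun : ∀ t, ‖u t‖ ≤ 2 * C * (1 + |t|) ^ (-(3/2) : ℝ) := fun t => by
    have a := (hC (σ + t * I) (by rw [hre]; exact hσ1) (by rw [hre]; exact hσ2)).1
    rw [him] at a
    rw [hu]; simp only; rw [norm_mul]
    calc _ ≤ (C * (1 + |t|) ^ (1/2 : ℝ)) * (1 / (1 + t ^ 2)) := by
          gcongr; exact Kf_norm hσ1.le t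
      _ = C * ((1 + |t|) ^ (1/2 : ℝ) / (1 + t ^ 2)) := by ring
      _ ≤ C * (2 * (1 + |t|) ^ (-(3/2) : ℝ)) := by gcongr; exact hmaj t
      _ = _ := by ring
  have hun' : ∀ t, ‖u' t‖ ≤ 6 * C * (1 + |t|) ^ (-(3/2) : ℝ) := fun t => by
    obtain ⟨a, b⟩ := hC (σ + t * I) (by rw [hre]; exact hσ1) (by rw [hre]; exact hσ2)
    rw [him] at a b
    have hk := hdn t
    rw [← (hd t).deriv] at hk
    rw [hu']; simp only
    refine (norm_add_le _ _).trans ?_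
    simp only [norm_mul, norm_I, mul_one]
    calc _ ≤ (C * (1 + |t|) ^ (1/2 : ℝ)) * (1 / (1 + t ^ 2)) + (C * (1 + |t|) ^ (1/2 : ℝ)) * (2 / (1 + t ^ 2)) := by
          gcongr; exact Kf_norm hσ1.le t
      _ = 3 * C * ((1 + |t|) ^ (1/2 : ℝ) / (1 + t ^ 2)) := by ring
      _ ≤ 3 * C * (2 * (1 + |t|) ^ (-(3/2) : ℝ)) := by gcongr; exact hmaj t
      _ = _ := by ring
  have hucont : Continuous u := continuous_iff_continuousAt.2 fun t => (hdu t).continuousAt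
  have hu'meas : AEStronglyMeasurable u' volume := by
    have : u' = deriv u := funext fun t => ((hdu t).deriv).symm
    rw [this]; exact (measurable_deriv u).aestronglyMeasurable
  have hui : Integrable u := (hI.const_mul (2 * C)).mono' hucont.aestronglyMeasurable (ae_of_all _ hun)
  have hu'i : Integrable u' := (hI.const_mul (6 * C)).mono' hu'meas (ae_of_all _ hun')
  have hwb : ∀ t, ‖w t‖ ≤ Real.exp 1 * y := fun t => (hwn t).le
  have hvc : Continuous v := hwc.div_const _
  have hvb : ∀ t, ‖v t‖ ≤ Real.exp 1 * y / Real.log y := fun t => by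
    rw [hv]; simp only; rw [norm_div, hwn]; simp [abs_of_pos hl0]
  have ibp := integral_mul_deriv_eq_deriv_mul_of_integrable (u := u) (v := v) (u' := u') (v' := w)
    (fun t _ => hdu t) (fun t _ => hdv t)
    (hui.mul_bdd (c := Real.exp 1 * y) hwc.aestronglyMeasurable (ae_of_all _ hwb))
    (hu'i.mul_bdd (c := Real.exp 1 * y / Real.log y) hvc.aestronglyMeasurable (ae_of_all _ hvb))
    (hui.mul_bdd (c := Real.exp 1 * y / Real.log y) hvc.aestronglyMeasurable (ae_of_all _ hvb))
  change ‖∫ t, u t * w t‖ ≤ _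
  rw [ibp, norm_neg]
  have hb : ∀ t, ‖u' t * v t‖ ≤ 6 * C * (Real.exp 1 * y / Real.log y) * (1 + |t|) ^ (-(3/2) : ℝ) := fun t => by
    rw [norm_mul]
    calc _ ≤ (6 * C * (1 + |t|) ^ (-(3/2) : ℝ)) * (Real.exp 1 * y / Real.log y) := by
          gcongr; exact hun' t; exact hvb t
      _ = _ := by ring
  refine (norm_integral_le_of_norm_le (hI.const_mul _) (ae_of_all _ hb)).trans ?_
  rw [integral_const_mul, ← hJ]
  have : 6 * C * Real.exp 1 * (J + 1) * y / Real.log y = 6 * C * (Real.exp 1 * y / Real.log y) * J + 6 * C * (Real.exp 1 * y / Real.log y) := by ring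
  rw [this]
  have : 0 ≤ 6 * C * (Real.exp 1 * y / Real.log y) := by positivity
  linarith

lemma aC_sum : ∃ C : ℝ, 0 < C ∧ ∀ y : ℝ, Real.exp 1 ≤ y → ∀ N : ℕ, y ≤ N → 
    |∑ n ∈ Finset.range N, aC n * max 0 (1 - n / y)| ≤ C * y / Real.log y := by
  obtain ⟨C, hC0, hC⟩ := Gf_int
  refine ⟨C, hC0, fun y hy N hN => ?_⟩
  have hy0 : 0 < y := (Real.exp_pos 1).trans_le hy
  have hl1 : 1 ≤ Real.log y := by rwa [Real.le_log_iff_exp_le hy0]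
  have hσ1 : 1 < 1 + 1 / Real.log y := by
    have : 0 < 1 / Real.log y := by positivity
    linarith
  have h := perron (a := fun n => ((aC n : ℝ) : ℂ)) (by simp [aC]) hσ1.le hy0 (aC_summable (by simpa using hσ1))
  have h2 := hC y hy
  have e : ∀ t : ℝ, LSeries (fun n => ((aC n : ℝ) : ℂ)) ((1 + 1 / Real.log y : ℝ) + t * I) = Gf ((1 + 1 / Real.log y : ℝ) + t * I) :=
    fun t => aC_LSeries (by simpa using hσ1)
  simp only [e] at h
  have h3 := hasSum_sum_of_ne_finset_zero (L := SummationFilter.unconditional ℕ) (f := fun n : ℕ => 2 * Real.pi * (((aC n : ℝ) : ℂ) * ((max 0 (1 - n / y) : ℝ) : ℂ)))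
    (s := Finset.range N) (fun n hn => by
      have : (N:ℝ) ≤ n := by exact_mod_cast (by simpa using hn : N ≤ n)
      rw [max_eq_left]; · simp
      rw [sub_nonpos, le_div_iff₀ hy0]; linarith)
  rw [h.unique h3, ← Finset.mul_sum] at h2
  have e2 : ∑ n ∈ Finset.range N, (((aC n : ℝ) : ℂ) * ((max 0 (1 - n / y) : ℝ) : ℂ)) = ((∑ n ∈ Finset.range N, aC n * max 0 (1 - n / y) : ℝ) : ℂ) := by
    push_cast; rfl
  rw [e2, norm_mul, Complex.norm_real, Real.norm_eq_abs] at h2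
  have e3 : ‖(2 * Real.pi : ℂ)‖ = 2 * Real.pi := by simp [abs_of_pos Real.pi_pos]
  rw [e3] at h2
  refine le_trans ?_ h2
  have := abs_nonneg (∑ n ∈ Finset.range N, aC n * max 0 (1 - n / y))
  nlinarith [Real.pi_gt_three]

end PNT4

namespace PNT4

def P1s (N : ℕ) : Finset ℕ := (Finset.range N).filter (fun n => n.Prime ∧ n % 4 = 1)

lemma odd_sum_aux (y : ℝ) (M : ℕ) : ∑ n ∈ Finset.range M, (if n % 2 = 1 then (1:ℝ) else 0) * (y - n)
    = (M / 2 : ℕ) * y - ((M / 2 : ℕ) : ℝ) ^ 2 := by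
  induction M with
  | zero => simp
  | succ M ih =>
    rw [Finset.sum_range_succ, ih]
    rcases Nat.even_or_odd' M with ⟨k, rfl | rfl⟩
    · have h1 : (2 * k) / 2 = k := by omega
      have h2 : (2 * k + 1) / 2 = k := by omega
      have h3 : ¬ (2 * k) % 2 = 1 := by omega
      rw [h1, h2, if_neg h3]; ring
    · have h1 : (2 * k + 1) / 2 = k := by omega
      have h2 : (2 * k + 1 + 1) / 2 = k + 1 := by omega
      have h3 : (2 * k + 1) % 2 = 1 := by omega
      rw [h1, h2, if_pos h3]; push_cast; ring

lemma max_sum_trunc (f : ℕ → ℝ) {y : ℝ} (hy : 0 ≤ y) {N : ℕ} (hN : y ≤ N) :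
    ∑ n ∈ Finset.range N, f n * max 0 (y - n) = ∑ n ∈ Finset.range (⌊y⌋₊ + 1), f n * (y - n) := by
  have h1 : ∑ n ∈ Finset.range N, f n * max 0 (y - n) = ∑ n ∈ Finset.range (N + (⌊y⌋₊ + 1)), f n * max 0 (y - n) := by
    refine Finset.sum_subset (Finset.range_subset_range.2 (by omega)) fun i _ hi => ?_
    have : (N:ℝ) ≤ i := by exact_mod_cast (by simpa using hi : N ≤ i)
    rw [max_eq_left (by linarith), mul_zero]
  have h2 : ∑ n ∈ Finset.range (⌊y⌋₊ + 1), f n * max 0 (y - n) = ∑ n ∈ Finset.range (N + (⌊y⌋₊ + 1)), f n * max 0 (y - n) := by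
    refine Finset.sum_subset (Finset.range_subset_range.2 (by omega)) fun i _ hi => ?_
    have : ⌊y⌋₊ < i := by rw [Finset.mem_range] at hi; omega
    have := Nat.lt_of_floor_lt this
    rw [max_eq_left (by linarith), mul_zero]
  rw [h1, ← h2]
  refine Finset.sum_congr rfl fun i hi => ?_
  have : i ≤ ⌊y⌋₊ := by simpa [Nat.lt_succ_iff] using hi
  have := (Nat.le_floor_iff hy).1 this
  rw [max_eq_right (by linarith)]

lemma odd_sum {y : ℝ} (hy : 0 ≤ y) {N : ℕ} (hN : y ≤ N) :
    |∑ n ∈ Finset.range N, (if n % 2 = 1 then (1:ℝ) else 0) * max 0 (y - n) - y ^ 2 / 4| ≤ 1 / 4 := by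
  rw [max_sum_trunc (fun n => if n % 2 = 1 then (1:ℝ) else 0) hy hN, odd_sum_aux]
  set M := ⌊y⌋₊ with hM
  have h1 : (M:ℝ) ≤ y := Nat.floor_le hy
  have h2 : y < M + 1 := Nat.lt_floor_add_one y
  set j := (M + 1) / 2 with hj
  have h3 : (2 * j : ℝ) ≤ M + 1 := by exact_mod_cast (by omega : 2 * j ≤ M + 1)
  have h4 : (M : ℝ) ≤ 2 * j := by exact_mod_cast (by omega : M ≤ 2 * j)
  have e : (j:ℝ) * y - (j:ℝ) ^ 2 - y ^ 2 / 4 = -((j:ℝ) - y / 2) ^ 2 := by ring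
  rw [e, abs_neg, abs_of_nonneg (sq_nonneg _)]
  have : |(j:ℝ) - y / 2| ≤ 1 / 2 := by rw [abs_le]; constructor <;> linarith
  calc ((j:ℝ) - y / 2) ^ 2 = |(j:ℝ) - y / 2| ^ 2 := (sq_abs _).symm
    _ ≤ (1/2) ^ 2 := by gcongr
    _ = _ := by norm_num

lemma resid_eq (n : ℕ) : ArithmeticFunction.vonMangoldt.residueClass (1 : ZMod 4) n =
    if n % 4 = 1 then ArithmeticFunction.vonMangoldt n else 0 := by
  unfold ArithmeticFunction.vonMangoldt.residueClass
  rw [Set.indicator_apply]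
  have : n ∈ {n : ℕ | (n : ZMod 4) = 1} ↔ n % 4 = 1 := by
    have := ZMod.natCast_eq_natCast_iff' n 1 4
    simpa using this
  simp only [this]

lemma psi_bound : ∃ C : ℝ, 0 < C ∧ ∀ y : ℝ, Real.exp 1 ≤ y → ∀ N : ℕ, y ≤ N →
    |∑ q ∈ P1s N, Real.log q * max 0 (y - q) - y ^ 2 / 4| ≤ C * y ^ 2 / Real.log y := by
  obtain ⟨C, hC0, hC⟩ := aC_sum
  refine ⟨C + 33, by positivity, fun y hy N hN => ?_⟩
  have hy0 : 0 < y := (Real.exp_pos 1).trans_le hy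
  have hy1 : 1 ≤ y := by have := Real.add_one_le_exp 1; linarith
  have hl1 : 1 ≤ Real.log y := by rwa [Real.le_log_iff_exp_le hy0]
  have hl0 : 0 < Real.log y := by linarith
  have h1 := hC y hy N hN
  have h2 := odd_sum hy0.le hN
  set R := ∑ n ∈ Finset.range N, ArithmeticFunction.vonMangoldt.residueClass (1 : ZMod 4) n * max 0 (y - n) with hR
  set O := ∑ n ∈ Finset.range N, (if n % 2 = 1 then (1:ℝ) else 0) * max 0 (y - n) with hO
  have e1 : y * ∑ n ∈ Finset.range N, aC n * max 0 (1 - n / y) = R - O := by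
    rw [Finset.mul_sum, hR, hO, ← Finset.sum_sub_distrib]
    refine Finset.sum_congr rfl fun n _ => ?_
    have : max 0 (y - n) = y * max 0 (1 - n / y) := by
      rw [mul_max_of_nonneg _ _ hy0.le]; congr 1
      · simp
      · field_simp
    rw [this, aC]; ring
  have h3 : |R - O| ≤ C * y ^ 2 / Real.log y := by
    rw [← e1, abs_mul, abs_of_pos hy0]
    calc _ ≤ y * (C * y / Real.log y) := by gcongr
      _ = _ := by ring
  have hpow : |R - ∑ q ∈ P1s N, Real.log q * max 0 (y - q)| ≤ 32 * y ^ 2 / Real.log y := by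
    set M := ⌊y⌋₊ with hM
    have e2 : ∑ q ∈ P1s N, Real.log q * max 0 (y - q) = ∑ n ∈ Finset.range N, (if n.Prime ∧ n % 4 = 1 then Real.log n else 0) * max 0 (y - n) := by
      rw [P1s, Finset.sum_filter]
      refine Finset.sum_congr rfl fun n _ => ?_
      split_ifs <;> simp
    rw [e2, hR, max_sum_trunc _ hy0.le hN, max_sum_trunc (fun n => if n.Prime ∧ n % 4 = 1 then Real.log n else 0) hy0.le hN, ← Finset.sum_sub_distrib]
    have key : |∑ n ∈ Finset.range (M + 1), (ArithmeticFunction.vonMangoldt.residueClass (1 : ZMod 4) n * (y - n) -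
        (if n.Prime ∧ n % 4 = 1 then Real.log n else 0) * (y - n))| ≤ y * (Chebyshev.psi y - Chebyshev.theta y) := by
      rw [Chebyshev.psi_eq_sum_Icc, Chebyshev.theta_eq_sum_Icc, Finset.sum_filter, ← Finset.sum_sub_distrib, Finset.mul_sum]
      have : Finset.range (M + 1) = Finset.Icc 0 M := by ext; simp [Nat.lt_succ_iff]
      rw [this]
      refine (Finset.abs_sum_le_sum_abs _ _).trans (Finset.sum_le_sum fun n hn => ?_)
      have hn1 : (n:ℝ) ≤ y := (Nat.le_floor_iff hy0.le).1 (by simpa using hn)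
      have hn0 : (0:ℝ) ≤ n := by positivity
      have hΛ : 0 ≤ ArithmeticFunction.vonMangoldt n := ArithmeticFunction.vonMangoldt_nonneg
      rw [resid_eq]
      by_cases hp : n.Prime
      · simp only [hp, true_and, if_true, ArithmeticFunction.vonMangoldt_apply_prime hp]
        simp
      · simp only [hp, false_and, if_false]
        split_ifs
        · rw [zero_mul, sub_zero, sub_zero, abs_of_nonneg (mul_nonneg hΛ (by linarith)), mul_comm]
          gcongr; linarith
        · simp; positivity
    refine key.trans ?_
    have h5 := (le_abs_self _).trans (Chebyshev.abs_psi_sub_theta_le_sqrt_mul_log hy1)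
    have h6 : Real.log y ^ 2 ≤ 16 * √y := by
      have := Real.log_le_rpow_div hy0.le (ε := 1/4) (by norm_num)
      calc Real.log y ^ 2 ≤ (y ^ (1/4 : ℝ) / (1/4)) ^ 2 := by gcongr
        _ = 16 * √y := by
          rw [Real.sqrt_eq_rpow, div_pow, ← Real.rpow_natCast, ← Real.rpow_mul hy0.le]; norm_num; ring
    rw [le_div_iff₀ hl0]
    calc y * (Chebyshev.psi y - Chebyshev.theta y) * Real.log y ≤ y * (2 * √y * Real.log y) * Real.log y := by gcongr
      _ = 2 * y * √y * Real.log y ^ 2 := by ring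
      _ ≤ 2 * y * √y * (16 * √y) := by gcongr
      _ = 32 * y * (√y * √y) := by ring
      _ = _ := by rw [Real.mul_self_sqrt hy0.le]; ring
  have h7 : (1:ℝ) / 4 ≤ y ^ 2 / Real.log y := by
    rw [le_div_iff₀ hl0]
    have := Real.log_le_sub_one_of_pos hy0
    nlinarith
  have e9 : (C + 33) * y ^ 2 / Real.log y = C * y ^ 2 / Real.log y + 32 * y ^ 2 / Real.log y + y ^ 2 / Real.log y := by ring
  rw [e9]
  rw [abs_le] at h2 h3 hpow ⊢
  constructor <;> linarith [h2.1, h2.2, h3.1, h3.2, hpow.1, hpow.2]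

end PNT4

namespace PNT4

def SG (n : ℕ) : Set GaussianInt := {z | z.norm = n}

lemma norm_eq' (z : GaussianInt) : z.norm = z.re ^ 2 + z.im ^ 2 := by
  rw [Zsqrtd.norm_def]; ring

lemma r2_eq (n : ℕ) : r2 n = (SG n).ncard := by
  rw [r2, ← Nat.card_coe_set_eq]
  refine Nat.card_congr ⟨fun p => ⟨⟨p.1.1, p.1.2⟩, ?_⟩, fun z => ⟨(z.1.re, z.1.im), ?_⟩, fun p => rfl, fun z => rfl⟩
  · show Zsqrtd.norm _ = _
    rw [norm_eq']; exact p.2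
  · have := z.2
    change Zsqrtd.norm _ = _ at this
    rw [norm_eq'] at this; exact this

lemma SG_fin (n : ℕ) : (SG n).Finite := by
  have : (Set.Icc (-(n:ℤ)) n ×ˢ Set.Icc (-(n:ℤ)) n).Finite := (Set.finite_Icc _ _).prod (Set.finite_Icc _ _)
  refine Set.Finite.subset (this.image fun p => (⟨p.1, p.2⟩ : GaussianInt)) ?_
  intro z hz
  change Zsqrtd.norm _ = _ at hz
  rw [norm_eq'] at hz
  refine ⟨(z.re, z.im), ⟨⟨?_, ?_⟩, ?_, ?_⟩, rfl⟩ <;> simp only <;> nlinarith [sq_nonneg (z.re), sq_nonneg z.im, sq_nonneg (z.re+1), sq_nonneg (z.re-1), sq_nonneg (z.im+1), sq_nonneg (z.im-1)]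

lemma r2_one : r2 1 = 4 := by
  rw [r2_eq]
  have : SG 1 = {⟨1, 0⟩, ⟨-1, 0⟩, ⟨0, 1⟩, ⟨0, -1⟩} := by
    ext z
    simp only [SG, Set.mem_ofPred_eq, Set.mem_insert_iff, Set.mem_singleton_iff, norm_eq', Zsqrtd.ext_iff]
    constructor
    · intro h
      have h1 : z.re ≤ 1 := by push_cast at h; nlinarith [sq_nonneg z.im]
      have h2 : -1 ≤ z.re := by push_cast at h; nlinarith [sq_nonneg z.im]
      have h3 : z.im ≤ 1 := by push_cast at h; nlinarith [sq_nonneg z.re]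
      have h4 : -1 ≤ z.im := by push_cast at h; nlinarith [sq_nonneg z.re]
      generalize z.re = a at *
      generalize z.im = b at *
      interval_cases a <;> interval_cases b <;> simp_all
    · rintro (⟨h, h'⟩ | ⟨h, h'⟩ | ⟨h, h'⟩ | ⟨h, h'⟩) <;> rw [h, h'] <;> norm_num
  rw [this, Set.ncard_insert_of_notMem, Set.ncard_insert_of_notMem, Set.ncard_pair]
  all_goals simp [Zsqrtd.ext_iff]

lemma mul_inj {w : GaussianInt} (hw : w ≠ 0) : Function.Injective fun z : GaussianInt => w * z :=
  fun a b h => mul_left_cancel₀ hw h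

lemma SG_dvd {w : GaussianInt} {k : ℕ} (hk : 0 < k) (hw : w.norm = k) (n : ℕ) :
    {z ∈ SG (k * n) | w ∣ z} = (fun z => w * z) '' SG n := by
  ext z
  simp only [SG, Set.mem_ofPred_eq, Set.mem_image]
  constructor
  · rintro ⟨h, u, rfl⟩
    refine ⟨u, ?_, rfl⟩
    rw [Zsqrtd.norm_mul, hw] at h
    push_cast at h
    exact mul_left_cancel₀ (by exact_mod_cast hk.ne') h
  · rintro ⟨u, hu, rfl⟩
    refine ⟨?_, dvd_mul_right _ _⟩
    rw [Zsqrtd.norm_mul, hw, hu]; push_cast; rfl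

lemma SG_dvd_card {w : GaussianInt} {k : ℕ} (hk : 0 < k) (hw : w.norm = k) (n : ℕ) :
    {z ∈ SG (k * n) | w ∣ z}.ncard = r2 n := by
  rw [SG_dvd hk hw, Set.ncard_image_of_injective _ (mul_inj ?_), r2_eq]
  rintro rfl
  simp at hw; omega

lemma r2_two (n : ℕ) : r2 (2 * n) = r2 n := by
  rw [← SG_dvd_card (w := ⟨1, 1⟩) (k := 2) (by norm_num) (by rw [norm_eq']; norm_num) n, r2_eq]
  congr 1
  ext z
  simp only [Set.mem_ofPred_eq]
  refine ⟨fun h => ⟨h, ?_⟩, fun h => h.1⟩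
  change Zsqrtd.norm _ = _ at h
  rw [norm_eq'] at h
  push_cast at h
  have h2 : (z.re + z.im) % 2 = 0 := by
    have : (z.re ^ 2 + z.im ^ 2) % 2 = 0 := by omega
    rcases Int.even_or_odd' z.re with ⟨a, ha | ha⟩ <;> rcases Int.even_or_odd' z.im with ⟨b, hb | hb⟩ <;>
      rw [ha, hb] at this ⊢ <;> ring_nf at this ⊢ <;> omega
  refine ⟨⟨(z.re + z.im) / 2, (z.im - z.re) / 2⟩, ?_⟩
  rw [Zsqrtd.ext_iff, Zsqrtd.re_mul, Zsqrtd.im_mul]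
  simp only
  constructor <;> omega

lemma prime_of_norm {w : GaussianInt} {p : ℕ} (hp : p.Prime) (hw : w.norm = p) : Prime w := by
  apply Irreducible.prime
  rw [irreducible_iff]
  constructor
  · intro h
    rw [← Zsqrtd.norm_eq_one_iff, hw] at h
    simp at h; exact hp.one_lt.ne' h
  · intro a b hab
    rw [← Zsqrtd.norm_eq_one_iff, ← Zsqrtd.norm_eq_one_iff]
    have : a.norm.natAbs * b.norm.natAbs = p := by
      rw [← Int.natAbs_mul, ← Zsqrtd.norm_mul, ← hab, hw]; simp
    rcases (Nat.dvd_prime hp).1 (Dvd.intro _ this) with h | h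
    · exact Or.inl h
    · right
      rw [h] at this
      exact Nat.eq_of_mul_eq_mul_left hp.pos (by omega)

lemma r2_split {p : ℕ} (hp : p.Prime) (h1 : p % 4 = 1) (n : ℕ) :
    r2 (p * n) + {z ∈ SG (p * n) | (p : GaussianInt) ∣ z}.ncard = 2 * r2 n := by
  have := Fact.mk hp
  obtain ⟨a, b, hab⟩ := Nat.Prime.sq_add_sq (p := p) (by omega)
  set w : GaussianInt := ⟨a, b⟩ with hw
  set w' : GaussianInt := ⟨a, -b⟩ with hw'
  have hn : w.norm = p := by rw [norm_eq', hw]; simp only; exact_mod_cast hab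
  have hn' : w'.norm = p := by rw [norm_eq', hw']; simp only; rw [neg_sq]; exact_mod_cast hab
  have hww : w * w' = p := by
    rw [Zsqrtd.ext_iff, Zsqrtd.re_mul, Zsqrtd.im_mul, hw, hw']
    simp only [Zsqrtd.re_natCast, Zsqrtd.im_natCast]
    refine ⟨?_, by ring⟩
    have : (p:ℤ) = a ^ 2 + b ^ 2 := by exact_mod_cast hab.symm
    rw [this]; ring
  have hP := prime_of_norm hp hn
  have hP' := prime_of_norm hp hn'
  have hnd : ¬ w' ∣ w := by
    intro h
    have h3 : w' ∣ ((2 * a : ℤ) : GaussianInt) := by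
      have : ((2 * a : ℤ) : GaussianInt) = w + w' := by
        rw [Zsqrtd.ext_iff]; simp [hw, hw']; ring
      rw [this]; exact dvd_add h dvd_rfl
    obtain ⟨u, hu⟩ := h3
    have h4 := congrArg Zsqrtd.norm hu
    rw [Zsqrtd.norm_mul, hn', Zsqrtd.norm_intCast] at h4
    have h5 : (p:ℤ) ∣ (2 * a) * (2 * a) := ⟨_, h4⟩
    have h6 : p ∣ (2 * a) * (2 * a) := by exact_mod_cast h5
    have h7 : p ∣ 2 * a := by rcases hp.dvd_mul.1 h6 with h | h <;> exact h
    rcases hp.dvd_mul.1 h7 with h | h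
    · have := Nat.le_of_dvd (by norm_num) h
      have := hp.two_le
      omega
    · have ha : a < p := by
        by_contra hc
        have := hp.two_le
        nlinarith
      have ha0 : a = 0 := Nat.eq_zero_of_dvd_of_lt h ha
      subst ha0
      have hb : b ∣ p := ⟨b, by rw [← hab]; ring⟩
      rcases (Nat.dvd_prime hp).1 hb with h | h
      · subst h; have := hp.two_le; omega
      · have := hp.two_le; rw [h] at hab; nlinarith
  have hu : SG (p * n) = {z ∈ SG (p * n) | w ∣ z} ∪ {z ∈ SG (p * n) | w' ∣ z} := by
    ext z
    simp only [Set.mem_union, Set.mem_ofPred_eq, ← and_or_left]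
    refine ⟨fun h => ⟨h, ?_⟩, fun h => h.1⟩
    change Zsqrtd.norm _ = _ at h
    have h2 : w ∣ z * star z := by
      have : z * star z = ((p * n : ℕ) : ℤ) := by
        rw [← h, Zsqrtd.norm_eq_mul_conj]
      rw [this]; push_cast; rw [← hww]
      exact (dvd_mul_right _ _).mul_right _
    rcases hP.dvd_or_dvd h2 with h | h
    · exact Or.inl h
    · right
      obtain ⟨u, hu⟩ := h
      refine ⟨star u, ?_⟩
      have h3 : star w = w' := by rw [Zsqrtd.ext_iff]; simp [hw, hw']
      rw [← h3, ← star_mul', ← hu, star_star]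
  have hi : {z ∈ SG (p * n) | (p : GaussianInt) ∣ z} = {z ∈ SG (p * n) | w ∣ z} ∩ {z ∈ SG (p * n) | w' ∣ z} := by
    ext z
    simp only [Set.mem_inter_iff, Set.mem_ofPred_eq]
    constructor
    · rintro ⟨h, h2⟩
      rw [← hww] at h2
      exact ⟨⟨h, (dvd_mul_right _ _).trans h2⟩, h, (dvd_mul_left _ _).trans h2⟩
    · rintro ⟨⟨h, u, hu⟩, _, h2⟩
      refine ⟨h, ?_⟩
      rw [hu] at h2
      rcases hP'.dvd_or_dvd h2 with h3 | ⟨v, hv⟩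
      · exact absurd h3 hnd
      · refine ⟨v, ?_⟩
        rw [hu, hv, ← hww]; ring
  have hc := Set.ncard_union_add_ncard_inter {z ∈ SG (p * n) | w ∣ z} {z ∈ SG (p * n) | w' ∣ z}
    ((SG_fin _).subset fun z hz => hz.1) ((SG_fin _).subset fun z hz => hz.1)
  rw [← hu, ← hi, SG_dvd_card hp.pos hn, SG_dvd_card hp.pos hn', ← r2_eq] at hc
  omega

lemma SG_p {p : ℕ} (hp : p.Prime) (n : ℕ) :
    {z ∈ SG (p * (p * n)) | (p : GaussianInt) ∣ z}.ncard = r2 n := by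
  have := SG_dvd_card (w := (p : GaussianInt)) (k := p * p) (Nat.mul_pos hp.pos hp.pos) (by rw [Zsqrtd.norm_natCast]; push_cast; rfl) n
  rwa [mul_assoc] at this

lemma SG_p' {p : ℕ} (hp : p.Prime) {n : ℕ} (hn : ¬ p ∣ n) :
    {z ∈ SG (p * n) | (p : GaussianInt) ∣ z} = ∅ := by
  ext z
  simp only [Set.mem_ofPred_eq, Set.mem_empty_iff_false, iff_false]
  rintro ⟨h, u, rfl⟩
  change Zsqrtd.norm _ = _ at h
  rw [Zsqrtd.norm_mul, Zsqrtd.norm_natCast] at h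
  push_cast at h
  rw [mul_assoc] at h
  have h2 := mul_left_cancel₀ (by exact_mod_cast hp.ne_zero) h
  have h3 : (p:ℤ) ∣ n := ⟨_, h2.symm⟩
  exact hn (by exact_mod_cast h3)

lemma r2_pow_one {p : ℕ} (hp : p.Prime) (h1 : p % 4 = 1) {n : ℕ} (hn : ¬ p ∣ n) (k : ℕ) :
    r2 (p ^ k * n) = (k + 1) * r2 n := by
  induction k using Nat.strong_induction_on with
  | _ k ih =>
    match k with
    | 0 => simp
    | 1 =>
      have := r2_split hp h1 n
      rw [SG_p' hp hn] at this
      simp at this; simp [this]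
    | k + 2 =>
      have := r2_split hp h1 (p * (p ^ k * n))
      rw [SG_p hp, ← mul_assoc p (p ^ k), ← pow_succ', ← mul_assoc, ← pow_succ', ih k (by omega), ih (k + 1) (by omega)] at this
      have e : k + 1 + 1 = k + 2 := rfl
      rw [e] at this
      nlinarith

lemma r2_three {p : ℕ} (hp : p.Prime) (h3 : p % 4 = 3) (n : ℕ) :
    r2 (p * n) = {z ∈ SG (p * n) | (p : GaussianInt) ∣ z}.ncard := by
  have := Fact.mk hp
  rw [r2_eq]; congr 1
  ext z
  simp only [Set.mem_ofPred_eq]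
  refine ⟨fun h => ⟨h, ?_⟩, fun h => h.1⟩
  change Zsqrtd.norm _ = _ at h
  have hP := GaussianInt.prime_of_nat_prime_of_mod_four_eq_three p h3
  have h2 : (p : GaussianInt) ∣ z * star z := by
    have : z * star z = ((p * n : ℕ) : ℤ) := by
      rw [← h, Zsqrtd.norm_eq_mul_conj]
    rw [this]; push_cast
    exact dvd_mul_right _ _
  rcases hP.dvd_or_dvd h2 with h | ⟨u, hu⟩
  · exact h
  · refine ⟨star u, ?_⟩
    have := congrArg star hu
    rw [star_star, star_mul'] at this
    rw [this]; simp

lemma r2_pow_three {p : ℕ} (hp : p.Prime) (h3 : p % 4 = 3) {n : ℕ} (hn : ¬ p ∣ n) (k : ℕ) :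
    r2 (p ^ k * n) = 0 ∨ r2 (p ^ k * n) = r2 n := by
  induction k using Nat.strong_induction_on with
  | _ k ih =>
    match k with
    | 0 => simp
    | 1 =>
      have := r2_three hp h3 n
      rw [SG_p' hp hn] at this
      simp at this; simp [this]
    | k + 2 =>
      have := r2_three hp h3 (p * (p ^ k * n))
      rw [SG_p hp, ← mul_assoc p (p ^ k), ← pow_succ', ← mul_assoc, ← pow_succ'] at this
      rw [this]; exact ih k (by omega)

lemma r2_pow_two (k n : ℕ) : r2 (2 ^ k * n) = r2 n := by
  induction k with
  | zero => simp
  | succ k ih => rw [pow_succ', mul_assoc, r2_two, ih]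

noncomputable def fr (n : ℕ) : ℕ := n.factorization.prod fun p k => if p % 4 = 1 then k + 1 else 1

lemma fr_mul {p k n : ℕ} (hp : p.Prime) (hn : ¬ p ∣ n) (hk : 0 < k) :
    fr (p ^ k * n) = (if p % 4 = 1 then k + 1 else 1) * fr n := by
  unfold fr
  have hc : Nat.Coprime (p ^ k) n := Nat.Coprime.pow_left k ((Nat.Prime.coprime_iff_not_dvd hp).2 hn)
  rw [Nat.factorization_mul_of_coprime hc, Finsupp.prod_add_index_of_disjoint, hp.factorization_pow,
    Finsupp.prod_single_index]
  · simp
  · rw [Nat.support_factorization, Nat.support_factorization]; exact hc.disjoint_primeFactors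

theorem r2_formula (n : ℕ) (h : n ≠ 0) : (r2 n = 0 ∨ r2 n = 4 * fr n) ∧
    ((∀ p, p.Prime → p ∣ n → p % 4 ≠ 3) → r2 n = 4 * fr n) := by
  induction n using Nat.recOnPrimePow with
  | zero => exact absurd rfl h
  | one => simp [r2_one, fr]
  | prime_pow_mul a p k hp hpa hk ih =>
    have ha : a ≠ 0 := by rintro rfl; simp at hpa
    obtain ⟨ih1, ih2⟩ := ih ha
    rw [fr_mul hp hpa hk]
    have hdv : (∀ q, q.Prime → q ∣ p ^ k * a → q % 4 ≠ 3) → (∀ q, q.Prime → q ∣ a → q % 4 ≠ 3) :=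
      fun h q hq hqa => h q hq (hqa.mul_left _)
    have hpd : p ∣ p ^ k * a := (dvd_pow_self p hk.ne').mul_right _
    rcases hp.eq_two_or_odd with rfl | hodd
    · rw [r2_pow_two]
      simp only [show ¬ (2 % 4 = 1) by norm_num, if_false, one_mul]
      exact ⟨ih1, fun h => ih2 (hdv h)⟩
    · have : p % 4 = 1 ∨ p % 4 = 3 := by omega
      rcases this with h1 | h3
      · rw [r2_pow_one hp h1 hpa, if_pos h1]
        refine ⟨?_, fun h => ?_⟩
        · rcases ih1 with h | h
          · left; rw [h, mul_zero]
          · right; rw [h]; ring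
        · rw [ih2 (hdv h)]; ring
      · have hne : ¬ p % 4 = 1 := by omega
        rw [if_neg hne, one_mul]
        refine ⟨?_, fun h => absurd h3 (h p hp hpd)⟩
        rcases r2_pow_three hp h3 hpa k with h | h
        · exact Or.inl h
        · rw [h]; exact ih1

end PNT4

namespace PNT4

noncomputable def Ll (l : ℕ) : ℝ := Real.log (1 + 1 / ((l : ℝ) + 1))
noncomputable def Sc : ℝ := ∑' l : ℕ, Ll l ^ 2

lemma Ll_le (l : ℕ) : Ll l ≤ 1 / ((l:ℝ) + 1) := by
  have := Real.log_le_sub_one_of_pos (x := 1 + 1 / ((l:ℝ) + 1)) (by positivity)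
  unfold Ll; linarith

lemma Ll_pos (l : ℕ) : 0 < Ll l := by
  apply Real.log_pos
  have : 0 < 1 / ((l:ℝ) + 1) := by positivity
  linarith

lemma Ll_anti : Antitone Ll := by
  intro a b hab
  unfold Ll
  have : (a:ℝ) ≤ b := by exact_mod_cast hab
  gcongr

lemma Ll_zero_le : Ll 0 ≤ 1 := by simpa using Ll_le 0

lemma Ll_zero : Ll 0 = Real.log 2 := by unfold Ll; norm_num

lemma Ll_le_one (l : ℕ) : Ll l ≤ 1 := (Ll_anti (Nat.zero_le l)).trans Ll_zero_le

lemma Ll_sum (b : ℕ) : ∑ l ∈ Finset.range b, Ll l = Real.log (b + 1) := by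
  induction b with
  | zero => simp
  | succ b ih =>
    rw [Finset.sum_range_succ, ih, Ll, ← Real.log_mul (by positivity) (by positivity)]
    congr 1; push_cast; field_simp

lemma Ll_set (B : Finset ℕ) : ∑ l ∈ B, Ll l ≤ Real.log (B.card + 1) := by
  induction B using Finset.induction_on_max with
  | empty => simp
  | insert a s ha ih =>
    have hn : a ∉ s := fun h => lt_irrefl _ (ha a h)
    rw [Finset.sum_insert hn, Finset.card_insert_of_notMem hn]
    have hc : s.card ≤ a := by
      have : s ⊆ Finset.range a := fun i hi => by simpa using ha i hi
      simpa using Finset.card_le_card this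
    have h1 : Ll a ≤ Ll s.card := Ll_anti hc
    have h2 := Ll_sum (s.card + 1)
    rw [Finset.sum_range_succ, Ll_sum] at h2
    linarith

lemma Ll_rpow_le (l : ℕ) {r : ℝ} (hr : 0 ≤ r) : Ll l ^ r ≤ 1 / ((l:ℝ) + 1) ^ r := by
  have := Real.rpow_le_rpow (Ll_pos l).le (Ll_le l) hr
  rwa [Real.div_rpow (by norm_num) (by positivity), Real.one_rpow] at this

lemma summable_Q : Summable fun l : ℕ => Ll l ^ (3/2 : ℝ) := by
  have h := (summable_nat_add_iff 1).2 (Real.summable_one_div_nat_rpow (p := 3/2) |>.2 (by norm_num))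
  refine Summable.of_nonneg_of_le (fun l => Real.rpow_nonneg (Ll_pos l).le _) (fun l => ?_) h
  simpa using Ll_rpow_le l (r := 3/2) (by norm_num)

lemma sq_le_Q (l : ℕ) : Ll l ^ 2 ≤ Ll l ^ (3/2 : ℝ) := by
  have := Real.rpow_le_rpow_of_exponent_ge (Ll_pos l) (Ll_le_one l) (show (3/2:ℝ) ≤ (2:ℕ) by norm_num)
  rwa [Real.rpow_natCast] at this

lemma summable_S : Summable fun l : ℕ => Ll l ^ 2 :=
  Summable.of_nonneg_of_le (fun l => sq_nonneg _) sq_le_Q summable_Q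

lemma Sc_pos : 0 < Sc := summable_S.tsum_pos (fun l => sq_nonneg _) 0 (pow_pos (Ll_pos 0) 2)

/-- tail estimate -/
lemma S_tail (N : ℕ) (hN : 0 < N) : Sc - ∑ l ∈ Finset.range N, Ll l ^ 2 ≤ 1 / (N:ℝ) := by
  have h := summable_S.sum_add_tsum_nat_add N
  have h2 : ∑' i, Ll (i + N) ^ 2 ≤ 1 / (N:ℝ) := by
    refine Real.tsum_le_of_sum_range_le (fun n => sq_nonneg _) fun n => ?_
    have : ∀ n : ℕ, ∑ i ∈ Finset.range n, Ll (i + N) ^ 2 ≤ 1 / (N:ℝ) - 1 / ((N:ℝ) + n) := by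
      intro n
      induction n with
      | zero => simp
      | succ n ih =>
        rw [Finset.sum_range_succ]
        have hN0 : (0:ℝ) < N := by exact_mod_cast hN
        have h3 : Ll (n + N) ^ 2 ≤ 1 / ((N:ℝ) + n) - 1 / ((N:ℝ) + (n + 1 : ℕ)) := by
          have h4 := Ll_le (n + N)
          have h5 : Ll (n + N) ^ 2 ≤ (1 / (((n + N : ℕ) : ℝ) + 1)) ^ 2 := pow_le_pow_left₀ (Ll_pos _).le h4 2
          refine h5.trans ?_
          push_cast
          rw [div_sub_div _ _ (by positivity) (by positivity), div_pow, div_le_div_iff₀ (by positivity) (by positivity)]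
          nlinarith
        linarith
    have h6 := this n
    have : 0 ≤ 1 / ((N:ℝ) + n) := by positivity
    linarith
  unfold Sc
  linarith

noncomputable def GY (Y : ℝ) (N : ℕ) : ℝ := ∑ q ∈ P1s N, ∑ l ∈ Finset.range N, max 0 (Ll l - q / Y)
noncomputable def HY (Y : ℝ) (N : ℕ) : ℝ := ∑ q ∈ P1s N, Real.log q * ∑ l ∈ Finset.range N, max 0 (Ll l - q / Y)

lemma P1s_mem {q N : ℕ} : q ∈ P1s N ↔ q < N ∧ q.Prime ∧ q % 4 = 1 := by
  simp [P1s]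

lemma P1s_five {q N : ℕ} (h : q ∈ P1s N) : 5 ≤ q := by
  rw [P1s_mem] at h
  obtain ⟨_, h1, h2⟩ := h
  have := h1.two_le
  omega

lemma psi_all : ∃ C : ℝ, 0 < C ∧ 
  (∀ y : ℝ, Real.exp 1 ≤ y → ∀ N : ℕ, y ≤ N →
    |∑ q ∈ P1s N, Real.log q * max 0 (y - q) - y ^ 2 / 4| ≤ C * y ^ 2 / Real.log y) ∧
  (∀ y : ℝ, 0 < y → ∀ N : ℕ, y ≤ N →
    |∑ q ∈ P1s N, Real.log q * max 0 (y - q) - y ^ 2 / 4| ≤ C * y ^ 2) := by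
  obtain ⟨C, hC0, hC⟩ := psi_bound
  refine ⟨C + 1, by linarith, fun y hy N hN => (hC y hy N hN).trans ?_, fun y hy N hN => ?_⟩
  · have hy0 : 0 < y := (Real.exp_pos 1).trans_le hy
    have hl1 : 1 ≤ Real.log y := by rwa [Real.le_log_iff_exp_le hy0]
    gcongr; linarith
  · rcases le_or_gt (Real.exp 1) y with h | h
    · have hl1 : 1 ≤ Real.log y := by rwa [Real.le_log_iff_exp_le hy]
      refine (hC y h N hN).trans ?_
      rw [div_le_iff₀ (by linarith)]
      have : 0 ≤ C * y ^ 2 := by positivity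
      have h2 : 0 ≤ y ^ 2 := by positivity
      nlinarith
    · have : ∑ q ∈ P1s N, Real.log q * max 0 (y - q) = 0 := by
        refine Finset.sum_eq_zero fun q hq => ?_
        have h5 : (5:ℝ) ≤ q := by exact_mod_cast P1s_five hq
        have := Real.exp_one_lt_d9
        rw [max_eq_left (by linarith), mul_zero]
      rw [this, zero_sub, abs_neg, abs_of_nonneg (by positivity)]
      nlinarith [sq_nonneg y]

lemma HY_est : ∃ K : ℝ, 0 < K ∧ ∀ Y : ℝ, Real.exp 2 ≤ Y → ∀ N : ℕ, Y ≤ N →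
    |HY Y N - Y * Sc / 4| ≤ K * Y / Real.log Y := by
  obtain ⟨C, hC0, hC1, hC2⟩ := psi_all
  set Q := ∑' l : ℕ, Ll l ^ (3/2 : ℝ) with hQ
  have hQ0 : 0 ≤ Q := tsum_nonneg fun l => Real.rpow_nonneg (Ll_pos l).le _
  refine ⟨4 * C * Q + 1, by positivity, fun Y hY N hN => ?_⟩
  have hY0 : 0 < Y := (Real.exp_pos 2).trans_le hY
  have hL2 : 2 ≤ Real.log Y := by rwa [Real.le_log_iff_exp_le hY0]
  have hL0 : 0 < Real.log Y := by linarith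
  have hN0 : 0 < N := by
    have : (0:ℝ) < N := by linarith
    exact_mod_cast this
  have e1 : HY Y N = ∑ l ∈ Finset.range N, (∑ q ∈ P1s N, Real.log q * max 0 (Y * Ll l - q)) / Y := by
    unfold HY
    simp only [Finset.mul_sum, Finset.sum_div]
    rw [Finset.sum_comm]
    refine Finset.sum_congr rfl fun l _ => Finset.sum_congr rfl fun q _ => ?_
    have : max 0 (Y * Ll l - q) = Y * max 0 (Ll l - q / Y) := by
      rw [mul_max_of_nonneg _ _ hY0.le]; congr 1
      · simp
      · field_simp
    rw [this]; field_simp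
  have key : ∀ l : ℕ, |(∑ q ∈ P1s N, Real.log q * max 0 (Y * Ll l - q)) / Y - Y * Ll l ^ 2 / 4| ≤
      4 * C * Y / Real.log Y * Ll l ^ (3/2 : ℝ) := by
    intro l
    have hl := Ll_pos l
    have hy0 : 0 < Y * Ll l := by positivity
    have hyN : Y * Ll l ≤ N := by have := Ll_le_one l; nlinarith
    have e : (∑ q ∈ P1s N, Real.log q * max 0 (Y * Ll l - q)) / Y - Y * Ll l ^ 2 / 4 =
        (∑ q ∈ P1s N, Real.log q * max 0 (Y * Ll l - q) - (Y * Ll l) ^ 2 / 4) / Y := by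
      field_simp
    rw [e, abs_div, abs_of_pos hY0, div_le_iff₀ hY0]
    rcases le_or_gt √Y (Y * Ll l) with h | h
    · have hsq : Real.exp 1 ≤ √Y := by
        apply Real.le_sqrt_of_sq_le
        rw [← Real.exp_nat_mul]; simpa using hY
      have h1 := hC1 _ (hsq.trans h) N hyN
      have h2 : Real.log Y / 2 ≤ Real.log (Y * Ll l) := by
        rw [← Real.log_sqrt hY0.le]
        exact Real.log_le_log (by positivity) h
      refine h1.trans ?_
      calc C * (Y * Ll l) ^ 2 / Real.log (Y * Ll l) ≤ C * (Y * Ll l) ^ 2 / (Real.log Y / 2) := by gcongr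
        _ = 2 * (C * Y / Real.log Y) * (Ll l) ^ 2 * Y := by field_simp
        _ ≤ 2 * (C * Y / Real.log Y) * (Ll l) ^ (3/2:ℝ) * Y := by gcongr; exact sq_le_Q l
        _ ≤ _ := by
          have : 0 ≤ (C * Y / Real.log Y) * (Ll l) ^ (3/2:ℝ) * Y := by positivity
          have e3 : 4 * C * Y / Real.log Y * Ll l ^ (3/2:ℝ) * Y = 4 * ((C * Y / Real.log Y) * (Ll l) ^ (3/2:ℝ) * Y) := by ring
          rw [e3]; linarith
    · refine (hC2 _ hy0 N hyN).trans ?_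
      have h1 : Ll l ≤ Y ^ (-(1/2):ℝ) := by
        have : Y * Y ^ (-(1/2):ℝ) = √Y := by
          rw [Real.sqrt_eq_rpow]
          nth_rw 1 [← Real.rpow_one Y]
          rw [← Real.rpow_add hY0]; norm_num
        rw [← this] at h
        exact (lt_of_mul_lt_mul_left h hY0.le).le
      have h2 : Ll l ^ (1/2:ℝ) ≤ Y ^ (-(1/4):ℝ) := by
        have := Real.rpow_le_rpow hl.le h1 (show (0:ℝ) ≤ 1/2 by norm_num)
        rw [← Real.rpow_mul hY0.le] at this
        norm_num at this ⊢; exact this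
      have h3 : Y ^ (-(1/4):ℝ) ≤ 4 / Real.log Y := by
        have := Real.log_le_rpow_div hY0.le (ε := 1/4) (by norm_num)
        rw [Real.rpow_neg hY0.le, le_div_iff₀ hL0, inv_mul_le_iff₀ (by positivity)]
        linarith
      have h4 : Ll l ^ 2 = Ll l ^ (3/2:ℝ) * Ll l ^ (1/2:ℝ) := by
        rw [← Real.rpow_add hl, ← Real.rpow_natCast]; norm_num
      calc C * (Y * Ll l) ^ 2 = C * Y ^ 2 * (Ll l ^ (3/2:ℝ) * Ll l ^ (1/2:ℝ)) := by rw [← h4]; ring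
        _ ≤ C * Y ^ 2 * (Ll l ^ (3/2:ℝ) * (4 / Real.log Y)) := by gcongr; exact h2.trans h3
        _ = _ := by ring
  have hsum : |HY Y N - ∑ l ∈ Finset.range N, Y * Ll l ^ 2 / 4| ≤ 4 * C * Y / Real.log Y * Q := by
    rw [e1, ← Finset.sum_sub_distrib]
    refine (Finset.abs_sum_le_sum_abs _ _).trans ((Finset.sum_le_sum fun l _ => key l).trans ?_)
    rw [← Finset.mul_sum]
    gcongr
    exact summable_Q.sum_le_tsum _ fun l _ => Real.rpow_nonneg (Ll_pos l).le _
  have htail := S_tail N hN0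
  have hle : ∑ l ∈ Finset.range N, Ll l ^ 2 ≤ Sc := summable_S.sum_le_tsum _ fun l _ => sq_nonneg _
  have e5 : ∑ l ∈ Finset.range N, Y * Ll l ^ 2 / 4 = Y / 4 * ∑ l ∈ Finset.range N, Ll l ^ 2 := by
    rw [Finset.mul_sum]; refine Finset.sum_congr rfl fun l _ => by ring
  rw [e5] at hsum
  have h7 : Y / 4 * (Sc - ∑ l ∈ Finset.range N, Ll l ^ 2) ≤ 1 / 4 := by
    calc _ ≤ Y / 4 * (1 / (N:ℝ)) := by gcongr
      _ ≤ (N:ℝ) / 4 * (1 / N) := by gcongr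
      _ = 1 / 4 := by field_simp
  have h8 : 0 ≤ Y / 4 * (Sc - ∑ l ∈ Finset.range N, Ll l ^ 2) := mul_nonneg (by positivity) (by linarith)
  have h9 : 1 ≤ Y / Real.log Y := by
    rw [le_div_iff₀ hL0]; have := Real.log_le_sub_one_of_pos hY0; linarith
  have e6 : (4 * C * Q + 1) * Y / Real.log Y = 4 * C * Y / Real.log Y * Q + Y / Real.log Y := by ring
  rw [e6]
  rw [abs_le] at hsum ⊢
  constructor <;> nlinarith [hsum.1, hsum.2]

end PNT4

namespace PNT4

lemma inner_zero {Y : ℝ} (hY : 0 < Y) {q : ℕ} (hq : Y ≤ q) (l : ℕ) : max 0 (Ll l - q / Y) = 0 := by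
  have h1 : 1 ≤ (q:ℝ) / Y := by rwa [le_div_iff₀ hY, one_mul]
  have := Ll_le_one l
  exact max_eq_left (by linarith)

lemma HY_le {Y : ℝ} (hY : 1 ≤ Y) (N : ℕ) : HY Y N ≤ Real.log Y * GY Y N := by
  unfold HY GY
  rw [Finset.mul_sum]
  refine Finset.sum_le_sum fun q hq => ?_
  rcases le_or_gt Y q with h | h
  · simp [inner_zero (by linarith : 0 < Y) h]
  · have h5 : (5:ℝ) ≤ q := by exact_mod_cast P1s_five hq
    exact mul_le_mul_of_nonneg_right (Real.log_le_log (by linarith) h.le)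
      (Finset.sum_nonneg fun l _ => le_max_left _ _)

lemma inner_le {Y : ℝ} (hY : 2 ≤ Y) {q : ℕ} (hq : 1 ≤ q) (N : ℕ) :
    ∑ l ∈ Finset.range N, max 0 (Ll l - q / Y) ≤ 2 * Real.log Y := by
  have hq1 : (1:ℝ) ≤ q := by exact_mod_cast hq
  have hY0 : 0 < Y := by linarith
  set M := ⌊Y⌋₊
  have h1 : ∀ l ∈ Finset.range N, max 0 (Ll l - q / Y) ≤ if l < M then Ll l else 0 := by
    intro l _
    have h0 : 0 ≤ (q:ℝ) / Y := by positivity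
    split_ifs with h
    · exact max_le (Ll_pos l).le (by linarith)
    · refine max_le le_rfl ?_
      have h2 : Y < (l:ℝ) + 1 := by
        have := Nat.lt_floor_add_one Y
        have h3 : (M:ℝ) ≤ l := by exact_mod_cast not_lt.1 h
        linarith
      have h3 := Ll_le l
      have h4 : 1 / ((l:ℝ) + 1) ≤ q / Y := by gcongr
      linarith
  refine (Finset.sum_le_sum h1).trans ?_
  rw [← Finset.sum_filter]
  calc _ ≤ ∑ l ∈ Finset.range M, Ll l := by
        refine Finset.sum_le_sum_of_subset_of_nonneg (fun l hl => ?_) fun l _ _ => (Ll_pos l).le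
        simp at hl ⊢; exact hl.2
    _ = Real.log (M + 1) := Ll_sum M
    _ ≤ Real.log (Y ^ 2) := by
        have := Nat.floor_le hY0.le
        apply Real.log_le_log (by positivity)
        have : (M:ℝ) ≤ Y := this
        nlinarith
    _ = _ := by rw [Real.log_pow]; norm_num

lemma GY_est : ∃ K : ℝ, 0 < K ∧ ∀ Y : ℝ, Real.exp 2 ≤ Y → 1 ≤ Real.log (Real.log Y) →
    6 * Real.log (Real.log Y) ≤ Real.log Y → ∀ N : ℕ, Y ≤ N →
    Y * Sc / (4 * Real.log Y) - K * Y / Real.log Y ^ 2 ≤ GY Y N ∧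
    GY Y N ≤ Y * Sc / (4 * Real.log Y) + K * Y * Real.log (Real.log Y) / Real.log Y ^ 2 := by
  obtain ⟨K, hK0, hK⟩ := HY_est
  have hS := Sc_pos
  refine ⟨2 * Sc + 2 * K + 2, by positivity, fun Y hY hl1 hl6 N hN => ?_⟩
  have hY0 : 0 < Y := (Real.exp_pos 2).trans_le hY
  have hY2 : 2 ≤ Y := by have := Real.add_one_le_exp 2; linarith
  have hH := abs_le.1 (hK Y hY N hN)
  set L := Real.log Y with hL
  set ℓ := Real.log L with hℓ
  have hL0 : 0 < L := by linarith
  constructor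
  · have h1 := HY_le (by linarith : 1 ≤ Y) N
    rw [← hL] at h1
    have h2 : HY Y N / L ≤ GY Y N := by rw [div_le_iff₀ hL0]; linarith
    have h3 : (Y * Sc / 4 - K * Y / L) / L ≤ HY Y N / L := by gcongr; linarith
    have h4 : (Y * Sc / 4 - K * Y / L) / L = Y * Sc / (4 * L) - K * Y / L ^ 2 := by field_simp
    have h5 : K * Y / L ^ 2 ≤ (2 * Sc + 2 * K + 2) * Y / L ^ 2 := by gcongr; linarith
    linarith
  · set D := L - 3 * ℓ with hD
    have hD0 : 0 < D := by linarith
    have hlogL : Real.log (Y / L ^ 3) = D := by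
      rw [Real.log_div hY0.ne' (by positivity), Real.log_pow]; push_cast; rfl
    have h1 : GY Y N ≤ HY Y N / D + ∑ q ∈ P1s N, if (q:ℝ) < Y / L ^ 3 then 2 * L else 0 := by
      unfold GY HY
      rw [Finset.sum_div, ← Finset.sum_add_distrib]
      refine Finset.sum_le_sum fun q hq => ?_
      have h5 : (5:ℝ) ≤ q := by exact_mod_cast P1s_five hq
      have hn : 0 ≤ ∑ l ∈ Finset.range N, max 0 (Ll l - q / Y) := Finset.sum_nonneg fun l _ => le_max_left _ _
      split_ifs with h
      · have h2 := inner_le hY2 (q := q) (by have := P1s_five hq; omega) N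
        have h3 : 0 ≤ Real.log q * ∑ l ∈ Finset.range N, max 0 (Ll l - q / Y) / D := by
          have : 0 ≤ Real.log q := Real.log_nonneg (by linarith)
          refine mul_nonneg this (Finset.sum_nonneg fun l _ => div_nonneg (le_max_left _ _) hD0.le)
        rw [← Finset.sum_div, ← mul_div_assoc] at h3
        linarith
      · have h2 : D ≤ Real.log q := by
          rw [← hlogL]; exact Real.log_le_log (by positivity) (not_lt.1 h)
        rw [add_zero, le_div_iff₀ hD0, mul_comm]
        gcongr
    have h2 : (∑ q ∈ P1s N, if (q:ℝ) < Y / L ^ 3 then 2 * L else 0) ≤ 2 * Y / L ^ 2 := by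
      rw [← Finset.sum_filter, Finset.sum_const, nsmul_eq_mul]
      have hc : (((P1s N).filter (fun q : ℕ => (q:ℝ) < Y / L ^ 3)).card : ℝ) ≤ Y / L ^ 3 := by
        have hsub : ((P1s N).filter (fun q : ℕ => (q:ℝ) < Y / L ^ 3)) ⊆ Finset.Ioc 0 ⌊Y / L ^ 3⌋₊ := by
          intro q hq
          rw [Finset.mem_filter] at hq
          rw [Finset.mem_Ioc]
          refine ⟨by have := P1s_five hq.1; omega, Nat.le_floor hq.2.le⟩
        have h3 := Finset.card_le_card hsub
        rw [Nat.card_Ioc, Nat.sub_zero] at h3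
        have h4 : (⌊Y / L ^ 3⌋₊ : ℝ) ≤ Y / L ^ 3 := Nat.floor_le (by positivity)
        exact (Nat.cast_le.2 h3).trans h4
      calc _ ≤ Y / L ^ 3 * (2 * L) := by gcongr
        _ = _ := by field_simp
    have h3 : HY Y N / D ≤ (Y * Sc / 4 + K * Y / L) * (1 / L * (1 + 6 * ℓ / L)) := by
      have hHn : 0 ≤ Y * Sc / 4 + K * Y / L := by positivity
      have h4 : 1 / D ≤ 1 / L * (1 + 6 * ℓ / L) := by
        have e : 1 / L * (1 + 6 * ℓ / L) = (L + 6 * ℓ) / L ^ 2 := by field_simp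
        rw [e, div_le_div_iff₀ hD0 (by positivity)]
        nlinarith
      calc HY Y N / D = HY Y N * (1 / D) := by ring
        _ ≤ (Y * Sc / 4 + K * Y / L) * (1 / D) := by
          apply mul_le_mul_of_nonneg_right (by linarith) (by positivity)
        _ ≤ _ := by gcongr
    have h4 : (Y * Sc / 4 + K * Y / L) * (1 / L * (1 + 6 * ℓ / L)) =
       Y * Sc / (4 * L) + (3 / 2 * Sc * ℓ + K * (1 + 6 * ℓ / L)) * (Y / L ^ 2) := by
      field_simp; ring
    have h5 : 6 * ℓ / L ≤ 1 := by rw [div_le_one hL0]; exact hl6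
    have h6 : (3 / 2 * Sc * ℓ + K * (1 + 6 * ℓ / L)) * (Y / L ^ 2) ≤ ((2 * Sc + 2 * K) * ℓ) * (Y / L ^ 2) := by
      gcongr
      nlinarith
    have h7 : 2 * (Y / L ^ 2) ≤ 2 * ℓ * (Y / L ^ 2) := by gcongr; linarith
    have e8 : (2 * Sc + 2 * K + 2) * Y * ℓ / L ^ 2 = ((2 * Sc + 2 * K) * ℓ) * (Y / L ^ 2) + 2 * ℓ * (Y / L ^ 2) := by ring
    have e9 : 2 * Y / L ^ 2 = 2 * (Y / L ^ 2) := by ring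
    linarith

lemma count_P1 : ∃ Y0 : ℝ, 3 ≤ Y0 ∧ ∀ y : ℝ, Y0 ≤ y → ∀ N : ℕ, y ≤ N →
    y / (5 * Real.log y) ≤ ((P1s N).filter (fun q : ℕ => (q:ℝ) < y)).card := by
  obtain ⟨C, hC0, hC⟩ := psi_bound
  refine ⟨max 3 (Real.exp (20 * C + 1)), le_max_left _ _, fun y hy N hN => ?_⟩
  have hy3 : 3 ≤ y := (le_max_left _ _).trans hy
  have hye := (le_max_right _ _).trans hy
  have hy0 : 0 < y := by linarith
  have hl : 20 * C + 1 ≤ Real.log y := by rwa [Real.le_log_iff_exp_le hy0]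
  have hl0 : 0 < Real.log y := by linarith
  have h1 := abs_le.1 (hC y (le_trans (Real.exp_le_exp.2 (by linarith)) hye) N hN)
  have h2 : C * y ^ 2 / Real.log y ≤ y ^ 2 / 20 := by
    rw [div_le_div_iff₀ hl0 (by norm_num)]
    nlinarith [sq_nonneg y]
  have h3 : ∑ q ∈ P1s N, Real.log q * max 0 (y - q) ≤
      ∑ q ∈ P1s N, if (q:ℝ) < y then Real.log y * y else 0 := by
    refine Finset.sum_le_sum fun q hq => ?_
    have h5 : (5:ℝ) ≤ q := by exact_mod_cast P1s_five hq
    split_ifs with h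
    · rw [max_eq_right (by linarith)]
      gcongr; linarith
    · rw [max_eq_left (by linarith), mul_zero]
  rw [← Finset.sum_filter, Finset.sum_const, nsmul_eq_mul] at h3
  rw [div_le_iff₀ (by positivity)]
  have h4 : y ^ 2 / 5 ≤ (((P1s N).filter (fun q : ℕ => (q:ℝ) < y)).card : ℝ) * (Real.log y * y) := by linarith
  nlinarith

end PNT4

namespace PNT4

lemma fr_eq (n : ℕ) {S : Finset ℕ} (hS : n.primeFactors ⊆ S) :
    fr n = ∏ p ∈ S, if p % 4 = 1 then n.factorization p + 1 else 1 := by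
  unfold fr
  rw [Finsupp.prod_of_support_subset _ (s := S) (by rwa [Nat.support_factorization])]
  intro i _; split_ifs <;> rfl

lemma fr_pos (n : ℕ) : 0 < fr n := by
  rw [fr_eq n subset_rfl]
  refine Finset.prod_pos fun p _ => ?_
  split_ifs <;> omega

lemma fr_submul {a b : ℕ} (ha : a ≠ 0) (hb : b ≠ 0) : fr (a * b) ≤ fr a * fr b := by
  rw [fr_eq (a * b) (S := a.primeFactors ∪ b.primeFactors) (by rw [Nat.primeFactors_mul ha hb]),
    fr_eq a (S := a.primeFactors ∪ b.primeFactors) Finset.subset_union_left,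
    fr_eq b (S := a.primeFactors ∪ b.primeFactors) Finset.subset_union_right, ← Finset.prod_mul_distrib]
  refine Finset.prod_le_prod' fun p _ => ?_
  rw [Nat.factorization_mul ha hb]
  split_ifs
  · simp only [Finsupp.add_apply]; nlinarith [Nat.zero_le (a.factorization p * b.factorization p)]
  · simp

lemma fr_le {n : ℕ} (hn : n ≠ 0) : fr n ≤ n := by
  conv_rhs => rw [← Nat.prod_factorization_pow_eq_self hn]
  unfold fr Finsupp.prod
  refine Finset.prod_le_prod' fun p hp => ?_
  have hpp : p.Prime := Nat.prime_of_mem_primeFactors (by simpa using hp)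
  have h1 : n.factorization p + 1 ≤ p ^ n.factorization p := Nat.lt_pow_self hpp.one_lt
  beta_reduce
  split_ifs
  · exact h1
  · exact Nat.one_le_pow _ _ hpp.pos

def ww (n : ℕ) : ℕ := n.factorization.sum fun q v => v * (q - 1)

lemma ww_mul {a b : ℕ} (ha : a ≠ 0) (hb : b ≠ 0) : ww (a * b) = ww a + ww b := by
  unfold ww
  rw [Nat.factorization_mul ha hb, Finsupp.sum_add_index']
  · simp
  · intro p x y; ring

lemma ww_le (n : ℕ) (hn : n ≠ 0) : ww n + 1 ≤ n := by
  induction n using induction_on_primes with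
  | zero => exact absurd rfl hn
  | one => simp [ww]
  | prime_mul p a hp ih =>
    have ha : a ≠ 0 := fun h => hn (by simp [h])
    have h1 := ih ha
    rw [ww_mul hp.ne_zero ha]
    have h2 : ww p = p - 1 := by simp [ww, hp.factorization]
    have hp2 := hp.two_le
    obtain ⟨k, rfl⟩ := Nat.exists_eq_add_of_le hp2
    have : 2 + k - 1 = k + 1 := by omega
    rw [h2, this]
    nlinarith

lemma ww_prod {ι : Type*} (s : Finset ι) (f : ι → ℕ) : ww (∏ i ∈ s, (f i + 1)) ≤ ∑ i ∈ s, f i := by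
  classical
  induction s using Finset.induction_on with
  | empty => simp [ww]
  | insert a s ha ih =>
    rw [Finset.prod_insert ha, Finset.sum_insert ha, ww_mul (by omega) (Finset.prod_ne_zero_iff.2 fun i _ => by omega)]
    have := ww_le (f a + 1) (by omega)
    omega

lemma harm_le (N : ℕ) : ∑ l ∈ Finset.range N, 1 / ((l:ℝ) + 1) ≤ 1 + Real.log N := by
  have := harmonic_le_one_add_log N
  unfold harmonic at this
  push_cast at this
  simpa using this

lemma dual {M : ℕ} {Y : ℝ} (hY : 1 ≤ Y) {N : ℕ} (hN : Y + 1 ≤ N) :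
    Real.log (fr M) ≤ GY Y N + (1 + Real.log N) ^ 2 + ww M / Y := by
  have hY0 : 0 < Y := by linarith
  set F := M.primeFactors.filter (fun p => p % 4 = 1) with hF
  have e1 : Real.log (fr M) = ∑ q ∈ F, Real.log (M.factorization q + 1) := by
    rw [fr_eq M subset_rfl, ← Finset.prod_filter]
    push_cast
    rw [Real.log_prod]
    intro i _; positivity
  have e2 : (ww M : ℝ) / Y ≥ ∑ q ∈ F, M.factorization q * ((q:ℝ) - 1) / Y := by
    unfold ww Finsupp.sum
    push_cast
    rw [Finset.sum_div, Nat.support_factorization]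
    have : ∀ q ∈ M.primeFactors, (((q - 1 : ℕ)) : ℝ) = (q:ℝ) - 1 := fun q hq => by
      rw [Nat.cast_sub (Nat.prime_of_mem_primeFactors hq).one_le]; simp
    calc _ = ∑ q ∈ F, (M.factorization q : ℝ) * (((q - 1 : ℕ)) : ℝ) / Y := by
          refine Finset.sum_congr rfl fun q hq => ?_
          rw [this q (Finset.filter_subset _ _ hq)]
      _ ≤ _ := Finset.sum_le_sum_of_subset_of_nonneg (Finset.filter_subset _ _) fun i _ _ => by positivity
  have h5F : ∀ q ∈ F, 5 ≤ q := fun q hq => by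
    rw [hF, Finset.mem_filter] at hq
    have := (Nat.prime_of_mem_primeFactors hq.1).two_le
    omega
  let g : ℕ → ℝ := fun q => ∑ l ∈ Finset.range N, max 0 (Ll l - ((q:ℝ) - 1) / Y)
  have hg : ∀ q, 0 ≤ g q := fun q => Finset.sum_nonneg fun l _ => le_max_left _ _
  have h1 : ∀ q ∈ F, Real.log (M.factorization q + 1) ≤
      (if q < N then g q else 0) + M.factorization q * ((q:ℝ) - 1) / Y := by
    intro q hq
    have h5 : (5:ℝ) ≤ q := by exact_mod_cast h5F q hq
    set b := M.factorization q
    split_ifs with h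
    · rw [← Ll_sum b]
      have h2 : ∑ l ∈ Finset.range b, Ll l ≤ ∑ l ∈ Finset.range b, (max 0 (Ll l - ((q:ℝ) - 1) / Y) + ((q:ℝ) - 1) / Y) := by
        refine Finset.sum_le_sum fun l _ => ?_
        have := le_max_right 0 (Ll l - ((q:ℝ) - 1) / Y)
        linarith
      rw [Finset.sum_add_distrib, Finset.sum_const, nsmul_eq_mul, Finset.card_range] at h2
      have h3 : ∑ l ∈ Finset.range b, max 0 (Ll l - ((q:ℝ) - 1) / Y) ≤ g q := by
        have h4 : ∑ l ∈ Finset.range b, max 0 (Ll l - ((q:ℝ) - 1) / Y) =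
          ∑ l ∈ (Finset.range b).filter (fun l => l < N), max 0 (Ll l - ((q:ℝ) - 1) / Y) := by
          symm
          apply Finset.sum_subset (Finset.filter_subset _ _)
          intro l hl hl2
          have hlN : N ≤ l := by
            by_contra hh
            exact hl2 (Finset.mem_filter.2 ⟨hl, by omega⟩)
          have hlN' : (N:ℝ) ≤ l := by exact_mod_cast hlN
          apply max_eq_left
          have h6 := Ll_le l
          have h7 : 1 / ((l:ℝ) + 1) ≤ ((q:ℝ) - 1) / Y := by
            apply div_le_div₀ <;> linarith
          linarith
        rw [h4]
        refine Finset.sum_le_sum_of_subset_of_nonneg (fun l hl => ?_) fun l _ _ => le_max_left _ _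
        simp at hl ⊢; exact hl.2
      have e : (b:ℝ) * ((q:ℝ) - 1) / Y = b * (((q:ℝ) - 1) / Y) := by ring
      rw [e]; linarith
    · have hq' : (N:ℝ) ≤ q := by exact_mod_cast not_lt.1 h
      have h2 := Real.log_le_sub_one_of_pos (x := (b:ℝ) + 1) (by positivity)
      have h3 : (b:ℝ) * 1 ≤ b * (((q:ℝ) - 1) / Y) := by
        gcongr
        rw [le_div_iff₀ hY0]; linarith
      have e : (b:ℝ) * ((q:ℝ) - 1) / Y = b * (((q:ℝ) - 1) / Y) := by ring
      rw [e]; linarith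
  have h2 : ∑ q ∈ F, (if q < N then g q else 0) ≤ ∑ q ∈ P1s N, g q := by
    rw [← Finset.sum_filter]
    refine Finset.sum_le_sum_of_subset_of_nonneg (fun q hq => ?_) fun q _ _ => hg q
    rw [Finset.mem_filter, hF, Finset.mem_filter] at hq
    exact P1s_mem.2 ⟨hq.2, Nat.prime_of_mem_primeFactors hq.1.1, hq.1.2⟩
  have h3 : ∑ q ∈ P1s N, g q ≤ GY Y N + (1 + Real.log N) ^ 2 := by
    have h4 : ∀ q ∈ P1s N, g q ≤ ∑ l ∈ Finset.range N, max 0 (Ll l - (q:ℝ) / Y) +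
        1 / ((q:ℝ) - 1) * ∑ l ∈ Finset.range N, 1 / ((l:ℝ) + 1) := by
      intro q hq
      have h5 : (5:ℝ) ≤ q := by exact_mod_cast P1s_five hq
      rw [Finset.mul_sum, ← Finset.sum_add_distrib]
      refine Finset.sum_le_sum fun l _ => ?_
      have hm := le_max_left 0 (Ll l - (q:ℝ) / Y)
      have hm2 := le_max_right 0 (Ll l - (q:ℝ) / Y)
      have hp : 0 ≤ 1 / ((q:ℝ) - 1) * (1 / ((l:ℝ) + 1)) :=
        mul_nonneg (div_nonneg zero_le_one (by linarith)) (by positivity)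
      refine max_le (by linarith) ?_
      rcases le_or_gt (Ll l) (((q:ℝ) - 1) / Y) with h | h
      · linarith
      · have h6 := Ll_le l
        have h7 : ((q:ℝ) - 1) / Y < 1 / ((l:ℝ) + 1) := by linarith
        have h8 : 1 / Y ≤ 1 / ((q:ℝ) - 1) * (1 / ((l:ℝ) + 1)) := by
          have hq1 : 0 < (q:ℝ) - 1 := by linarith
          calc 1 / Y = 1 / ((q:ℝ) - 1) * (((q:ℝ) - 1) / Y) := by field_simp
            _ ≤ _ := by gcongr
        have e : ((q:ℝ) - 1) / Y = q / Y - 1 / Y := by ring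
        rw [e]; linarith
    have hN1 : 1 ≤ N := by
      have : (1:ℝ) ≤ N := by linarith
      exact_mod_cast this
    have hlogN : 0 ≤ Real.log N := Real.log_natCast_nonneg N
    have h5 : ∑ q ∈ P1s N, 1 / ((q:ℝ) - 1) ≤ 1 + Real.log N := by
      refine le_trans ?_ (harm_le N)
      calc ∑ q ∈ P1s N, 1 / ((q:ℝ) - 1) = ∑ q ∈ P1s N, (fun l : ℕ => 1 / ((l:ℝ) + 1)) (q - 2) := by
            refine Finset.sum_congr rfl fun q hq => ?_
            have := P1s_five hq
            simp only []
            rw [Nat.cast_sub (by omega)]; push_cast; congr 1; ring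
        _ = ∑ l ∈ (P1s N).image (fun q : ℕ => q - 2), (fun l : ℕ => 1 / ((l:ℝ) + 1)) l := by
            rw [Finset.sum_image]
            intro a ha b hb hab
            have h1 := P1s_five ha
            have h2 := P1s_five hb
            simp only [] at hab
            omega
        _ ≤ _ := by
            refine Finset.sum_le_sum_of_subset_of_nonneg (fun l hl => ?_) fun l _ _ => by positivity
            simp only [Finset.mem_image] at hl
            obtain ⟨q, hq, rfl⟩ := hl
            have := (P1s_mem.1 hq).1
            simp; omega
    refine (Finset.sum_le_sum h4).trans ?_
    rw [Finset.sum_add_distrib, ← Finset.sum_mul]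
    have h6 := harm_le N
    have h7 : 0 ≤ ∑ l ∈ Finset.range N, 1 / ((l:ℝ) + 1) := Finset.sum_nonneg fun l _ => by positivity
    have h8 : (∑ q ∈ P1s N, 1 / ((q:ℝ) - 1)) * ∑ l ∈ Finset.range N, 1 / ((l:ℝ) + 1) ≤ (1 + Real.log N) * (1 + Real.log N) := by
      gcongr
    unfold GY
    linarith [sq (1 + Real.log N)]
  have h4 := Finset.sum_le_sum h1
  rw [Finset.sum_add_distrib, ← e1] at h4
  linarith

lemma r2_zero : r2 0 = 1 := by
  rw [r2_eq]
  have : SG 0 = {0} := by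
    ext z
    simp only [SG, Set.mem_ofPred_eq, Set.mem_singleton_iff]
    rw [norm_eq']
    constructor
    · intro h
      have h1 := sq_nonneg z.re
      have h2 := sq_nonneg z.im
      push_cast at h
      ext
      · exact pow_eq_zero_iff (two_ne_zero) |>.1 (by linarith)
      · exact pow_eq_zero_iff (two_ne_zero) |>.1 (by linarith)
    · rintro rfl; simp
  rw [this, Set.ncard_singleton]

lemma log_r2_le {m : ℕ} (hm : m ≠ 0) : Real.log (r2 m) ≤ Real.log 4 + Real.log (fr m) := by
  have hp : (1:ℝ) ≤ fr m := by exact_mod_cast fr_pos m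
  have hl4 : 0 ≤ Real.log 4 := Real.log_nonneg (by norm_num)
  rcases (r2_formula m hm).1 with h | h
  · rw [h]; simp
    have := Real.log_nonneg hp
    linarith
  · rw [h]; push_cast
    rw [Real.log_mul (by norm_num) (by linarith)]

lemma log_r2r2_le {n : ℕ} (hn : n ≠ 0) : Real.log (r2 (r2 n)) ≤ Real.log 4 + Real.log (fr (fr n)) := by
  have hp : (1:ℝ) ≤ fr (fr n) := by exact_mod_cast fr_pos _
  have hl4 : 0 ≤ Real.log 4 := Real.log_nonneg (by norm_num)
  rcases (r2_formula n hn).1 with h | h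
  · rw [h, r2_zero]; simp
    have := Real.log_nonneg hp
    linarith
  · have : r2 (r2 n) = r2 (fr n) := by
      rw [h, show 4 * fr n = 2 * (2 * fr n) by ring, r2_two, r2_two]
    rw [this]
    exact log_r2_le (fr_pos n).ne'

lemma upper_core {n : ℕ} (hn : n ≠ 0) {X z Y : ℝ} (hX : Real.log n ≤ X) (hz : 1 < z) (hY : 1 ≤ Y)
    {N : ℕ} (hN : Y + 1 ≤ N) :
    Real.log (r2 (r2 n)) ≤ Real.log 4 + z * Real.log (X + 1) + GY Y N + (1 + Real.log N) ^ 2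
      + X / Real.log z / Y := by
  have hX0 : 0 ≤ X := (Real.log_natCast_nonneg n).trans hX
  have hlz : 0 < Real.log z := Real.log_pos hz
  have h0 := log_r2r2_le hn
  set a := n.factorization with ha
  set F := n.primeFactors.filter (fun p => p % 4 = 1) with hF
  set A := ∏ p ∈ F.filter (fun p : ℕ => (p:ℝ) < z), (a p + 1) with hA
  set B := ∏ p ∈ F.filter (fun p : ℕ => ¬ (p:ℝ) < z), (a p + 1) with hB
  have hA0 : A ≠ 0 := Finset.prod_ne_zero_iff.2 fun i _ => by omega
  have hB0 : B ≠ 0 := Finset.prod_ne_zero_iff.2 fun i _ => by omega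
  have e1 : fr n = A * B := by
    rw [fr_eq n subset_rfl, ← Finset.prod_filter, hA, hB, Finset.prod_filter_mul_prod_filter_not]
  have h1 : fr (fr n) ≤ A * fr B := by
    rw [e1]
    exact (fr_submul hA0 hB0).trans (Nat.mul_le_mul_right _ (fr_le hA0))
  have h2 : Real.log (fr (fr n)) ≤ Real.log A + Real.log (fr B) := by
    have hp := fr_pos B
    have hq := fr_pos (fr n)
    rw [← Real.log_mul (by exact_mod_cast hA0) (by exact_mod_cast hp.ne')]
    exact Real.log_le_log (by exact_mod_cast hq) (by exact_mod_cast h1)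
  have e3 : ∑ p ∈ n.primeFactors, (a p : ℝ) * Real.log p ≤ X := by
    have := Real.log_nat_eq_sum_factorization n
    rw [this] at hX
    simpa [Finsupp.sum, Nat.support_factorization] using hX
  have hFp : ∀ p ∈ F, p ∈ n.primeFactors ∧ 5 ≤ p := fun p hq => by
    rw [hF, Finset.mem_filter] at hq
    have := (Nat.prime_of_mem_primeFactors hq.1).two_le
    exact ⟨hq.1, by omega⟩
  have hnn : ∀ p ∈ n.primeFactors, 0 ≤ (a p : ℝ) * Real.log p := fun p _ => 
    mul_nonneg (by positivity) (Real.log_natCast_nonneg p)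
  have h3 : Real.log A ≤ z * Real.log (X + 1) := by
    rw [hA]; push_cast
    rw [Real.log_prod (by intro i _; positivity)]
    have h4 : ∀ p ∈ F.filter (fun p : ℕ => (p:ℝ) < z), Real.log ((a p:ℝ) + 1) ≤ Real.log (X + 1) := by
      intro p hp
      obtain ⟨hp1, hp5⟩ := hFp p (Finset.filter_subset _ _ hp)
      have h5 := (Finset.single_le_sum hnn hp1).trans e3
      have h6 : 1 ≤ Real.log p := by
        rw [Real.le_log_iff_exp_le (by positivity)]
        have := Real.exp_one_lt_d9
        have : (5:ℝ) ≤ p := by exact_mod_cast hp5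
        linarith
      have h7 : (0:ℝ) ≤ a p := by positivity
      apply Real.log_le_log (by positivity)
      nlinarith
    refine (Finset.sum_le_card_nsmul _ _ _ h4).trans ?_
    rw [nsmul_eq_mul]
    have hc : ((F.filter (fun p : ℕ => (p:ℝ) < z)).card : ℝ) ≤ z := by
      have hsub : (F.filter (fun p : ℕ => (p:ℝ) < z)) ⊆ Finset.Ioc 0 ⌊z⌋₊ := by
        intro q hq
        rw [Finset.mem_filter] at hq
        rw [Finset.mem_Ioc]
        refine ⟨by have := (hFp q hq.1).2; omega, Nat.le_floor hq.2.le⟩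
      have h3 := Finset.card_le_card hsub
      rw [Nat.card_Ioc, Nat.sub_zero] at h3
      exact (Nat.cast_le.2 h3).trans (Nat.floor_le (by linarith))
    have : 0 ≤ Real.log (X + 1) := Real.log_nonneg (by linarith)
    gcongr
  have h4 := dual (M := B) hY hN
  have h5 : (ww B : ℝ) ≤ X / Real.log z := by
    have h6 : (ww B : ℝ) ≤ ∑ p ∈ F.filter (fun p : ℕ => ¬ (p:ℝ) < z), (a p : ℝ) := by
      exact_mod_cast ww_prod _ _
    refine h6.trans ?_
    rw [le_div_iff₀ hlz, Finset.sum_mul]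
    refine le_trans ?_ e3
    calc _ ≤ ∑ p ∈ F.filter (fun p : ℕ => ¬ (p:ℝ) < z), (a p : ℝ) * Real.log p := by
          refine Finset.sum_le_sum fun p hp => ?_
          rw [Finset.mem_filter] at hp
          have := Real.log_le_log (by linarith) (not_lt.1 hp.2)
          gcongr
      _ ≤ _ := Finset.sum_le_sum_of_subset_of_nonneg
          ((Finset.filter_subset _ _).trans (Finset.filter_subset _ _)) fun p hp _ => hnn p hp
  have h6 : (ww B : ℝ) / Y ≤ X / Real.log z / Y := by gcongr
  linarith

end PNT4

namespace PNT4

lemma ev_log (c : ℝ) (hc : 0 < c) : ∀ᶠ u : ℝ in atTop, Real.log u ≤ c * u := by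
  have := Real.isLittleO_log_id_atTop.bound hc
  filter_upwards [this, eventually_ge_atTop 1] with u h h1
  simp only [Real.norm_eq_abs, id] at h
  rw [abs_of_nonneg (Real.log_nonneg h1), abs_of_nonneg (by linarith)] at h
  exact h

set_option maxHeartbeats 1000000 in
lemma upper_asym : ∃ C : ℝ, 0 < C ∧ ∀ᶠ X : ℝ in atTop, ∀ n : ℕ, n ≠ 0 → Real.log n ≤ X →
    Real.log (r2 (r2 n)) ≤ √X / Real.log X * (2 * √Sc) +
      C * (√X / Real.log X) * (Real.log (Real.log X) / Real.log X) := by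
  obtain ⟨K, hK0, hK⟩ := GY_est
  set s := √Sc with hs
  have hs0 : 0 < s := Real.sqrt_pos.2 Sc_pos
  have hss : s ^ 2 = Sc := Real.sq_sqrt Sc_pos.le
  set d := Real.log (2 / s) with hd
  refine ⟨4 * s * |d| + 12 * s + 32 * K / s + 2 + 1, by positivity, ?_⟩
  have hu : Tendsto Real.log atTop atTop := Real.tendsto_log_atTop
  filter_upwards [eventually_ge_atTop 2, hu.eventually (ev_log (1/24) (by norm_num)),
    hu.eventually_ge_atTop (4 * |d|), hu.eventually_ge_atTop 50000] with X hX2 hl24 hud hu5 n hn hnX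
  set u := Real.log X with hudef
  set g := Real.log u with hg
  have hX0 : 0 < X := by linarith
  have hu0 : 0 < u := by linarith
  have hR0 : 0 < √X := Real.sqrt_pos.2 hX0
  have hRu : √X = Real.exp (u / 2) := by
    rw [← Real.exp_log hR0, Real.log_sqrt hX0.le]
  have hexp : 11 * u ^ 4 ≤ √X := by
    rw [hRu]
    have := Real.pow_div_factorial_le_exp (u/2) (by linarith) 5
    refine le_trans ?_ this
    rw [show (Nat.factorial 5 : ℝ) = 120 by norm_num [Nat.factorial]]
    have : 0 ≤ u ^ 4 := by positivity
    have e : (u/2)^5/120 = u ^ 4 * (u / 3840) := by ring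
    rw [e]; nlinarith only [this, hu5]
  have hg1 : 1 ≤ g := by
    rw [hg, Real.le_log_iff_exp_le hu0]
    have := Real.exp_one_lt_d9; linarith
  set Y := 2 / s * √X with hYdef
  have hY0 : 0 < Y := by positivity
  have hL : Real.log Y = u / 2 + d := by
    rw [hYdef, Real.log_mul (by positivity) (by positivity), Real.log_sqrt hX0.le]; ring
  have hd1 := neg_abs_le d
  have hd2 := le_abs_self d
  set L := Real.log Y with hLd
  have hL4 : u / 4 ≤ L := by linarith
  have hLu : L ≤ u := by linarith
  have hL0 : 0 < L := by linarith
  have hY2 : Real.exp 2 ≤ Y := by rw [← Real.le_log_iff_exp_le hY0]; linarith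
  have hY2' : 2 ≤ Y := by have := Real.add_one_le_exp 2; linarith
  have hl1 : 1 ≤ Real.log L := by
    rw [Real.le_log_iff_exp_le hL0]
    have := Real.exp_one_lt_d9; linarith
  have hlg : Real.log L ≤ g := Real.log_le_log hL0 hLu
  set N := ⌈Y⌉₊ + 1 with hN
  have hN1 : Y + 1 ≤ (N:ℝ) := by have := Nat.le_ceil Y; rw [hN]; push_cast; linarith
  have hN2 : (N:ℝ) ≤ Y + 2 := by have := Nat.ceil_lt_add_one hY0.le; rw [hN]; push_cast; linarith
  have hG := (hK Y hY2 hl1 (by linarith) N (by linarith)).2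
  rw [← hLd] at hG
  set z := √X / u ^ 3 with hz
  have hlz : Real.log z = u / 2 - 3 * g := by
    rw [hz, Real.log_div (by positivity) (by positivity), Real.log_pow, Real.log_sqrt hX0.le]
    push_cast; ring
  have hlz0 : 0 < Real.log z := by rw [hlz]; linarith
  have hz1 : 1 < z := by
    by_contra hh
    have := Real.log_nonpos (by positivity) (not_lt.1 hh)
    linarith
  have hmain := upper_core hn hnX hz1 (by linarith) hN1
  -- error unit
  set E := √X * g / u ^ 2 with hE
  have hE1 : √X / u ^ 2 ≤ E := by rw [hE]; gcongr; nlinarith only [hR0, hg1]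
  have t1 : z * Real.log (X + 1) ≤ 2 * E := by
    have h1 : Real.log (X + 1) ≤ 2 * u := by
      have : 2 * u = Real.log (X ^ 2) := by rw [Real.log_pow]; norm_num; rfl
      rw [this]
      apply Real.log_le_log (by linarith); nlinarith only [hX2]
    calc z * Real.log (X + 1) ≤ z * (2 * u) := by gcongr
      _ = 2 * (√X / u ^ 2) := by rw [hz]; field_simp
      _ ≤ 2 * E := by gcongr
  have t2 : Real.log 4 + (1 + Real.log N) ^ 2 ≤ E := by
    have h1 : Real.log N ≤ 2 * u := by
      have : 2 * L = Real.log (Y ^ 2) := by rw [Real.log_pow]; norm_num; rfl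
      have h2 : Real.log N ≤ Real.log (Y ^ 2) := by
        apply Real.log_le_log (by linarith); nlinarith only [hN2, hY2']
      linarith
    have h0 : 0 ≤ Real.log N := Real.log_natCast_nonneg N
    have h3 : (1 + Real.log N) ^ 2 ≤ 9 * u ^ 2 := by nlinarith only [h1, h0, hu5]
    have h4 : Real.log 4 ≤ 3 := by have := Real.log_le_sub_one_of_pos (x := 4) (by norm_num); linarith
    have h5 : 11 * u ^ 2 ≤ √X / u ^ 2 := by
      rw [le_div_iff₀ (by positivity)]; linarith
    nlinarith only [h3, h4, h5, hE1, hu5]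
  have t3 : X / Real.log z / Y ≤ s * √X / u + 12 * s * E := by
    have e : X / Real.log z / Y = s * √X * (1 / (u - 6 * g)) := by
      rw [hlz, hYdef]
      nth_rw 1 [← Real.mul_self_sqrt hX0.le]
      have : u - 6 * g ≠ 0 := by linarith
      have : u / 2 - 3 * g ≠ 0 := by linarith
      have e2 : u / 2 - 3 * g = (u - 6 * g) / 2 := by ring
      rw [e2]
      field_simp
    have h1 : 1 / (u - 6 * g) ≤ 1 / u + 12 * g / u ^ 2 := by
      have e2 : 1 / u + 12 * g / u ^ 2 = (u + 12 * g) / u ^ 2 := by field_simp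
      rw [e2, div_le_div_iff₀ (by linarith) (by positivity)]
      nlinarith only [hl24, hu0, hg1]
    rw [e]
    calc _ ≤ s * √X * (1 / u + 12 * g / u ^ 2) := by gcongr
      _ = _ := by rw [hE]; ring
  have t4 : Y * Sc / (4 * L) ≤ s * √X / u + 4 * s * |d| * E := by
    have e : Y * Sc / (4 * L) = s * √X * (1 / (2 * L)) := by
      rw [hYdef, ← hss]; field_simp; ring
    have h1 : 1 / (2 * L) ≤ 1 / u + 4 * |d| / u ^ 2 := by
      have e2 : 1 / u + 4 * |d| / u ^ 2 = (u + 4 * |d|) / u ^ 2 := by field_simp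
      rw [e2, div_le_div_iff₀ (by linarith) (by positivity)]
      have : 2 * L ≥ u - 2 * |d| := by linarith
      have h0 := abs_nonneg d
      nlinarith only [this, h0, hud, hu0]
    rw [e]
    calc _ ≤ s * √X * (1 / u + 4 * |d| / u ^ 2) := by gcongr
      _ = s * √X / u + 4 * s * |d| * (√X / u ^ 2) := by ring
      _ ≤ _ := by gcongr
  have t5 : K * Y * Real.log L / L ^ 2 ≤ 32 * K / s * E := by
    calc K * Y * Real.log L / L ^ 2 ≤ K * Y * g / (u / 4) ^ 2 := by gcongr
      _ = _ := by rw [hYdef, hE]; field_simp; ring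
  have e : √X / u * (2 * s) + (4 * s * |d| + 12 * s + 32 * K / s + 2 + 1) * (√X / u) * (g / u) =
     2 * (s * √X / u) + (4 * s * |d| + 12 * s + 32 * K / s + 2 + 1) * E := by
    rw [hE]; field_simp
  rw [e]
  linarith

end PNT4

namespace PNT4

lemma build_aux (A : Finset (ℕ × ℕ)) (P : ℕ × ℕ → ℕ) (hA : ∀ e ∈ A, 2 ≤ e.1)
    (hinj : Set.InjOn P A) (hP : ∀ e ∈ A, (P e).Prime ∧ P e % 4 = 1) :
    fr (∏ e ∈ A, P e ^ (e.1 - 1)) = ∏ e ∈ A, e.1 ∧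
    ∀ p, p.Prime → p ∣ ∏ e ∈ A, P e ^ (e.1 - 1) → ∃ e ∈ A, p = P e := by
  constructor
  swap
  · intro p hp hd
    obtain ⟨e, he, h⟩ := (Prime.dvd_finsetProd_iff hp.prime _).1 hd
    exact ⟨e, he, (Nat.prime_dvd_prime_iff_eq hp (hP e he).1).1 (hp.dvd_of_dvd_pow h)⟩
  · induction A using Finset.induction_on with
    | empty => simp [fr]
    | insert a s ha ih =>
      have ih' := ih (fun e he => hA e (Finset.mem_insert_of_mem he))
        (hinj.mono (by simp)) (fun e he => hP e (Finset.mem_insert_of_mem he))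
      have hPa := hP a (Finset.mem_insert_self _ _)
      have ha2 := hA a (Finset.mem_insert_self _ _)
      rw [Finset.prod_insert ha, Finset.prod_insert ha, fr_mul hPa.1 _ (by omega), ih', if_pos hPa.2]
      · congr 1; omega
      · intro hd
        obtain ⟨e, he, h⟩ := (Prime.dvd_finsetProd_iff hPa.1.prime _).1 hd
        have h2 := (Nat.prime_dvd_prime_iff_eq hPa.1 (hP e (Finset.mem_insert_of_mem he)).1).1 (hPa.1.dvd_of_dvd_pow h)
        have h3 := hinj (Finset.mem_coe.2 (Finset.mem_insert_self a s)) (Finset.mem_coe.2 (Finset.mem_insert_of_mem he)) h2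
        exact ha (h3 ▸ he)

lemma fr_prod_ge (A : Finset (ℕ × ℕ)) (hA : ∀ e ∈ A, e.1.Prime ∧ e.1 % 4 = 1) :
    ∑ e ∈ A, Ll e.2 ≤ Real.log (fr (∏ e ∈ A, e.1)) := by
  set m := ∏ e ∈ A, e.1 with hm
  have hfac : ∀ q ∈ A.image Prod.fst, m.factorization q = (A.filter (fun e => e.1 = q)).card := by
    intro q hq
    rw [hm, Nat.factorization_prod (fun e he => (hA e he).1.ne_zero), Finsupp.finsetSum_apply,
      Finset.card_filter]
    refine Finset.sum_congr rfl fun e he => ?_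
    rw [(hA e he).1.factorization, Finsupp.single_apply]
  have hpf : m.primeFactors ⊆ A.image Prod.fst := by
    intro p hp
    have hpp := Nat.prime_of_mem_primeFactors hp
    obtain ⟨e, he, h⟩ := (Prime.dvd_finsetProd_iff hpp.prime _).1 (Nat.dvd_of_mem_primeFactors hp)
    rw [Finset.mem_image]
    exact ⟨e, he, ((Nat.prime_dvd_prime_iff_eq hpp (hA e he).1).1 h).symm⟩
  rw [fr_eq m hpf]
  push_cast
  rw [Real.log_prod (by intro i _; split_ifs <;> positivity)]
  rw [← Finset.sum_fiberwise_of_maps_to (g := Prod.fst) (t := A.image Prod.fst)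
    (fun e he => Finset.mem_image_of_mem _ he)]
  refine Finset.sum_le_sum fun q hq => ?_
  have hq4 : q % 4 = 1 := by
    obtain ⟨e, he, rfl⟩ := Finset.mem_image.1 hq
    exact (hA e he).2
  rw [if_pos hq4, hfac q hq]
  have hinj : Set.InjOn Prod.snd (A.filter (fun e => e.1 = q) : Set (ℕ × ℕ)) := by
    intro a ha b hb hab
    simp only [Finset.coe_filter, Set.mem_ofPred_eq] at ha hb
    exact Prod.ext (ha.2.trans hb.2.symm) hab
  have := Ll_set ((A.filter (fun e => e.1 = q)).image Prod.snd)
  rw [Finset.sum_image hinj, Finset.card_image_of_injOn hinj] at this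
  exact this

lemma build (A : Finset (ℕ × ℕ)) (S : Finset ℕ) (hcard : A.card ≤ S.card)
    (hA : ∀ e ∈ A, e.1.Prime ∧ e.1 % 4 = 1) (y X : ℝ) (hy : 1 ≤ y)
    (hS : ∀ p ∈ S, p.Prime ∧ p % 4 = 1 ∧ (p:ℝ) ≤ y) (hX : (∑ e ∈ A, (e.1:ℝ)) * Real.log y ≤ X) :
    ∃ n : ℕ, n ≠ 0 ∧ Real.log n ≤ X ∧ ∑ e ∈ A, Ll e.2 ≤ Real.log (r2 (r2 n)) := by
  obtain ⟨f⟩ : Nonempty (A ↪ S) := Function.Embedding.nonempty_of_card_le (by simpa using hcard)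
  set P : ℕ × ℕ → ℕ := fun e => if h : e ∈ A then (f ⟨e, h⟩ : ℕ) else 0 with hPdef
  have hPm : ∀ e (he : e ∈ A), P e = f ⟨e, he⟩ := fun e he => by simp [hPdef, he]
  have hPS : ∀ e ∈ A, P e ∈ S := fun e he => by rw [hPm e he]; exact (f ⟨e, he⟩).2
  have hinj : Set.InjOn P A := by
    intro a ha b hb hab
    rw [hPm a ha, hPm b hb] at hab
    have := f.injective (Subtype.ext hab)
    exact congrArg Subtype.val this
  have hP : ∀ e ∈ A, (P e).Prime ∧ P e % 4 = 1 := fun e he => ⟨(hS _ (hPS e he)).1, (hS _ (hPS e he)).2.1⟩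
  obtain ⟨h1, h2⟩ := build_aux A P (fun e he => (hA e he).1.two_le) hinj hP
  set n := ∏ e ∈ A, P e ^ (e.1 - 1) with hn
  have hn0 : n ≠ 0 := Finset.prod_ne_zero_iff.2 fun e he => pow_ne_zero _ (hP e he).1.ne_zero
  refine ⟨n, hn0, ?_, ?_⟩
  · refine le_trans ?_ hX
    rw [hn]; push_cast
    rw [Real.log_prod (by intro e he; exact pow_ne_zero _ (by exact_mod_cast (hP e he).1.ne_zero)), Finset.sum_mul]
    refine Finset.sum_le_sum fun e he => ?_
    rw [Real.log_pow]
    have h3 : ((e.1 - 1 : ℕ) : ℝ) ≤ e.1 := by exact_mod_cast Nat.sub_le _ _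
    have h4 : Real.log (P e) ≤ Real.log y := 
      Real.log_le_log (by exact_mod_cast (hP e he).1.pos) (hS _ (hPS e he)).2.2
    have h5 : 0 ≤ Real.log (P e) := Real.log_natCast_nonneg _
    gcongr
  · have e1 : r2 n = 4 * ∏ e ∈ A, e.1 := by
      rw [(r2_formula n hn0).2, h1]
      intro p hp hd
      obtain ⟨e, he, rfl⟩ := h2 p hp hd
      have := (hP e he).2
      omega
    set m := ∏ e ∈ A, e.1 with hm
    have hm0 : m ≠ 0 := Finset.prod_ne_zero_iff.2 fun e he => (hA e he).1.ne_zero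
    have e2 : r2 (r2 n) = 4 * fr m := by
      rw [e1, show 4 * m = 2 * (2 * m) by ring, r2_two, r2_two]
      refine (r2_formula m hm0).2 ?_
      intro p hp hd
      obtain ⟨e, he, h⟩ := (Prime.dvd_finsetProd_iff hp.prime _).1 hd
      have h3 := (Nat.prime_dvd_prime_iff_eq hp (hA e he).1).1 h
      have := (hA e he).2
      omega
    rw [e2]
    refine (fr_prod_ge A hA).trans ?_
    have hp : 0 < fr m := fr_pos m
    apply Real.log_le_log (by exact_mod_cast hp)
    push_cast
    have : (0:ℝ) < fr m := by exact_mod_cast hp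
    linarith

lemma select (N : ℕ) (T : ℝ) (hT0 : 0 ≤ T)
    (hT : T < ∑ q ∈ (P1s N).filter (fun q => 2 * q < N), (q:ℝ)) :
    ∃ A : Finset (ℕ × ℕ), ∃ Y : ℝ, A ⊆ P1s N ×ˢ Finset.range N ∧ 5 ≤ Y ∧ Y ≤ N ∧
      (∀ e ∈ A, (e.2 + 1) * e.1 ≤ N) ∧ ∑ e ∈ A, (e.1:ℝ) ≤ T ∧
      GY Y N + T / Y - 1 ≤ ∑ e ∈ A, Ll e.2 := by
  classical
  set U := P1s N ×ˢ Finset.range N with hU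
  set ρ : ℕ × ℕ → ℝ := fun e => e.1 / Ll e.2 with hρ
  have hU5 : ∀ e ∈ U, 5 ≤ e.1 := fun e he => P1s_five (Finset.mem_product.1 he).1
  have hlog2 : 1 / 2 < Ll 0 := by rw [Ll_zero]; have := Real.log_two_gt_d9; linarith
  -- cost of elements of small ratio
  have hsmall : ∀ r : ℝ, (N:ℝ) ≤ r → T < ∑ e ∈ U.filter (fun e => ρ e < r), (e.1:ℝ) := by
    intro r hr
    refine hT.trans_le ?_
    have : ∑ q ∈ (P1s N).filter (fun q => 2 * q < N), (q:ℝ) =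
        ∑ e ∈ ((P1s N).filter (fun q => 2 * q < N)).image (fun q => (q, 0)), ((e:ℕ × ℕ).1:ℝ) := by
      rw [Finset.sum_image]
      intro a _ b _ hab
      exact (Prod.mk.inj hab).1
    rw [this]
    refine Finset.sum_le_sum_of_subset_of_nonneg (fun e he => ?_) fun e _ _ => by positivity
    obtain ⟨q, hq, rfl⟩ := Finset.mem_image.1 he
    rw [Finset.mem_filter] at hq ⊢
    have hqN := hq.2
    refine ⟨Finset.mem_product.2 ⟨hq.1, by simp; omega⟩, ?_⟩
    simp only [hρ]
    rw [div_lt_iff₀ (Ll_pos 0)]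
    have h2 : 2 * (q:ℝ) < N := by exact_mod_cast hqN
    have h3 : (0:ℝ) ≤ q := by positivity
    nlinarith
  set R := (U.image ρ).filter (fun r => T < ∑ e ∈ U.filter (fun e => ρ e ≤ r), (e.1:ℝ)) with hR
  have hRne : R.Nonempty := by
    have hUne : (U.image ρ).Nonempty := by
      rw [Finset.image_nonempty]
      by_contra hh
      rw [Finset.not_nonempty_iff_eq_empty] at hh
      have := hsmall N le_rfl
      rw [hh] at this; simp at this; linarith
    refine ⟨(U.image ρ).max' hUne, Finset.mem_filter.2 ⟨Finset.max'_mem _ _, ?_⟩⟩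
    refine (hsmall N le_rfl).trans_le ?_
    refine Finset.sum_le_sum_of_subset_of_nonneg (fun e he => ?_) fun e _ _ => by positivity
    rw [Finset.mem_filter] at he ⊢
    exact ⟨he.1, Finset.le_max' _ _ (Finset.mem_image_of_mem _ he.1)⟩
  set Y := R.min' hRne with hY
  have hYR : Y ∈ R := Finset.min'_mem _ _
  obtain ⟨hYim, hYT⟩ := Finset.mem_filter.1 hYR
  obtain ⟨e0, he0, he0Y⟩ := Finset.mem_image.1 hYim
  have hY5 : 5 ≤ Y := by
    rw [← he0Y]
    simp only [hρ]
    rw [le_div_iff₀ (Ll_pos _)]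
    have := Ll_le_one e0.2
    have h5 : (5:ℝ) ≤ e0.1 := by exact_mod_cast hU5 e0 he0
    linarith
  have hY0 : 0 < Y := by linarith
  set A0 := U.filter (fun e => ρ e < Y) with hA0
  have hA0T : ∑ e ∈ A0, (e.1:ℝ) ≤ T := by
    rcases A0.eq_empty_or_nonempty with h | h
    · rw [h]; simpa using hT0
    · set r := (A0.image ρ).max' (h.image _) with hr
      have hrm : r ∈ A0.image ρ := Finset.max'_mem _ _
      obtain ⟨e1, he1, he1r⟩ := Finset.mem_image.1 hrm
      have hrY : r < Y := by rw [← he1r]; exact (Finset.mem_filter.1 he1).2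
      by_contra hh
      have hrR : r ∈ R := by
        refine Finset.mem_filter.2 ⟨?_, ?_⟩
        · rw [← he1r]; exact Finset.mem_image_of_mem _ (Finset.filter_subset _ _ he1)
        · refine (not_le.1 hh).trans_le ?_
          refine Finset.sum_le_sum_of_subset_of_nonneg (fun e he => ?_) fun e _ _ => by positivity
          exact Finset.mem_filter.2 ⟨Finset.filter_subset _ _ he, Finset.le_max' _ _ (Finset.mem_image_of_mem _ he)⟩
      have := Finset.min'_le _ _ hrR
      linarith
  have hYN : Y ≤ N := by
    by_contra hh
    have := hsmall Y (not_le.1 hh).le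
    linarith
  set A1 := U.filter (fun e => ρ e ≤ Y) with hA1
  set F := A1.powerset.filter (fun A => A0 ⊆ A ∧ ∑ e ∈ A, (e.1:ℝ) ≤ T) with hF
  have h01 : A0 ⊆ A1 := fun e he => by
    rw [Finset.mem_filter] at he ⊢; exact ⟨he.1, he.2.le⟩
  have hFne : F.Nonempty := ⟨A0, by
    rw [hF, Finset.mem_filter, Finset.mem_powerset]; exact ⟨h01, subset_rfl, hA0T⟩⟩
  obtain ⟨A, hAF, hmax⟩ := Finset.exists_max_image F Finset.card hFne
  rw [hF, Finset.mem_filter, Finset.mem_powerset] at hAF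
  obtain ⟨hAA1, hA0A, hAT⟩ := hAF
  have hAU : A ⊆ U := hAA1.trans (Finset.filter_subset _ _)
  have hex : ∃ e ∈ A1, e ∉ A := by
    by_contra hh
    push Not at hh
    have : A = A1 := subset_antisymm hAA1 hh
    rw [this] at hAT
    linarith
  obtain ⟨e2, he2, he2A⟩ := hex
  have hcost : T < ∑ e ∈ A, (e.1:ℝ) + e2.1 := by
    by_contra hh
    have hin : insert e2 A ∈ F := by
      rw [hF, Finset.mem_filter, Finset.mem_powerset]
      refine ⟨Finset.insert_subset he2 hAA1, hA0A.trans (Finset.subset_insert _ _), ?_⟩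
      rw [Finset.sum_insert he2A]; linarith
    have := hmax _ hin
    rw [Finset.card_insert_of_notMem he2A] at this
    omega
  have hle : ∀ e ∈ A1, (e.1:ℝ) ≤ Y * Ll e.2 := by
    intro e he
    have := (Finset.mem_filter.1 he).2
    simp only [hρ] at this
    rwa [div_le_iff₀ (Ll_pos _)] at this
  have he2Y : (e2.1:ℝ) ≤ Y := by
    have h1 := hle e2 he2
    have := Ll_le_one e2.2
    nlinarith
  refine ⟨A, Y, hAU, hY5, hYN, ?_, hAT, ?_⟩
  · intro e he
    have h1 := hle e (hAA1 he)
    have h2 := Ll_le e.2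
    have h3 : (((e.2 + 1) * e.1 : ℕ) : ℝ) ≤ N := by
      push_cast
      calc ((e.2:ℝ) + 1) * e.1 ≤ (e.2 + 1) * (Y * (1 / ((e.2:ℝ) + 1))) := by
            gcongr; exact h1.trans (by gcongr)
        _ = Y := by field_simp
        _ ≤ N := hYN
    exact_mod_cast h3
  · have hG : GY Y N ≤ ∑ e ∈ A, (Ll e.2 - e.1 / Y) := by
      have : GY Y N = ∑ e ∈ U, max 0 (Ll e.2 - e.1 / Y) := by
        unfold GY; rw [hU, Finset.sum_product]
      rw [this]
      rw [← Finset.sum_subset hAU]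
      · refine Finset.sum_le_sum fun e he => ?_
        have h1 := hle e (hAA1 he)
        apply max_le _ le_rfl
        rw [sub_nonneg, div_le_iff₀ hY0]; linarith
      · intro e he heA
        apply max_eq_left
        rw [sub_nonpos, le_div_iff₀ hY0]
        have h1 : ¬ ρ e < Y := fun h => heA (hA0A (Finset.mem_filter.2 ⟨he, h⟩))
        rw [not_lt] at h1
        simp only [hρ] at h1
        rw [le_div_iff₀ (Ll_pos _)] at h1
        linarith
    rw [Finset.sum_sub_distrib, ← Finset.sum_div] at hG
    have h2 : T / Y - 1 ≤ (∑ e ∈ A, (e.1:ℝ)) / Y := by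
      rw [le_div_iff₀ hY0, sub_mul, div_mul_cancel₀ _ hY0.ne']
      linarith
    linarith

lemma A_card {N : ℕ} {A : Finset (ℕ × ℕ)} (hA : A ⊆ P1s N ×ˢ Finset.range N)
    (h : ∀ e ∈ A, (e.2 + 1) * e.1 ≤ N) : (A.card : ℝ) ≤ N * (1 + Real.log N) := by
  have h1 : A.card = ∑ l ∈ Finset.range N, (A.filter (fun e => e.2 = l)).card :=
    Finset.card_eq_sum_card_fiberwise fun e he => (Finset.mem_product.1 (hA he)).2
  rw [h1]; push_cast
  calc ∑ l ∈ Finset.range N, ((A.filter (fun e => e.2 = l)).card : ℝ)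
      ≤ ∑ l ∈ Finset.range N, (N:ℝ) * (1 / ((l:ℝ) + 1)) := by
        refine Finset.sum_le_sum fun l _ => ?_
        have h2 : (A.filter (fun e => e.2 = l)).card ≤ (Finset.Ioc 0 (N / (l + 1))).card := by
          refine Finset.card_le_card_of_injOn Prod.fst ?_ ?_
          · intro e he
            have he' := Finset.mem_filter.1 (Finset.mem_coe.1 he)
            have h5 := P1s_five (Finset.mem_product.1 (hA he'.1)).1
            have h3 := h e he'.1
            rw [he'.2] at h3
            rw [Finset.mem_coe, Finset.mem_Ioc]
            refine ⟨by omega, ?_⟩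
            rw [Nat.le_div_iff_mul_le (by omega)]
            linarith
          · intro a ha b hb hab
            have ha' := Finset.mem_filter.1 (Finset.mem_coe.1 ha)
            have hb' := Finset.mem_filter.1 (Finset.mem_coe.1 hb)
            exact Prod.ext hab (ha'.2.trans hb'.2.symm)
        rw [Nat.card_Ioc, Nat.sub_zero] at h2
        calc ((A.filter (fun e => e.2 = l)).card : ℝ) ≤ ((N / (l + 1) : ℕ) : ℝ) := by exact_mod_cast h2
          _ ≤ (N:ℝ) / ((l + 1 : ℕ) : ℝ) := Nat.cast_div_le
          _ = _ := by push_cast; ring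
    _ = N * ∑ l ∈ Finset.range N, 1 / ((l:ℝ) + 1) := by rw [Finset.mul_sum]
    _ ≤ _ := by gcongr; exact harm_le N

lemma sum_ge (S : Finset ℕ) (c : ℝ) (hc : c ≤ S.card) (hc0 : 0 ≤ c) (hS : ∀ q ∈ S, 0 < q) :
    c ^ 2 / 4 ≤ ∑ q ∈ S, (q:ℝ) := by
  have h1 : ((S.filter (fun q : ℕ => (q:ℝ) ≤ c / 2)).card : ℝ) ≤ c / 2 := by
    have hsub : S.filter (fun q : ℕ => (q:ℝ) ≤ c / 2) ⊆ Finset.Ioc 0 ⌊c / 2⌋₊ := by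
      intro q hq
      rw [Finset.mem_filter] at hq
      rw [Finset.mem_Ioc]
      exact ⟨hS q hq.1, Nat.le_floor hq.2⟩
    have h3 := Finset.card_le_card hsub
    rw [Nat.card_Ioc, Nat.sub_zero] at h3
    exact (Nat.cast_le.2 h3).trans (Nat.floor_le (by positivity))
  have h2 := Finset.card_filter_add_card_filter_not (s := S) (fun q : ℕ => (q:ℝ) ≤ c / 2)
  have h2' : ((S.filter (fun q : ℕ => (q:ℝ) ≤ c / 2)).card : ℝ) + ((S.filter (fun q : ℕ => ¬ (q:ℝ) ≤ c / 2)).card : ℝ) = S.card := by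
    exact_mod_cast h2
  calc c ^ 2 / 4 = (c / 2) * (c / 2) := by ring
    _ ≤ ((S.filter (fun q : ℕ => ¬ (q:ℝ) ≤ c / 2)).card : ℝ) * (c / 2) := by gcongr; linarith
    _ ≤ ∑ q ∈ S.filter (fun q : ℕ => ¬ (q:ℝ) ≤ c / 2), (q:ℝ) := by
      rw [← nsmul_eq_mul]
      refine Finset.card_nsmul_le_sum _ _ _ fun q hq => ?_
      have := (Finset.mem_filter.1 hq).2
      linarith
    _ ≤ _ := Finset.sum_le_sum_of_subset_of_nonneg (Finset.filter_subset _ _) fun _ _ _ => by positivity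

end PNT4

namespace PNT4

set_option maxHeartbeats 1000000 in
lemma lower_asym : ∃ C : ℝ, 0 < C ∧ ∀ᶠ X : ℝ in atTop, ∃ n : ℕ, n ≠ 0 ∧ Real.log n ≤ X ∧
    √X / Real.log X * (2 * √Sc) - C * (√X / Real.log X) * (Real.log (Real.log X) / Real.log X) ≤
    Real.log (r2 (r2 n)) := by
  obtain ⟨K, hK0, hK⟩ := GY_est
  obtain ⟨Y0, hY03, hcount⟩ := count_P1
  set s := √Sc with hs
  have hs0 : 0 < s := Real.sqrt_pos.2 Sc_pos
  have hss : s ^ 2 = Sc := Real.sq_sqrt Sc_pos.le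
  refine ⟨32 * K / s + 20 * s + 1, by positivity, ?_⟩
  have hu : Tendsto Real.log atTop atTop := Real.tendsto_log_atTop
  filter_upwards [eventually_ge_atTop 2, hu.eventually (ev_log (1/24) (by norm_num)),
    hu.eventually_ge_atTop Y0, hu.eventually_ge_atTop 50000,
    hu.eventually_ge_atTop (2 * s + 1), hu.eventually_ge_atTop (16 * K / s ^ 2)] with X hX2 hl24 huY hu5 hus huK
  set u := Real.log X with hudef
  set g := Real.log u with hg
  have hX0 : 0 < X := by linarith
  have hu0 : 0 < u := by linarith
  have hR0 : 0 < √X := Real.sqrt_pos.2 hX0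
  have hRu : √X = Real.exp (u / 2) := by
    rw [← Real.exp_log hR0, Real.log_sqrt hX0.le]
  have hRR : √X * √X = X := Real.mul_self_sqrt hX0.le
  have hlR : Real.log √X = u / 2 := Real.log_sqrt hX0.le
  have hexp : 11 * u ^ 4 ≤ √X := by
    rw [hRu]
    have := Real.pow_div_factorial_le_exp (u/2) (by linarith) 5
    refine le_trans ?_ this
    rw [show (Nat.factorial 5 : ℝ) = 120 by norm_num [Nat.factorial]]
    have : 0 ≤ u ^ 4 := by positivity
    have e : (u/2)^5/120 = u ^ 4 * (u / 3840) := by ring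
    rw [e]; nlinarith only [this, hu5]
  set R := √X with hR
  have hu1 : 1 ≤ u := by linarith
  have hu4 : u ≤ u ^ 4 := le_self_pow₀ hu1 (by norm_num)
  have hu24 : u ^ 2 ≤ u ^ 4 := pow_le_pow_right₀ hu1 (by norm_num)
  have hRge : u ≤ R := by linarith
  have hg1 : 1 ≤ g := by
    rw [hg, Real.le_log_iff_exp_le hu0]
    have := Real.exp_one_lt_d9; linarith
  have hu2 : 1 ≤ u ^ 2 := one_le_pow₀ hu1
  set N := ⌈R * u ^ 2⌉₊ with hN
  have hRu2 : R ≤ R * u ^ 2 := le_mul_of_one_le_right hR0.le hu2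
  have hN1 : R * u ^ 2 ≤ N := Nat.le_ceil _
  have hN2 : (N:ℝ) ≤ 2 * (R * u ^ 2) := by
    have := Nat.ceil_lt_add_one (a := R * u ^ 2) (by positivity)
    linarith
  have hl2 : Real.log 2 ≤ 1 := by have := Real.log_two_lt_d9; linarith
  have hl20 : 0 ≤ Real.log 2 := Real.log_nonneg (by norm_num)
  have hlRu2 : Real.log (R * u ^ 2) = u / 2 + 2 * g := by
    rw [Real.log_mul hR0.ne' (by positivity), Real.log_pow, hlR]; push_cast; rfl
  have hlN : Real.log N ≤ 1 + u / 2 + 2 * g := by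
    have h1 : Real.log N ≤ Real.log (2 * (R * u ^ 2)) := Real.log_le_log (by linarith) hN2
    rw [Real.log_mul (by norm_num) (by positivity), hlRu2] at h1
    linarith
  set D := u / 2 + 5 * g with hD
  have hD0 : 0 < D := by linarith
  have hDu : D ≤ u := by linarith
  have hD1 : 1 ≤ D := by linarith
  set yP := R * u ^ 5 with hyP
  have hlyP : Real.log yP = D := by
    rw [hyP, Real.log_mul hR0.ne' (by positivity), Real.log_pow, hlR]; push_cast; rfl
  have hu5' : 1 ≤ u ^ 5 := one_le_pow₀ hu1
  have hyPR : R ≤ yP := le_mul_of_one_le_right hR0.le hu5'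
  set T := X / D with hT
  have hT0 : 0 < T := by positivity
  have hTX : T ≤ X := div_le_self hX0.le hD1
  -- selection
  have hTsum : T < ∑ q ∈ (P1s N).filter (fun q => 2 * q < N), (q:ℝ) := by
    set y := R * u ^ 2 / 2 with hy
    have hyN : y ≤ N := by linarith
    have hyu : u ≤ y := by
      have : 2 ≤ u ^ 2 := by nlinarith only [hu5]
      have : R * 2 ≤ R * u ^ 2 := by gcongr
      linarith
    have h1 := hcount y (huY.trans hyu) N hyN
    have hly : Real.log y ≤ u := by
      have : Real.log y ≤ Real.log (R * u ^ 2) := Real.log_le_log (by linarith) (by linarith)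
      linarith
    have hly0 : 0 < Real.log y := Real.log_pos (by linarith)
    have h2 : R * u / 10 ≤ y / (5 * Real.log y) := by
      calc R * u / 10 = y / (5 * u) := by rw [hy]; field_simp; ring
        _ ≤ _ := by gcongr
    have h3 := sum_ge ((P1s N).filter (fun q : ℕ => (q:ℝ) < y)) (R * u / 10) (h2.trans h1) (by positivity)
      (fun q hq => by have := P1s_five (Finset.filter_subset _ _ hq); omega)
    have h4 : ∑ q ∈ (P1s N).filter (fun q : ℕ => (q:ℝ) < y), (q:ℝ) ≤
        ∑ q ∈ (P1s N).filter (fun q => 2 * q < N), (q:ℝ) := by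
      refine Finset.sum_le_sum_of_subset_of_nonneg (fun q hq => ?_) fun _ _ _ => by positivity
      rw [Finset.mem_filter] at hq ⊢
      refine ⟨hq.1, ?_⟩
      have : ((2 * q : ℕ) : ℝ) < N := by push_cast; linarith [hq.2]
      exact_mod_cast this
    have h5 : (R * u / 10) ^ 2 / 4 = X * (u ^ 2 / 400) := by rw [← hRR]; ring
    have h6 : 1 < u ^ 2 / 400 := by nlinarith only [hu5]
    have h7 : X * 1 < X * (u ^ 2 / 400) := by gcongr
    linarith
  obtain ⟨A, Y, hAU, hY5, hYN, hAN, hAT, hAL⟩ := select N T hT0.le hTsum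
  have hcardA := A_card hAU hAN
  set M := ⌈yP⌉₊ with hM
  have hPcount := hcount yP (by linarith) M (Nat.le_ceil _)
  rw [hlyP] at hPcount
  have hcard : A.card ≤ ((P1s M).filter (fun q : ℕ => (q:ℝ) < yP)).card := by
    have h1 : (N:ℝ) * (1 + Real.log N) ≤ 2 * (R * u ^ 2) * (2 * u) := by
      have : 0 ≤ Real.log N := Real.log_natCast_nonneg N
      gcongr; linarith
    have h2 : 2 * (R * u ^ 2) * (2 * u) ≤ yP / (5 * u) := by
      have e1 : yP / (5 * u) = (R * u ^ 3) * (u / 5) := by rw [hyP]; field_simp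
      have e2 : 2 * (R * u ^ 2) * (2 * u) = (R * u ^ 3) * 4 := by ring
      rw [e1, e2]; gcongr; linarith
    have h3 : yP / (5 * u) ≤ yP / (5 * D) := by gcongr
    have : (A.card : ℝ) ≤ ((P1s M).filter (fun q : ℕ => (q:ℝ) < yP)).card := by linarith
    exact_mod_cast this
  obtain ⟨n, hn0, hnX, hnL⟩ := build A _ hcard
    (fun e he => (P1s_mem.1 (Finset.mem_product.1 (hAU he)).1).2) yP X (by linarith)
    (fun p hp => by
      have h := Finset.mem_filter.1 hp
      have h2 := P1s_mem.1 h.1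
      exact ⟨h2.2.1, h2.2.2, h.2.le⟩)
    (by
      rw [hlyP]
      calc _ ≤ T * D := by gcongr
        _ = X := by rw [hT]; field_simp)
  refine ⟨n, hn0, hnX, ?_⟩
  have hV : GY Y N + T / Y - 1 ≤ Real.log (r2 (r2 n)) := hAL.trans hnL
  refine le_trans ?_ hV
  clear hcard hcardA hPcount hnL hnX hAL hAT hAN hAU hTsum hcount
  have hY0 : 0 < Y := by linarith
  set E := R * g / u ^ 2 with hE
  have hE1 : R / u ^ 2 ≤ E := by rw [hE]; gcongr; nlinarith only [hR0, hg1]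
  have hE2 : 1 ≤ E := by
    refine le_trans ?_ hE1
    rw [le_div_iff₀ (by positivity)]; linarith
  have eC : R / u * (2 * s) - (32 * K / s + 20 * s + 1) * (R / u) * (g / u) =
     2 * (s * R / u) - (32 * K / s + 20 * s + 1) * E := by
    rw [hE]; field_simp
  rw [eC]
  have hKs : 0 < 32 * K / s := by positivity
  rcases le_or_gt Y (R / u) with hc | hc
  · have h1 : R ≤ T / Y := by
      rw [le_div_iff₀ hY0, hT, le_div_iff₀ hD0]
      calc R * Y * D ≤ R * (R / u) * u := by gcongr
        _ = X := by rw [← hRR]; field_simp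
    have h2 : 0 ≤ GY Y N := Finset.sum_nonneg fun q _ => Finset.sum_nonneg fun l _ => le_max_left _ _
    have h3 : 2 * (s * R / u) ≤ R := by
      rw [← mul_div_assoc, div_le_iff₀ hu0]; nlinarith only [hus, hR0]
    have h4 : 1 * E ≤ (32 * K / s + 20 * s + 1) * E := by gcongr; linarith
    linarith
  · set L := Real.log Y with hL
    have hL1 : u / 2 - g ≤ L := by
      have : Real.log (R / u) ≤ L := Real.log_le_log (by positivity) hc.le
      rwa [Real.log_div hR0.ne' hu0.ne', hlR] at this
    have hL4 : u / 4 ≤ L := by linarith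
    have hL0 : 0 < L := by linarith
    have hLN : L ≤ D := by
      have : L ≤ Real.log N := Real.log_le_log hY0 hYN
      linarith
    have hlg : Real.log L ≤ g := Real.log_le_log hL0 (by linarith)
    have hY2 : Real.exp 2 ≤ Y := by rw [← Real.le_log_iff_exp_le hY0]; linarith
    have hl1 : 1 ≤ Real.log L := by
      rw [Real.le_log_iff_exp_le hL0]
      have := Real.exp_one_lt_d9; linarith
    have hG := (hK Y hY2 hl1 (by linarith) N hYN).1
    rw [← hL] at hG
    set t := s - 16 * K / (s * u) with ht
    have hKu : 16 * K ≤ u * s ^ 2 := by rwa [div_le_iff₀ (by positivity)] at huK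
    have ht0 : 0 ≤ t := by
      rw [ht, sub_nonneg, div_le_iff₀ (by positivity)]; nlinarith only [hKu]
    have ht2 : t ^ 2 ≤ Sc - 16 * K / u := by
      set a := 16 * K / (s * u) with ha
      have ha1 : 0 ≤ a := by positivity
      have e : 16 * K / u = s * a := by rw [ha]; field_simp
      rw [e, ← hss, ht]
      have : a ≤ s := by linarith
      nlinarith only [this, ha1]
    have hG2 : t ^ 2 * Y / (4 * D) ≤ GY Y N := by
      refine le_trans ?_ hG
      have e : Y * Sc / (4 * L) - K * Y / L ^ 2 = (Sc - 4 * K / L) * (Y / (4 * L)) := by field_simp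
      rw [e]
      have h1 : 4 * K / L ≤ 16 * K / u := by
        rw [div_le_div_iff₀ hL0 hu0]; nlinarith only [hK0, hL4]
      calc t ^ 2 * Y / (4 * D) = t ^ 2 * (Y / (4 * D)) := by ring
        _ ≤ t ^ 2 * (Y / (4 * L)) := by gcongr
        _ ≤ _ := by gcongr; linarith
    have hAM : t * R / D ≤ t ^ 2 * Y / (4 * D) + T / Y := by
      have e : t ^ 2 * Y / (4 * D) + T / Y - t * R / D = (t * Y / 2 - R) ^ 2 / (D * Y) := by
        rw [hT, ← hRR]; field_simp; ring
      have : 0 ≤ (t * Y / 2 - R) ^ 2 / (D * Y) := by positivity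
      linarith
    have hfin : 2 * (s * R / u) - (32 * K / s + 20 * s) * E ≤ t * R / D := by
      have h1 : 2 / u - 20 * g / u ^ 2 ≤ 1 / D := by
        have e : 2 / u - 20 * g / u ^ 2 = (2 * u - 20 * g) / u ^ 2 := by field_simp
        rw [e, div_le_div_iff₀ (by positivity) hD0, hD]
        nlinarith only [hg1, hu0, sq_nonneg g]
      have h2 : t * R * (2 / u - 20 * g / u ^ 2) ≤ t * R / D := by
        calc _ ≤ t * R * (1 / D) := by gcongr
          _ = _ := by ring
      refine le_trans ?_ h2
      have e : t * R * (2 / u - 20 * g / u ^ 2) = 2 * (s * R / u) - 32 * K / s * (R / u ^ 2) - 20 * t * E := by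
        rw [hE, ht]; field_simp; ring
      rw [e]
      have hts : t ≤ s := by
        rw [ht]; have : 0 ≤ 16 * K / (s * u) := by positivity
        linarith
      have h3 : 32 * K / s * (R / u ^ 2) ≤ 32 * K / s * E := by gcongr
      have h4 : 20 * t * E ≤ 20 * s * E := by gcongr
      linarith
    linarith

end PNT4

namespace PNT4

lemma cB_eq : cBEFS / √2 = 2 * √Sc := by
  have : cBEFS = √(8 * Sc) := rfl
  rw [this, ← Real.sqrt_div' _ (by norm_num), show 8 * Sc / 2 = 2 ^ 2 * Sc by ring,
    Real.sqrt_mul (by norm_num), Real.sqrt_sq (by norm_num)]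

theorem final_thm :
    ∃ C : ℝ, 0 < C ∧ ∀ᶠ x : ℕ in atTop,
      |(⨆ n ∈ Finset.Icc 1 x, Real.log (r2 (r2 n))) -
          Real.sqrt (Real.log x) / Real.log (Real.log x) * (cBEFS / Real.sqrt 2)| ≤
        C * (Real.sqrt (Real.log x) / Real.log (Real.log x)) *
          (Real.log (Real.log (Real.log x)) / Real.log (Real.log x)) := by
  obtain ⟨C1, hC1, h1⟩ := upper_asym
  obtain ⟨C2, hC2, h2⟩ := lower_asym
  have ht : Tendsto (fun x : ℕ => Real.log x) atTop atTop :=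
    Real.tendsto_log_atTop.comp tendsto_natCast_atTop_atTop
  have ht2 : Tendsto (fun x : ℕ => Real.log (Real.log x)) atTop atTop := Real.tendsto_log_atTop.comp ht
  have ht3 : Tendsto (fun x : ℕ => Real.log (Real.log (Real.log x))) atTop atTop := Real.tendsto_log_atTop.comp ht2
  refine ⟨C1 + C2, by positivity, ?_⟩
  filter_upwards [ht.eventually h1, ht.eventually h2, ht2.eventually_ge_atTop 1, ht3.eventually_ge_atTop 1,
    eventually_ge_atTop 1] with x hx1 hx2 hu hg hx0
  have hx0' : (0:ℝ) < x := by exact_mod_cast hx0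
  set X := Real.log x
  set u := Real.log X
  set g := Real.log u
  rw [cB_eq]
  set W := √X / u * (2 * √Sc)
  have hE : 0 ≤ √X / u * (g / u) := by positivity
  have hW : 0 ≤ W := by positivity
  have hB : ∀ n, (⨆ (_ : n ∈ Finset.Icc 1 x), Real.log (r2 (r2 n))) ≤ W + C1 * (√X / u) * (g / u) := by
    intro n
    refine Real.iSup_le (fun hn => ?_) (by positivity)
    rw [Finset.mem_Icc] at hn
    refine hx1 n (by omega) (Real.log_le_log (by exact_mod_cast hn.1) (by exact_mod_cast hn.2))
  have hup : (⨆ n ∈ Finset.Icc 1 x, Real.log (r2 (r2 n))) ≤ W + C1 * (√X / u) * (g / u) :=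
    Real.iSup_le hB (by positivity)
  obtain ⟨n, hn0, hnX, hn⟩ := hx2
  have hmem : n ∈ Finset.Icc 1 x := by
    rw [Finset.mem_Icc]
    refine ⟨by omega, ?_⟩
    have : (n:ℝ) ≤ x := (Real.log_le_log_iff (by exact_mod_cast Nat.pos_of_ne_zero hn0) hx0').1 hnX
    exact_mod_cast this
  have hlow : Real.log (r2 (r2 n)) ≤ ⨆ n ∈ Finset.Icc 1 x, Real.log (r2 (r2 n)) := by
    have hb : BddAbove (Set.range fun n => ⨆ (_ : n ∈ Finset.Icc 1 x), Real.log (r2 (r2 n))) :=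
      ⟨_, by rintro _ ⟨m, rfl⟩; exact hB m⟩
    have h3 := le_ciSup hb n
    rwa [ciSup_pos hmem] at h3
  have e : (C1 + C2) * (√X / u) * (g / u) = C1 * (√X / u) * (g / u) + C2 * (√X / u) * (g / u) := by ring
  have p1 : 0 ≤ C1 * (√X / u) * (g / u) := by positivity
  have p2 : 0 ≤ C2 * (√X / u) * (g / u) := by positivity
  rw [e, abs_le]
  constructor <;> linarith

end PNT4

/-- `max_{n ≤ x} log r₂(r₂(n)) = (√(log x)/log₂ x)·(c/√2 + O(log₃ x/log₂ x))` as `x → ∞`. -/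
theorem maxOrder_iterated_r2 :
    ∃ C : ℝ, 0 < C ∧ ∀ᶠ x : ℕ in atTop,
      |(⨆ n ∈ Finset.Icc 1 x, Real.log (r2 (r2 n))) -
          Real.sqrt (Real.log x) / Real.log (Real.log x) * (cBEFS / Real.sqrt 2)| ≤
        C * (Real.sqrt (Real.log x) / Real.log (Real.log x)) *
          (Real.log (Real.log (Real.log x)) / Real.log (Real.log x)) := by
  exact PNT4.final_thm
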